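/- arXiv:math/0603213 — 2 statements merged into one kernel-verified Lean document; each statement's English description precedes it below -/
import Mathlib

section
/- Let h be a Brouwer homeomorphism of ℝ² and D a critical closed Euclidean disc for h. Then the sets h⁻¹(D) ∩ ∂D ⊇ h⁻¹(D) ∩ D and h(D) ∩ ∂D ⊇ D ∩ h(D) are contained in ∂D, and they are unlinked on ∂D: there exist two disjoint closed subarcs λ and μ of ∂D (possibly degenerate to points) with h⁻¹(D) ∩ D ⊂ λ and D ∩ h(D) ⊂ μ, and the two closed arcs forming the complement of int λ ∪ int μ in ∂D are translation arcs for h. -/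
/-!
The boundary of a critical disc of a Brouwer homeomorphism is cut by `h⁻¹(D)` and `h(D)` in an
unlinked way. The proof avoids the Jordan curve theorem and uses continuous logarithms instead.

After a similarity, `D` is the closed unit disc of `ℂ`. Since the interiors of `D` and `h(D)` are
disjoint, a point of `D` mapped into `D` lies on the circle together with its image
(`norm_eq_one_of_mem`).

Let `a ≠ a'` be two such points. There are continuous logarithms `G` of the displacement `h x - x`
on the plane (no fixed points), `L` of `h y - z` on the pairs `(z, y)` in `D × D` with `h y ≠ z`
(a star-shaped set), and `τ` of `(h y - h x) / (y - x)` on pairs `x ≠ y`, which is symmetric since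
it comes from an isotopy to the identity. Thus `L (z, y) - τ (h⁻¹ z, y)` is a logarithm of
`y - h⁻¹ z`. Compared with `G` on the diagonal, and with principal logarithms of differences to
`a`, `a'`, `h a`, `h a'`, these determine the direction of `h a - a` from that of `h a' - a'`: the
former is a positive multiple of
`(h a' - a') * (1 - h a * conj (h a')) * (1 - a * conj a')` (`direction_relation`).

Let `α`, `β`, `α'`, `β'` be angles of `a`, `h a`, `a'`, `h a'` in a common window of length less
than `2π`. Then the relation says `(β - α) * (β' - α') * (β' - β) * (α' - α) < 0` (`sin_prod_neg`,
`angle_prod_neg`): two points displaced in the same sense have their order reversed. Applied to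
all pairs of points, this order condition alone yields angles `c ≤ α < β ≤ β₁ < c + 2π` such that
`[c, α]` carries the points of `h⁻¹(D) ∩ D`, `[β, β₁]` carries `D ∩ h(D)`, and `h` sends `α` to `β`
and `c` to `β₁` (`exists_cut_angles`). The two remaining arcs `[α, β]` and `[β₁, c + 2π]` are
translation arcs, since they meet `D ∩ h(D)` only in one end, which is the image of the other
(`isTranslationArc_of_angles`).
-/

abbrev Plane := EuclideanSpace ℝ (Fin 2)

def IsotopicToId {X : Type*} [TopologicalSpace X] (f : X → X) : Prop :=
  ∃ F : ℝ → X → X, Continuous (fun p : ℝ × X => F p.1 p.2) ∧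
    (∀ t : ℝ, ∃ g : Homeomorph X X, ⇑g = F t) ∧ F 0 = id ∧ F 1 = f

/-- A closed subarc of a circle, possibly degenerate to a single point. -/
def IsArcOrPoint (A : Set Plane) : Prop :=
  (∃ a : Plane, A = {a}) ∨
  ∃ γ : ℝ → Plane, ContinuousOn γ (Set.Icc 0 1) ∧ Set.InjOn γ (Set.Icc 0 1) ∧
    γ '' Set.Icc 0 1 = A

/-- A translation arc for h: a simple arc from some q to h(q) meeting its image
only in h(q). -/
def IsTranslationArc (h : Homeomorph Plane Plane) (α : Set Plane) : Prop :=
  ∃ (q : Plane) (γ : ℝ → Plane), ContinuousOn γ (Set.Icc 0 1) ∧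
    Set.InjOn γ (Set.Icc 0 1) ∧ γ 0 = q ∧ γ 1 = h q ∧
    γ '' Set.Icc 0 1 = α ∧ α ∩ ⇑h '' α = {h q}

open Set Topology unitInterval

/-! ### Continuous logarithms -/

/-- A nowhere vanishing homotopy has a continuous logarithm extending any given logarithm at
time `0`: homotopy lifting for the covering map `exp : ℂ → ℂ ∖ {0}`. -/
theorem exists_log_homotopy {A : Type*} [TopologicalSpace A] (H : I × A → ℂ) (hH : Continuous H)
    (hne : ∀ p, H p ≠ 0) (f : A → ℂ) (hf : Continuous f)
    (h0 : ∀ a, Complex.exp (f a) = H (0, a)) :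
    ∃ T : I × A → ℂ, Continuous T ∧ (∀ p, Complex.exp (T p) = H p) ∧ ∀ a, T (0, a) = f a := by
  let H' : C(I × A, {z : ℂ // z ≠ 0}) := ⟨fun p => ⟨H p, hne p⟩, by fun_prop⟩
  have h0' : ∀ a, H' (0, a) = ⟨_, Complex.exp_ne_zero ((⟨f, hf⟩ : C(A, ℂ)) a)⟩ :=
    fun a => Subtype.ext (h0 a).symm
  refine ⟨Complex.isCoveringMap_exp.liftHomotopy H' ⟨f, hf⟩ h0', ContinuousMap.continuous _,
    fun p => ?_, fun a => Complex.isCoveringMap_exp.liftHomotopy_zero H' ⟨f, hf⟩ h0' a⟩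
  exact congrArg Subtype.val
    (congrFun (Complex.isCoveringMap_exp.liftHomotopy_lifts H' ⟨f, hf⟩ h0') p)

/-- Two continuous functions on a preconnected set whose exponentials are proportional differ by
a constant. -/
theorem eq_of_exp_eq {A : Type*} [TopologicalSpace A] {s : Set A} (hs : IsPreconnected s)
    {f g : A → ℂ} (hf : ContinuousOn f s) (hg : ContinuousOn g s) (c : ℂ)
    (hfg : ∀ x ∈ s, Complex.exp (f x) = c * Complex.exp (g x)) {x y : A} (hx : x ∈ s) (hy : y ∈ s) :
    f x - g x = f y - g y := by
  have hd : ContinuousOn (fun z => f z - g z) s := hf.sub hg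
  refine Complex.isCoveringMap_exp.eqOn_of_comp_eqOn hs hd continuousOn_const
    (g₂ := fun _ => f y - g y) ?_ hy rfl hx
  intro z hz
  apply Subtype.ext
  simp only [Function.comp_apply, Complex.exp_sub, hfg z hz, hfg y hy]
  rw [mul_div_cancel_right₀ _ (Complex.exp_ne_zero _), mul_div_cancel_right₀ _ (Complex.exp_ne_zero _)]

theorem exists_continuousOn_extension {E : Type*} [TopologicalSpace E] {s : Set E} {T : s → ℂ}
    (hT : Continuous T) : ∃ g : E → ℂ, ContinuousOn g s ∧ ∀ x (hx : x ∈ s), g x = T ⟨x, hx⟩ := by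
  classical
  refine ⟨fun x => if hx : x ∈ s then T ⟨x, hx⟩ else 0, ?_, fun x hx => by simp [hx]⟩
  rw [continuousOn_iff_continuous_domRestrict]
  convert hT with x
  simp

/-- A nowhere vanishing function on a set star-shaped about `0` has a continuous logarithm,
obtained by lifting the homotopy `t ↦ f (t • x)`. -/
theorem exists_log_of_starConvex {E : Type*} [NormedAddCommGroup E] [NormedSpace ℝ E] {s : Set E}
    (hs : StarConvex ℝ 0 s) (h0 : (0 : E) ∈ s) {f : E → ℂ} (hf : ContinuousOn f s)
    (hne : ∀ x ∈ s, f x ≠ 0) :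
    ∃ g : E → ℂ, ContinuousOn g s ∧ ∀ x ∈ s, Complex.exp (g x) = f x := by
  have hmem : ∀ (t : I) (x : s), (t : ℝ) • (x : E) ∈ s := fun t x =>
    hs.smul_mem x.2 t.2.1 t.2.2
  obtain ⟨T, hT, hexp, -⟩ := exists_log_homotopy (A := s)
    (fun p => f ((p.1 : ℝ) • (p.2 : E)))
    (hf.comp_continuous (by fun_prop) fun p => hmem p.1 p.2)
    (fun p => hne _ (hmem p.1 p.2)) (fun _ => Complex.log (f 0)) continuous_const
    (fun a => by simp [Complex.exp_log (hne 0 h0)])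
  obtain ⟨g, hg, hgT⟩ := exists_continuousOn_extension (T := fun x : s => T (1, x)) (by fun_prop)
  exact ⟨g, hg, fun x hx => by simp [hgT x hx, hexp]⟩

/-- An isotopy from the identity to `h` gives a logarithm `τ` of `(h y - h x) / (y - x)` over all
pairs `x ≠ y`, namely the one obtained by following the isotopy from the value `0`. Both the
quotient and the initial value are symmetric in `x` and `y`, hence so is `τ`. This symmetry is
the only trace that orientation preservation leaves in the argument. -/
theorem exists_isotopy_angle (h : ℂ → ℂ) (F : ℝ → ℂ → ℂ)
    (hF : Continuous fun p : ℝ × ℂ => F p.1 p.2) (hinj : ∀ t, Function.Injective (F t))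
    (hF0 : F 0 = id) (hF1 : F 1 = h) :
    ∃ τ : ℂ × ℂ → ℂ, ContinuousOn τ {p | p.1 ≠ p.2} ∧
      (∀ p : ℂ × ℂ, p.1 ≠ p.2 → Complex.exp (τ p) = (h p.2 - h p.1) / (p.2 - p.1)) ∧
      ∀ x y : ℂ, x ≠ y → τ (x, y) = τ (y, x) := by
  let A : Set (ℂ × ℂ) := {p | p.1 ≠ p.2}
  have hsub : ∀ p : A, p.1.2 - p.1.1 ≠ 0 := fun p => sub_ne_zero.2 p.2.symm
  have c1 : Continuous fun p : I × A => F p.1 p.2.1.2 :=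
    hF.comp (f := fun p : I × A => ((p.1 : ℝ), p.2.1.2)) (by fun_prop)
  have c2 : Continuous fun p : I × A => F p.1 p.2.1.1 :=
    hF.comp (f := fun p : I × A => ((p.1 : ℝ), p.2.1.1)) (by fun_prop)
  obtain ⟨T, hT, hexp, hT0⟩ := exists_log_homotopy (A := A)
    (fun p => (F p.1 p.2.1.2 - F p.1 p.2.1.1) / (p.2.1.2 - p.2.1.1))
    ((c1.sub c2).div (by fun_prop) fun p => hsub p.2)
    (fun p => div_ne_zero (sub_ne_zero.2 fun e => p.2.2 (hinj _ e).symm) (hsub p.2))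
    (fun _ => 0) continuous_const
    (fun a => by simp [hF0, div_self (hsub a)])
  obtain ⟨τ, hτ, hτT⟩ := exists_continuousOn_extension (T := fun x : A => T (1, x)) (by fun_prop)
  refine ⟨τ, hτ, fun p hp => by simp [hτT p hp, hexp, hF1], fun x y hxy => ?_⟩
  rw [hτT (x, y) hxy, hτT (y, x) hxy.symm]
  -- Along the isotopy the logarithms at `(x, y)` and `(y, x)` stay a constant apart.
  have key := eq_of_exp_eq (A := I) (s := univ) isPreconnected_univ
    (f := fun t => T (t, ⟨(x, y), hxy⟩)) (g := fun t => T (t, ⟨(y, x), hxy.symm⟩))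
    (by fun_prop) (by fun_prop) 1
    (fun t _ => by
      rw [hexp, hexp, one_mul]
      simp only
      rw [← neg_sub (F t x), ← neg_sub x, neg_div_neg_eq]) (x := 1) (y := 0) trivial trivial
  simp only [hT0, sub_zero] at key
  exact sub_eq_zero.1 key

open ComplexConjugate

/-! ### The logarithm of `1 - x * conj w` on the punctured closed disc -/

theorem isPreconnected_disc_diff {w : ℂ} (hw : ‖w‖ = 1) :
    IsPreconnected {x : ℂ | ‖x‖ ≤ 1 ∧ x ≠ w} := by
  have h0 : (0 : ℂ) ∈ {x : ℂ | ‖x‖ ≤ 1 ∧ x ≠ w} := by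
    refine ⟨by simp, ?_⟩
    rintro rfl
    simp at hw
  refine (StarConvex.isPathConnected (a := 0) ?_ h0).isConnected.isPreconnected
  rw [starConvex_zero_iff]
  rintro x ⟨hx, hxw⟩ t ht0 ht1
  have hn : ‖t • x‖ = t * ‖x‖ := by rw [norm_smul, Real.norm_of_nonneg ht0]
  refine ⟨by rw [hn]; nlinarith [norm_nonneg x], fun e => hxw ?_⟩
  rw [e, hw] at hn
  have : t = 1 := by nlinarith [norm_nonneg x]
  simpa [this] using e

theorem re_one_sub_mul_conj_pos {x w : ℂ} (hx : ‖x‖ ≤ 1) (hw : ‖w‖ = 1) (hxw : x ≠ w) :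
    0 < (1 - x * conj w).re := by
  have hw' : w.re * w.re + w.im * w.im = 1 := by
    rw [← Complex.normSq_apply, Complex.normSq_eq_norm_sq, hw]; norm_num
  have hx' : x.re * x.re + x.im * x.im ≤ 1 := by
    rw [← Complex.normSq_apply, Complex.normSq_eq_norm_sq]
    nlinarith [norm_nonneg x]
  have : 0 < (x.re - w.re) ^ 2 + (x.im - w.im) ^ 2 := by
    by_contra hcon
    apply hxw
    apply Complex.ext <;> nlinarith [sq_nonneg (x.re - w.re), sq_nonneg (x.im - w.im)]
  simp
  nlinarith

/-- Exchanging `x` and `w` conjugates `1 - x * conj w`, so the imaginary part of the principal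
logarithm changes sign. -/
theorem im_log_conj_add {x w : ℂ} (hx : ‖x‖ ≤ 1) (hw : ‖w‖ = 1) (hxw : x ≠ w) :
    (Complex.log (1 - w * conj x)).im = -(Complex.log (1 - x * conj w)).im := by
  have hpos := re_one_sub_mul_conj_pos hx hw hxw
  have : 1 - w * conj x = conj (1 - x * conj w) := by simp [mul_comm]
  rw [this, Complex.log_conj _ (fun e => ?_), Complex.conj_im]
  rw [Complex.arg_eq_pi_iff] at e
  linarith [e.1]

theorem continuousOn_log_disc {w : ℂ} (hw : ‖w‖ = 1) :
    ContinuousOn (fun x : ℂ => Complex.log (1 - x * conj w)) {x : ℂ | ‖x‖ ≤ 1 ∧ x ≠ w} :=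
  ContinuousOn.clog (by fun_prop) fun _ hx => Or.inl (re_one_sub_mul_conj_pos hx.1 hw hx.2)

/-- Up to the constant factor `w`, the principal logarithm of `1 - x * conj w` is a logarithm of
`w - x` on the closed unit disc minus `w`. -/
theorem exp_log_disc {x w : ℂ} (hx : ‖x‖ ≤ 1) (hw : ‖w‖ = 1) (hxw : x ≠ w) :
    w * Complex.exp (Complex.log (1 - x * conj w)) = w - x := by
  have hne : 1 - x * conj w ≠ 0 := fun e => by
    have := re_one_sub_mul_conj_pos hx hw hxw
    rw [e] at this; simp at this
  have hww : w * conj w = 1 := by rw [Complex.mul_conj, Complex.normSq_eq_norm_sq, hw]; norm_num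
  rw [Complex.exp_log hne]
  linear_combination (-x) * hww

/-! ### Displacements at two boundary points -/

/-- The displacements `h a - a` and `h a' - a'` at two points of the unit circle mapped into it
determine each other's direction. Any two nonzero complex numbers differ by the exponential of
some complex number; the point is that comparing continuous logarithms along connected sets
makes this exponent real. -/
theorem direction_relation (h : ℂ ≃ₜ ℂ) (hfree : ∀ x, h x ≠ x) (F : ℝ → ℂ → ℂ)
    (hF : Continuous fun p : ℝ × ℂ => F p.1 p.2) (hinj : ∀ t, Function.Injective (F t))
    (hF0 : F 0 = id) (hF1 : F 1 = h)
    (hb : ∀ x, ‖x‖ ≤ 1 → ‖h x‖ ≤ 1 → ‖x‖ = 1 ∧ ‖h x‖ = 1)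
    {a a' : ℂ} (ha : ‖a‖ = 1) (hha : ‖h a‖ = 1) (ha' : ‖a'‖ = 1) (hha' : ‖h a'‖ = 1)
    (hne : a ≠ a') :
    ∃ r : ℝ, 0 < r ∧
      h a - a = r * ((h a' - a') * (1 - h a * conj (h a')) * (1 - a * conj a')) := by
  obtain ⟨τ, hτ, hτexp, hτsymm⟩ := exists_isotopy_angle h F hF hinj hF0 hF1
  obtain ⟨G, hG, hGexp⟩ := exists_log_of_starConvex (s := (univ : Set ℂ)) (starConvex_univ 0)
    (mem_univ _) (f := fun x => h x - x) (by fun_prop) (fun x _ => sub_ne_zero.2 (hfree x))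
  have hG' : Continuous G := continuousOn_univ.1 hG
  -- The set of pairs `(z, y)` in the closed disc with `h y ≠ z`. It is star-shaped about `0`,
  -- because a point in the open disc is not mapped into the closed disc.
  let S : Set (ℂ × ℂ) := {p | ‖p.1‖ ≤ 1 ∧ ‖p.2‖ ≤ 1 ∧ h p.2 ≠ p.1}
  have hS : StarConvex ℝ 0 S := by
    rw [starConvex_zero_iff]
    rintro ⟨z, y⟩ ⟨hz, hy, hzy⟩ t ht0 ht1
    have hnz : ‖t • z‖ = t * ‖z‖ := by rw [norm_smul, Real.norm_of_nonneg ht0]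
    have hny : ‖t • y‖ = t * ‖y‖ := by rw [norm_smul, Real.norm_of_nonneg ht0]
    simp only at hz hy hzy
    have hz1 : ‖t • z‖ ≤ 1 := by rw [hnz]; nlinarith [norm_nonneg z]
    have hy1 : ‖t • y‖ ≤ 1 := by rw [hny]; nlinarith [norm_nonneg y]
    refine ⟨hz1, hy1, fun e => hzy ?_⟩
    change h (t • y) = t • z at e
    have := (hb _ hy1 (by rw [e]; exact hz1)).1
    have ht : t = 1 := by rw [hny] at this; nlinarith [norm_nonneg y]
    simpa [ht] using e
  -- `L (z, y)` is a logarithm of `h y - z`.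
  obtain ⟨L, hL, hLexp⟩ := exists_log_of_starConvex hS
    (⟨by simp, by simp, hfree 0⟩ : (0 : ℂ × ℂ) ∈ S) (f := fun p => h p.2 - p.1)
    (by fun_prop) (fun p hp => sub_ne_zero.2 hp.2.2)
  -- `h y - z` and `y - h⁻¹ z` differ by the quotient whose logarithm is `τ (h⁻¹ z, y)`, so
  -- `M (z, y)` is a logarithm of `y - h⁻¹ z`.
  let M : ℂ × ℂ → ℂ := fun p => L p - τ (h.symm p.1, p.2)
  have hSne : ∀ p ∈ S, h.symm p.1 ≠ p.2 := by
    rintro p hp e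
    exact hp.2.2 (by rw [← e, h.apply_symm_apply])
  have hM : ContinuousOn M S :=
    hL.sub (hτ.comp (f := fun p : ℂ × ℂ => (h.symm p.1, p.2)) (by fun_prop) hSne)
  have hMexp : ∀ p ∈ S, Complex.exp (M p) = p.2 - h.symm p.1 := by
    intro p hp
    have h1 : h p.2 - p.1 ≠ 0 := sub_ne_zero.2 hp.2.2
    have h2 : p.2 - h.symm p.1 ≠ 0 := sub_ne_zero.2 (hSne p hp).symm
    simp only [M]
    rw [Complex.exp_sub, hLexp p hp, hτexp _ (hSne p hp)]
    simp only [h.apply_symm_apply]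
    field_simp
  have hD : IsPreconnected {x : ℂ | ‖x‖ ≤ 1} := by
    have := (convex_closedBall (0 : ℂ) 1).isPreconnected
    simpa [Metric.closedBall, dist_zero_right] using this
  have hdiag : ∀ x ∈ {x : ℂ | ‖x‖ ≤ 1}, (x, x) ∈ S := fun x hx => ⟨hx, hx, hfree x⟩
  -- On the diagonal, `L` and `M` are logarithms of the displacements `h x - x` and `x - h⁻¹ x`.
  have f1 : L (a, a) - G a = L (a', a') - G a' :=
    eq_of_exp_eq hD (f := fun x => L (x, x)) (g := G)
      (hL.comp (f := fun x : ℂ => (x, x)) (by fun_prop) hdiag) hG'.continuousOn 1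
      (fun x hx => by rw [hLexp _ (hdiag x hx), hGexp x trivial, one_mul]) ha.le ha'.le
  have f2 : M (h a, h a) - G (h.symm (h a)) = M (h a', h a') - G (h.symm (h a')) :=
    eq_of_exp_eq hD (f := fun x => M (x, x)) (g := fun x => G (h.symm x))
      (hM.comp (f := fun x : ℂ => (x, x)) (by fun_prop) hdiag)
      (hG'.comp h.symm.continuous).continuousOn 1
      (fun x hx => by
        rw [hMexp _ (hdiag x hx), hGexp _ trivial, one_mul, h.apply_symm_apply])
      hha.le hha'.le
  rw [h.symm_apply_apply, h.symm_apply_apply] at f2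
  -- With one variable fixed at a boundary point mapped to the circle (or at its image), `L` and
  -- `M` are logarithms of the difference to a fixed point of the circle, as in `exp_log_disc`.
  have f3 : ∀ c x y : ℂ, ‖c‖ = 1 → ‖h c‖ = 1 → ‖x‖ = 1 → ‖y‖ = 1 → x ≠ h c → y ≠ h c →
      L (x, c) - Complex.log (1 - x * conj (h c)) =
        L (y, c) - Complex.log (1 - y * conj (h c)) := by
    intro c x y hc hhc hx hy hxc hyc
    have hmem : ∀ z ∈ {z : ℂ | ‖z‖ ≤ 1 ∧ z ≠ h c}, (z, c) ∈ S :=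
      fun z hz => ⟨hz.1, hc.le, hz.2.symm⟩
    exact eq_of_exp_eq (isPreconnected_disc_diff hhc) (f := fun z => L (z, c))
      (g := fun z => Complex.log (1 - z * conj (h c)))
      (hL.comp (f := fun z : ℂ => (z, c)) (by fun_prop) hmem) (continuousOn_log_disc hhc) (h c)
      (fun z hz => by rw [hLexp _ (hmem z hz), exp_log_disc hz.1 hhc hz.2])
      ⟨hx.le, hxc⟩ ⟨hy.le, hyc⟩
  have f4 : ∀ c x y : ℂ, ‖c‖ = 1 → ‖h c‖ = 1 → ‖x‖ = 1 → ‖y‖ = 1 → x ≠ c → y ≠ c →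
      M (h c, x) - Complex.log (1 - x * conj c) = M (h c, y) - Complex.log (1 - y * conj c) := by
    intro c x y hc hhc hx hy hxc hyc
    have hmem : ∀ z ∈ {z : ℂ | ‖z‖ ≤ 1 ∧ z ≠ c}, (h c, z) ∈ S :=
      fun z hz => ⟨hhc.le, hz.1, fun e => hz.2 (h.injective e)⟩
    exact eq_of_exp_eq (isPreconnected_disc_diff hc) (f := fun z => M (h c, z))
      (g := fun z => Complex.log (1 - z * conj c))
      (hM.comp (f := fun z : ℂ => (h c, z)) (by fun_prop) hmem) (continuousOn_log_disc hc) (-c)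
      (fun z hz => by
        rw [hMexp _ (hmem z hz), h.symm_apply_apply, neg_mul, exp_log_disc hz.1 hc hz.2]
        ring)
      ⟨hx.le, hxc⟩ ⟨hy.le, hyc⟩
  have hhne : h a ≠ h a' := fun e => hne (h.injective e)
  -- Going from `L (a, a)` through `L (h a', a)` and `M (h a', a)` to `M (h a', h a')`, and likewise
  -- with `a` and `a'` exchanged, leaves principal logarithms that pair up under conjugation.
  have e1 := f3 a a (h a') ha hha ha hha' (hfree a).symm hhne.symm
  have e2 := f3 a' a' (h a) ha' hha' ha' hha (hfree a').symm hhne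
  have e3 := f4 a (h a) a' ha hha hha ha' (hfree a) hne.symm
  have e4 := f4 a' (h a') a ha' hha' hha' ha (hfree a') hne
  -- These differences are `τ (a', a)` and `τ (a, a')`, equal by symmetry.
  have e5 : L (h a', a) - M (h a', a) = L (h a, a') - M (h a, a') := by
    simp only [M, h.symm_apply_apply, sub_sub_cancel]
    exact hτsymm _ _ hne.symm
  have i1 := im_log_conj_add ha.le hha (hfree a).symm
  have i2 := im_log_conj_add ha'.le hha' (hfree a').symm
  have i3 := im_log_conj_add hha.le hha' hhne
  have i4 := im_log_conj_add ha.le ha' hne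
  -- The imaginary part of `K` vanishes, so `exp K` is the required positive factor.
  set K := G a - G a' - Complex.log (1 - h a * conj (h a')) - Complex.log (1 - a * conj a') with hK
  have hKim : K.im = 0 := by
    have := congrArg Complex.im f1
    have := congrArg Complex.im f2
    have := congrArg Complex.im e1
    have := congrArg Complex.im e2
    have := congrArg Complex.im e3
    have := congrArg Complex.im e4
    have := congrArg Complex.im e5
    simp only [hK, Complex.sub_im] at *
    linarith
  refine ⟨Real.exp K.re, Real.exp_pos _, ?_⟩
  have hKre : ((K.re : ℝ) : ℂ) = K := Complex.ext (by simp) (by simp [hKim])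
  rw [Complex.ofReal_exp, hKre]
  have hn1 : 1 - h a * conj (h a') ≠ 0 := fun e => by
    have := re_one_sub_mul_conj_pos hha.le hha' hhne
    rw [e] at this; simp at this
  have hn2 : 1 - a * conj a' ≠ 0 := fun e => by
    have := re_one_sub_mul_conj_pos ha.le ha' hne
    rw [e] at this; simp at this
  have hn3 := sub_ne_zero.2 (hfree a')
  rw [hK, Complex.exp_sub, Complex.exp_sub, Complex.exp_sub, Complex.exp_log hn1,
    Complex.exp_log hn2, hGexp _ trivial, hGexp _ trivial]
  field_simp

/-! ### Angles on the unit circle -/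

/-- The point of the unit circle with angle `θ`. -/
noncomputable def cis (θ : ℝ) : ℂ := Complex.exp (θ * Complex.I)

theorem norm_cis (θ : ℝ) : ‖cis θ‖ = 1 := Complex.norm_exp_ofReal_mul_I θ

theorem continuous_cis : Continuous cis := by unfold cis; fun_prop

theorem cis_add_two_pi (θ : ℝ) : cis (θ + 2 * Real.pi) = cis θ := by
  simp [cis, add_mul, Complex.exp_add, Complex.exp_two_pi_mul_I]

theorem cis_eq_cis {θ φ : ℝ} (h : cis θ = cis φ) (hlt : |θ - φ| < 2 * Real.pi) : θ = φ := by
  obtain ⟨n, hn⟩ := Complex.exp_eq_exp_iff_exists_int.1 h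
  have h1 : θ = φ + n * (2 * Real.pi) := by
    have := congrArg Complex.im hn
    simpa using this
  have hpi := Real.pi_pos
  have hn0 : |(n : ℝ)| < 1 := by
    have : θ - φ = n * (2 * Real.pi) := by linarith
    rw [this, abs_mul, abs_of_pos (by positivity : 0 < 2 * Real.pi)] at hlt
    by_contra hcon
    nlinarith
  have : n = 0 := by
    rw [← Int.abs_lt_one_iff]; exact_mod_cast hn0
  simpa [this] using h1

theorem exists_cis {z : ℂ} (hz : ‖z‖ = 1) (c : ℝ) :
    ∃ θ, c ≤ θ ∧ θ < c + 2 * Real.pi ∧ cis θ = z := by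
  refine ⟨toIcoMod Real.two_pi_pos c z.arg, (toIcoMod_mem_Ico _ _ _).1,
    (toIcoMod_mem_Ico _ _ _).2, ?_⟩
  have hzarg : cis z.arg = z := by
    have := Complex.norm_mul_exp_arg_mul_I z
    rwa [hz, Complex.ofReal_one, one_mul] at this
  refine Eq.trans ?_ hzarg
  simp only [cis, toIcoMod]
  rw [Complex.exp_eq_exp_iff_exists_int]
  refine ⟨-toIcoDiv Real.two_pi_pos c z.arg, ?_⟩
  push_cast
  simp
  ring

theorem cis_sub_cis (θ φ : ℝ) :
    cis θ - cis φ = 2 * Complex.I * Real.sin ((θ - φ) / 2) * cis ((θ + φ) / 2) := by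
  have h1 : cis θ = cis ((θ - φ) / 2) * cis ((θ + φ) / 2) := by
    simp only [cis, ← Complex.exp_add]; congr 1; push_cast; ring
  have h2 : cis φ = cis (-((θ - φ) / 2)) * cis ((θ + φ) / 2) := by
    simp only [cis, ← Complex.exp_add]; congr 1; push_cast; ring
  rw [h1, h2]
  have h3 : ∀ x : ℝ, cis x = Real.cos x + Real.sin x * Complex.I := by
    intro x; simp only [cis, Complex.exp_mul_I, Complex.ofReal_cos, Complex.ofReal_sin]
  rw [h3 ((θ - φ) / 2), h3 (-((θ - φ) / 2))]
  simp only [Real.cos_neg, Real.sin_neg]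
  push_cast
  ring

theorem one_sub_cis_mul_conj (θ φ : ℝ) :
    1 - cis θ * conj (cis φ) =
      -(2 * Complex.I * Real.sin ((θ - φ) / 2) * cis ((θ - φ) / 2)) := by
  have h1 : cis θ * conj (cis φ) = cis (θ - φ) := by
    simp only [cis, ← Complex.exp_conj, ← Complex.exp_add]
    congr 1
    simp
    ring
  have h0 : (1 : ℂ) = cis 0 := by simp [cis]
  rw [h1, h0, ← neg_sub, cis_sub_cis]
  simp

/-- The relation of `direction_relation` in terms of angles: each chord is a sine times `2i` times
a point of the circle, those points cancel, and a relation between real numbers remains. -/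
theorem sin_prod_neg {α β α' β' r : ℝ} (hr : 0 < r) (hne : cis β ≠ cis α)
    (hrel : cis β - cis α = r * ((cis β' - cis α') * (1 - cis β * conj (cis β')) *
      (1 - cis α * conj (cis α')))) :
    Real.sin ((β - α) / 2) * Real.sin ((β' - α') / 2) * Real.sin ((β' - β) / 2) *
      Real.sin ((α' - α) / 2) < 0 := by
  rw [one_sub_cis_mul_conj, one_sub_cis_mul_conj, cis_sub_cis, cis_sub_cis] at hrel
  have hphase : cis ((β + α) / 2) =
      cis ((β' + α') / 2) * cis ((β - β') / 2) * cis ((α - α') / 2) := by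
    simp only [cis, ← Complex.exp_add]; congr 1; push_cast; ring
  set s1 := Real.sin ((β - α) / 2) with hs1
  set s2 := Real.sin ((β' - α') / 2)
  set s3 := Real.sin ((β - β') / 2) with hs3
  set s4 := Real.sin ((α - α') / 2) with hs4
  have e3 : Real.sin ((β' - β) / 2) = -s3 := by rw [hs3, ← Real.sin_neg]; congr 1; ring
  have e4 : Real.sin ((α' - α) / 2) = -s4 := by rw [hs4, ← Real.sin_neg]; congr 1; ring
  have hc : ∀ x, cis x ≠ 0 := fun x => Complex.exp_ne_zero _
  have key : (s1 : ℂ) = ((-4 * r * s2 * s3 * s4 : ℝ) : ℂ) := by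
    have h2 : 2 * Complex.I * cis ((β + α) / 2) ≠ 0 :=
      mul_ne_zero (mul_ne_zero two_ne_zero Complex.I_ne_zero) (hc _)
    apply mul_left_cancel₀ h2
    push_cast
    rw [hphase] at hrel ⊢
    linear_combination hrel + (8 * Complex.I * cis ((β' + α') / 2) * cis ((β - β') / 2) *
      cis ((α - α') / 2) * r * s2 * s3 * s4) * Complex.I_sq
  have key' : s1 = -4 * r * s2 * s3 * s4 := by exact_mod_cast key
  have hs1ne : s1 ≠ 0 := by
    intro e
    apply hne
    rw [← sub_eq_zero, cis_sub_cis, ← hs1, e]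
    simp
  have hP : s2 * s3 * s4 ≠ 0 := by
    intro e; apply hs1ne; rw [key']; linear_combination -4 * r * e
  rw [e3, e4]
  have : 0 < r * (s2 * s3 * s4) ^ 2 := by positivity
  rw [key']
  nlinarith

/-- For angles in a common window of length less than `2π`, the sines of half-differences may be
replaced by the differences themselves. -/
theorem angle_prod_neg {α β α' β' : ℝ}
    (h : Real.sin ((β - α) / 2) * Real.sin ((β' - α') / 2) * Real.sin ((β' - β) / 2) *
      Real.sin ((α' - α) / 2) < 0)
    (h1 : |β - α| < 2 * Real.pi) (h2 : |β' - α'| < 2 * Real.pi) (h3 : |β' - β| < 2 * Real.pi)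
    (h4 : |α' - α| < 2 * Real.pi) :
    (β - α) * (β' - α') * (β' - β) * (α' - α) < 0 := by
  -- On `(-2π, 2π)` the value `sin (δ / 2)` is a positive multiple of `δ`.
  have hs : ∀ δ : ℝ, |δ| < 2 * Real.pi → ∃ k : ℝ, 0 < k ∧ δ = k * Real.sin (δ / 2) := by
    intro δ hδ
    rw [abs_lt] at hδ
    rcases lt_trichotomy δ 0 with hneg | rfl | hpos
    · have : Real.sin (δ / 2) < 0 := Real.sin_neg_of_neg_of_neg_pi_lt (by linarith) (by linarith)
      exact ⟨δ / Real.sin (δ / 2), div_pos_of_neg_of_neg hneg this, (div_mul_cancel₀ _ this.ne).symm⟩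
    · exact ⟨1, one_pos, by simp⟩
    · have : 0 < Real.sin (δ / 2) := Real.sin_pos_of_pos_of_lt_pi (by linarith) (by linarith)
      exact ⟨δ / Real.sin (δ / 2), div_pos hpos this, (div_mul_cancel₀ _ this.ne').symm⟩
  obtain ⟨k1, hk1, e1⟩ := hs _ h1
  obtain ⟨k2, hk2, e2⟩ := hs _ h2
  obtain ⟨k3, hk3, e3⟩ := hs _ h3
  obtain ⟨k4, hk4, e4⟩ := hs _ h4
  generalize Real.sin ((β - α) / 2) = s1 at *
  generalize Real.sin ((β' - α') / 2) = s2 at *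
  generalize Real.sin ((β' - β) / 2) = s3 at *
  generalize Real.sin ((α' - α) / 2) = s4 at *
  have : (β - α) * (β' - α') * (β' - β) * (α' - α) =
      (k1 * k2 * k3 * k4) * (s1 * s2 * s3 * s4) := by
    rw [e1, e2, e3, e4]; ring
  rw [this]
  exact mul_neg_of_pos_of_neg (by positivity) h

/-! ### Cutting the circle -/

/-- The points of the circle mapped into the circle and their images are unlinked. The hypothesis
`hK` says that, for two such points and in any common window of angles, the displacements have
the same sign exactly when `h` reverses the order of the two points.

Angles are measured in `[α₀, α₀ + 2π)`, where `α₀` is the angle of some such point and `β₀` that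
of its image. Every other point `θ ↦ φ` then has either `θ < φ < β₀` or `β₀ < φ < θ`; `h` is
decreasing within each of the two classes. The cuts are the largest `α` of the first class and
the smallest `α₁` of the second (taken as `α₀` and `α₀ + 2π` in the absence of other points),
together with their images; `c = α₁ - 2π`. -/
theorem exists_cut_angles (h : ℂ ≃ₜ ℂ) (hfree : ∀ x, h x ≠ x)
    (hK : ∀ α α' β β' : ℝ, h (cis α) = cis β → h (cis α') = cis β' → cis α ≠ cis α' →
      |β - α| < 2 * Real.pi → |β' - α'| < 2 * Real.pi → |β' - β| < 2 * Real.pi →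
      |α' - α| < 2 * Real.pi → (β - α) * (β' - α') * (β' - β) * (α' - α) < 0)
    {a₀ : ℂ} (ha₀ : ‖a₀‖ = 1) (hha₀ : ‖h a₀‖ = 1) :
    ∃ c α β β₁ : ℝ, c ≤ α ∧ α < β ∧ β ≤ β₁ ∧ β₁ < c + 2 * Real.pi ∧
      h (cis α) = cis β ∧ h (cis c) = cis β₁ ∧
      ∀ a, ‖a‖ = 1 → ‖h a‖ = 1 →
        (∃ θ ∈ Icc c α, cis θ = a) ∧ ∃ θ ∈ Icc β β₁, cis θ = h a := by
  have hpi := Real.pi_pos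
  obtain ⟨α₀, -, -, rfl⟩ := exists_cis ha₀ 0
  obtain ⟨β₀, hαβ, hβ₀, hβ₀eq⟩ := exists_cis hha₀ α₀
  have hlt₀ : α₀ < β₀ := lt_of_le_of_ne hαβ fun e => hfree _ (by rw [← hβ₀eq, e])
  have huniq : ∀ θ φ, α₀ ≤ θ → θ < α₀ + 2 * Real.pi → α₀ ≤ φ → φ < α₀ + 2 * Real.pi →
      cis θ = cis φ → θ = φ := fun θ φ h1 h2 h3 h4 e =>
    cis_eq_cis e (abs_lt.2 ⟨by linarith, by linarith⟩)
  -- `Pr θ φ`: `h` sends the point of angle `θ` to that of angle `φ`, both in `[α₀, α₀ + 2π)`.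
  let Pr : ℝ → ℝ → Prop := fun θ φ => α₀ ≤ θ ∧ θ < α₀ + 2 * Real.pi ∧ α₀ ≤ φ ∧
    φ < α₀ + 2 * Real.pi ∧ h (cis θ) = cis φ
  have hPr₀ : Pr α₀ β₀ := ⟨le_rfl, by linarith, hαβ, hβ₀, hβ₀eq.symm⟩
  have hPrK : ∀ θ φ θ' φ', Pr θ φ → Pr θ' φ' → θ ≠ θ' →
      (φ - θ) * (φ' - θ') * (φ' - φ) * (θ' - θ) < 0 := by
    rintro θ φ θ' φ' ⟨h1, h2, h3, h4, h5⟩ ⟨g1, g2, g3, g4, g5⟩ hne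
    apply hK θ θ' φ φ' h5 g5 (fun e => hne (huniq _ _ h1 h2 g1 g2 e)) <;>
    · rw [abs_lt]; constructor <;> linarith
  have hPrU : ∀ θ φ φ', Pr θ φ → Pr θ φ' → φ = φ' := by
    rintro θ φ φ' ⟨h1, h2, h3, h4, h5⟩ ⟨g1, g2, g3, g4, g5⟩
    exact huniq _ _ h3 h4 g3 g4 (h5.symm.trans g5)
  -- Compare the base point with `θ ↦ φ`: then `φ` lies strictly between `θ` and `β₀`.
  have hside : ∀ θ φ, Pr θ φ → θ ≠ α₀ → (θ < φ ∧ φ < β₀) ∨ (β₀ < φ ∧ φ < θ) := by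
    intro θ φ hp hne
    have hk := hPrK _ _ _ _ hPr₀ hp hne.symm
    have hθ : 0 < θ - α₀ := sub_pos.2 (lt_of_le_of_ne hp.1 hne.symm)
    have h0 : 0 < (β₀ - α₀) * (θ - α₀) := mul_pos (by linarith) hθ
    have h1 : (φ - θ) * (φ - β₀) < 0 := by
      by_contra hcon
      have := mul_nonneg h0.le (not_lt.1 hcon)
      nlinarith
    rcases mul_neg_iff.1 h1 with ⟨u, v⟩ | ⟨u, v⟩
    · exact Or.inl ⟨by linarith, by linarith⟩
    · exact Or.inr ⟨by linarith, by linarith⟩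
  -- Displacements of the same sign force `h` to reverse the order.
  have hanti : ∀ θ φ θ' φ', Pr θ φ → Pr θ' φ' → θ < θ' → 0 < (φ - θ) * (φ' - θ') → φ' < φ := by
    intro θ φ θ' φ' hp hp' hlt hpos
    have hk := hPrK _ _ _ _ hp hp' hlt.ne
    by_contra hcon
    have := mul_nonneg (mul_nonneg hpos.le (sub_nonneg.2 (not_lt.1 hcon))) (sub_pos.2 hlt).le
    linarith
  have hclosed : IsClosed {θ : ℝ | ‖h (cis θ)‖ = 1} :=
    isClosed_eq (h.continuous.comp continuous_cis).norm continuous_const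
  obtain ⟨α, ⟨⟨hα0, hαβ₀⟩, hαA⟩, hαmax⟩ :=
    (isCompact_Icc.inter_right hclosed).exists_isGreatest
      (⟨α₀, ⟨le_rfl, hαβ⟩, hha₀⟩ : (Icc α₀ β₀ ∩ {θ : ℝ | ‖h (cis θ)‖ = 1}).Nonempty)
  obtain ⟨α₁, ⟨⟨hβα₁, hα₁le⟩, hα₁A⟩, hα₁min⟩ :=
    (isCompact_Icc.inter_right hclosed).exists_isLeast
      (⟨α₀ + 2 * Real.pi, ⟨hβ₀.le, le_rfl⟩, by simpa [cis_add_two_pi] using hha₀⟩ :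
        (Icc β₀ (α₀ + 2 * Real.pi) ∩ {θ : ℝ | ‖h (cis θ)‖ = 1}).Nonempty)
  obtain ⟨β, hβ1, hβ2, hβeq⟩ := exists_cis hαA α₀
  obtain ⟨β₁, hβ₁1, hβ₁2, hβ₁eq⟩ := exists_cis hα₁A α₀
  have hPα : Pr α β := ⟨hα0, by linarith, hβ1, hβ2, hβeq.symm⟩
  have hL : α < β ∧ β ≤ β₀ := by
    by_cases e : α = α₀
    · subst e
      rw [hPrU _ _ _ hPα hPr₀]
      exact ⟨hlt₀, le_rfl⟩
    · rcases hside _ _ hPα e with u | u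
      · exact ⟨u.1, u.2.le⟩
      · linarith
  have hPα₁ : α₁ ≠ α₀ + 2 * Real.pi → Pr α₁ β₁ := fun e =>
    ⟨by linarith, lt_of_le_of_ne hα₁le e, hβ₁1, hβ₁2, hβ₁eq.symm⟩
  have hR : β₀ ≤ β₁ ∧ β₁ < α₁ := by
    by_cases e : α₁ = α₀ + 2 * Real.pi
    · rw [e, cis_add_two_pi] at hβ₁eq
      have : β₁ = β₀ :=
        hPrU _ _ _ ⟨le_rfl, by linarith, hβ₁1, hβ₁2, hβ₁eq.symm⟩ hPr₀
      exact ⟨this.ge, by linarith⟩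
    · rcases hside _ _ (hPα₁ e) (by linarith) with u | u
      · linarith
      · exact ⟨u.1.le, u.2⟩
  have hc : cis (α₁ - 2 * Real.pi) = cis α₁ := by
    rw [← cis_add_two_pi, sub_add_cancel]
  refine ⟨α₁ - 2 * Real.pi, α, β, β₁, by linarith, hL.1, by linarith, by linarith, hβeq.symm,
    by rw [hc, hβ₁eq], fun a ha hha => ?_⟩
  obtain ⟨θ, hθ1, hθ2, rfl⟩ := exists_cis ha α₀
  obtain ⟨φ, hφ1, hφ2, hφeq⟩ := exists_cis hha α₀
  have hp : Pr θ φ := ⟨hθ1, hθ2, hφ1, hφ2, hφeq.symm⟩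
  by_cases e : θ = α₀
  · subst e
    have := hPrU _ _ _ hp hPr₀
    exact ⟨⟨θ, ⟨by linarith, by linarith⟩, rfl⟩, φ, ⟨by linarith, by linarith⟩, hφeq⟩
  · rcases hside _ _ hp e with u | u
    · have hθα : θ ≤ α := hαmax ⟨⟨hθ1, by linarith⟩, hha⟩
      have hβφ : β ≤ φ := by
        rcases hθα.eq_or_lt with rfl | hlt
        · exact (hPrU _ _ _ hp hPα).ge
        · exact (hanti _ _ _ _ hp hPα hlt
            (mul_pos (by linarith) (by linarith [hL.1]))).le
      exact ⟨⟨θ, ⟨by linarith, hθα⟩, rfl⟩, φ, ⟨hβφ, by linarith⟩, hφeq⟩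
    · have hθα : α₁ ≤ θ := hα₁min ⟨⟨by linarith, by linarith⟩, hha⟩
      have hp1 := hPα₁ (by linarith)
      have hβφ : φ ≤ β₁ := by
        rcases hθα.eq_or_lt with e' | hlt
        · subst e'
          exact (hPrU _ _ _ hp hp1).le
        · exact (hanti _ _ _ _ hp1 hp hlt
            (mul_pos_of_neg_of_neg (by linarith [hR.2]) (by linarith))).le
      refine ⟨⟨θ - 2 * Real.pi, ⟨by linarith, by linarith⟩, ?_⟩, φ, ⟨by linarith, hβφ⟩, hφeq⟩
      rw [← cis_add_two_pi, sub_add_cancel]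

/-! ### Arcs of the circle in the plane -/

/-- A curve that is injective on windows shorter than `2π` parametrizes simple arcs, in either
direction (`u < v` or `v < u`). -/
theorem exists_arc_param {P : ℝ → Plane} (hP : Continuous P)
    (hPinj : ∀ θ φ, P θ = P φ → |θ - φ| < 2 * Real.pi → θ = φ) {u v : ℝ} (huv : u ≠ v)
    (hlt : |v - u| < 2 * Real.pi) :
    ∃ γ : ℝ → Plane, ContinuousOn γ (Icc 0 1) ∧ InjOn γ (Icc 0 1) ∧ γ 0 = P u ∧ γ 1 = P v ∧
      γ '' Icc 0 1 = P '' uIcc u v := by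
  refine ⟨fun t => P (u + t • (v - u)), (hP.comp (by fun_prop)).continuousOn, ?_, by simp, by simp,
    ?_⟩
  · intro s hs t ht e
    have hst : |s - t| ≤ 1 := abs_le.2 ⟨by linarith [hs.1, ht.2], by linarith [hs.2, ht.1]⟩
    have hd : u + s • (v - u) - (u + t • (v - u)) = (s - t) * (v - u) := by
      simp only [smul_eq_mul]; ring
    have := hPinj _ _ e (by
      rw [hd, abs_mul]; nlinarith [abs_nonneg (v - u), abs_nonneg (s - t)])
    rw [← sub_eq_zero, hd, mul_eq_zero] at this
    rcases this with h | h
    · linarith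
    · exact absurd (by linarith) huv
  · rw [← segment_eq_uIcc, segment_eq_image', image_image]

/-- The arc from angle `u` to angle `v` is a translation arc if `h` sends its first end to its
second and all of `D ∩ h(D)` lies in the adjacent arc from `v` on to `w`: the arc and its image
then meet inside `D ∩ h(D)`, hence only at angle `v`. -/
theorem isTranslationArc_of_angles (h : Homeomorph Plane Plane) {D : Set Plane} {P : ℝ → Plane}
    (hP : Continuous P) (hPinj : ∀ θ φ, P θ = P φ → |θ - φ| < 2 * Real.pi → θ = φ) {u v w : ℝ}
    (huv : u ≠ v) (hlt : |v - u| < 2 * Real.pi) (huw : v ∈ uIcc u w)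
    (hltw : |w - u| < 2 * Real.pi) (hh : h (P u) = P v) (hPD : ∀ θ, P θ ∈ D)
    (hB : D ∩ h '' D ⊆ P '' uIcc v w) : IsTranslationArc h (P '' uIcc u v) := by
  obtain ⟨γ, h1, h2, h3, h4, h5⟩ := exists_arc_param hP hPinj huv hlt
  refine ⟨P u, γ, h1, h2, h3, h4.trans hh.symm, h5, ?_⟩
  apply Subset.antisymm
  · rintro _ ⟨⟨θ, hθ, rfl⟩, hx⟩
    obtain ⟨φ, hφ, hφθ⟩ := hB ⟨hPD θ, image_mono (by rintro _ ⟨η, -, rfl⟩; exact hPD η) hx⟩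
    rw [mem_singleton_iff, hh]
    by_cases hθv : θ = v
    · rw [hθv]
    · have hθφ : |θ - φ| < 2 * Real.pi ∧ θ ≠ φ := by
        rw [abs_lt] at hltw ⊢
        rw [mem_uIcc] at hθ hφ huw
        refine ⟨⟨?_, ?_⟩, ?_⟩ <;> grind
      exact absurd (hPinj _ _ hφθ.symm hθφ.1) hθφ.2
  · rintro _ rfl
    exact ⟨hh ▸ mem_image_of_mem _ right_mem_uIcc,
      mem_image_of_mem _ (mem_image_of_mem _ left_mem_uIcc)⟩

/-- Two arcs that follow each other within one turn starting at `c` share at most the endpoint of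
the first (if the second starts there) and, when they close up the turn, the point of angle `c`. -/
theorem finite_inter_arcs {P : ℝ → Plane}
    (hPinj : ∀ θ φ, P θ = P φ → |θ - φ| < 2 * Real.pi → θ = φ) {c u v w x : ℝ}
    (hcu : c ≤ u) (hvw : v ≤ w) (hx : x ≤ c + 2 * Real.pi) :
    (P '' Icc u v ∩ P '' Icc w x).Finite := by
  refine (toFinite {P c, P v}).subset ?_
  rintro _ ⟨⟨θ, hθ, rfl⟩, φ, hφ, e⟩
  by_cases hlt : φ - θ < 2 * Real.pi
  · have := hPinj _ _ e (abs_lt.2 ⟨by linarith [hθ.2, hφ.1, Real.pi_pos], hlt⟩)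
    right
    rw [mem_singleton_iff, le_antisymm hθ.2 (by linarith [hφ.1])]
  · left
    rw [le_antisymm (by linarith [hφ.2] : θ ≤ c) (hcu.trans hθ.1)]

/-- A similarity from `ℂ` onto the plane that takes the unit disc to the disc of centre `x₀` and
radius `ρ`. -/
theorem exists_disc_chart (x₀ : Plane) {ρ : ℝ} (hρ : 0 < ρ) :
    ∃ ψ : ℂ ≃ₜ Plane, ∀ z, dist (ψ z) x₀ = ρ * ‖z‖ := by
  refine ⟨(Complex.orthonormalBasisOneI.repr.toHomeomorph.trans
    (Homeomorph.smulOfNeZero ρ hρ.ne')).trans (Homeomorph.addLeft x₀), fun z => ?_⟩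
  simp [dist_eq_norm, norm_smul, abs_of_pos hρ]

/-- If the open disc is disjoint from its image, then the closed disc meets its image only in
images of boundary points lying on the boundary: an interior point of one disc in the closure of
the other would give a common point of the two open discs. -/
theorem norm_eq_one_of_mem (h : ℂ ≃ₜ ℂ) (hdisj : ∀ x, ‖x‖ < 1 → ¬ ‖h x‖ < 1) (x : ℂ)
    (hx : ‖x‖ ≤ 1) (hhx : ‖h x‖ ≤ 1) : ‖x‖ = 1 ∧ ‖h x‖ = 1 := by
  have hcl : ∀ z : ℂ, ‖z‖ ≤ 1 → z ∈ closure (Metric.ball (0 : ℂ) 1) := fun z hz => by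
    rw [closure_ball _ one_ne_zero]; simpa using hz
  constructor
  · by_contra hne
    obtain ⟨z, hz, hz'⟩ := mem_closure_iff.1 (hcl _ hhx) (h '' Metric.ball 0 1)
      (h.isOpenMap _ Metric.isOpen_ball) (mem_image_of_mem _ (by simpa using lt_of_le_of_ne hx hne))
    obtain ⟨y, hy, rfl⟩ := hz
    exact hdisj y (by simpa using hy) (by simpa using hz')
  · by_contra hne
    obtain ⟨z, hz, hz'⟩ := mem_closure_iff.1 (hcl _ hx) (h ⁻¹' Metric.ball 0 1)
      (Metric.isOpen_ball.preimage h.continuous) (by simpa using lt_of_le_of_ne hhx hne)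
    exact hdisj z (by simpa using hz') (by simpa using hz)

/-! ### The boundary of a critical disc -/

/-- Structure of the boundary of a critical Euclidean disc: h⁻¹(D) ∩ D and D ∩ h(D)
lie on ∂D and are unlinked there, contained in two disjoint closed subarcs λ, μ
(possibly degenerate), and the two complementary closed arcs of ∂D are translation
arcs for h; the four arcs have pairwise disjoint interiors (pairwise intersections
are finite sets of endpoints). -/
theorem stmt14 (h : Homeomorph Plane Plane)
    (hfree : ∀ x : Plane, h x ≠ x) (hor : IsotopicToId ⇑h)
    (x₀ : Plane) (ρ : ℝ) (hρ : 0 < ρ)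
    (D : Set Plane) (hDdef : D = Metric.closedBall x₀ ρ)
    (hcrit : interior D ∩ ⇑h '' interior D = ∅ ∧ (D ∩ ⇑h '' D).Nonempty) :
    (⇑h.symm '' D ∩ D ⊆ frontier D) ∧ (D ∩ ⇑h '' D ⊆ frontier D) ∧
    ∃ lam mu alp₁ alp₂ : Set Plane,
      IsArcOrPoint lam ∧ IsArcOrPoint mu ∧ IsClosed lam ∧ IsClosed mu ∧
      lam ⊆ frontier D ∧ mu ⊆ frontier D ∧ lam ∩ mu = ∅ ∧
      ⇑h.symm '' D ∩ D ⊆ lam ∧ D ∩ ⇑h '' D ⊆ mu ∧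
      IsTranslationArc h alp₁ ∧ IsTranslationArc h alp₂ ∧
      lam ∪ mu ∪ alp₁ ∪ alp₂ = frontier D ∧
      (lam ∩ alp₁).Finite ∧ (lam ∩ alp₂).Finite ∧ (mu ∩ alp₁).Finite ∧
      (mu ∩ alp₂).Finite ∧ (alp₁ ∩ alp₂).Finite := by
  subst hDdef
  obtain ⟨ψ, hψ⟩ := exists_disc_chart x₀ hρ
  have hψD : ∀ z, ψ z ∈ Metric.closedBall x₀ ρ ↔ ‖z‖ ≤ 1 := fun z => by
    rw [Metric.mem_closedBall, hψ, mul_le_iff_le_one_right hρ]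
  have hψB : ∀ z, ψ z ∈ Metric.ball x₀ ρ ↔ ‖z‖ < 1 := fun z => by
    rw [Metric.mem_ball, hψ, mul_lt_iff_lt_one_right hρ]
  have hψS : ∀ z, ψ z ∈ Metric.sphere x₀ ρ ↔ ‖z‖ = 1 := fun z => by
    rw [Metric.mem_sphere, hψ, mul_eq_left₀ hρ.ne']
  rw [interior_closedBall _ hρ.ne'] at hcrit
  rw [frontier_closedBall _ hρ.ne']
  obtain ⟨hdisj, y, hyD, x, hxD, rfl⟩ := hcrit
  let k : ℂ ≃ₜ ℂ := (ψ.trans h).trans ψ.symm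
  have hk : ∀ z, ψ (k z) = h (ψ z) := fun z => by simp [k]
  have hkfree : ∀ z, k z ≠ z := fun z e => hfree (ψ z) (by rw [← hk, e])
  have hb : ∀ z, ‖z‖ ≤ 1 → ‖k z‖ ≤ 1 → ‖z‖ = 1 ∧ ‖k z‖ = 1 :=
    norm_eq_one_of_mem k fun z hz hkz => by
      have : h (ψ z) ∈ Metric.ball x₀ ρ ∩ h '' Metric.ball x₀ ρ :=
        ⟨by rw [← hk, hψB]; exact hkz, mem_image_of_mem _ ((hψB z).2 hz)⟩
      rw [hdisj] at this
      exact this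
  -- In the chart, `h⁻¹(D) ∩ D` consists of the `z` on the unit circle with `k z` on it.
  have hA : ∀ w, w ∈ Metric.closedBall x₀ ρ → h w ∈ Metric.closedBall x₀ ρ →
      ∃ z, ψ z = w ∧ ‖z‖ = 1 ∧ ‖k z‖ = 1 := by
    intro w hw hhw
    obtain ⟨z, rfl⟩ := ψ.surjective w
    rw [← hk, hψD] at hhw
    exact ⟨z, rfl, hb z ((hψD z).1 hw) hhw⟩
  obtain ⟨F, hF, hFh, hF0, hF1⟩ := hor
  obtain ⟨a₀, -, ha₀, hha₀⟩ := hA x hxD hyD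
  obtain ⟨c, α, β, β₁, hcα, hαβ, hββ₁, hβ₁c, hkα, hkc, hall⟩ :=
    exists_cut_angles k hkfree (fun α α' β β' e e' hne h1 h2 h3 h4 => by
      obtain ⟨r, hr, hrel⟩ := direction_relation k hkfree (fun t z => ψ.symm (F t (ψ z)))
        (ψ.symm.continuous.comp (hF.comp (f := fun p : ℝ × ℂ => (p.1, ψ p.2)) (by fun_prop)))
        (fun t => by
          obtain ⟨g, hg⟩ := hFh t
          rw [← hg]
          exact ψ.symm.injective.comp (g.injective.comp ψ.injective))
        (by ext z; simp [hF0]) (by ext z; simp [hF1, k]) hb (norm_cis α)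
        (by rw [e]; exact norm_cis β) (norm_cis α') (by rw [e']; exact norm_cis β') hne
      rw [e, e'] at hrel
      exact angle_prod_neg (sin_prod_neg hr (e ▸ hkfree _) hrel) h1 h2 h3 h4) ha₀ hha₀
  have hpi := Real.pi_pos
  let P : ℝ → Plane := fun θ => ψ (cis θ)
  have hP : Continuous P := ψ.continuous.comp continuous_cis
  have hPinj : ∀ θ φ, P θ = P φ → |θ - φ| < 2 * Real.pi → θ = φ := fun θ φ e =>
    cis_eq_cis (ψ.injective e)
  have hPS : ∀ θ, P θ ∈ Metric.sphere x₀ ρ := fun θ => (hψS _).2 (norm_cis θ)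
  have hPD : ∀ θ, P θ ∈ Metric.closedBall x₀ ρ := fun θ => Metric.sphere_subset_closedBall (hPS θ)
  have hPper : P (c + 2 * Real.pi) = P c := congrArg ψ (cis_add_two_pi c)
  have hlam : ⇑h.symm '' Metric.closedBall x₀ ρ ∩ Metric.closedBall x₀ ρ ⊆ P '' Icc c α := by
    rintro _ ⟨⟨w, hw, rfl⟩, hw'⟩
    obtain ⟨z, hz, h1, h2⟩ := hA _ hw' (by rwa [h.apply_symm_apply])
    obtain ⟨⟨θ, hθ, e⟩, -⟩ := hall z h1 h2
    exact ⟨θ, hθ, by simp only [P, e, hz]⟩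
  have hmu : Metric.closedBall x₀ ρ ∩ ⇑h '' Metric.closedBall x₀ ρ ⊆ P '' Icc β β₁ := by
    rintro _ ⟨hw', w, hw, rfl⟩
    obtain ⟨z, hz, h1, h2⟩ := hA _ hw hw'
    obtain ⟨-, θ, hθ, e⟩ := hall z h1 h2
    exact ⟨θ, hθ, by simp only [P, e, hk, hz]⟩
  have hsub : ∀ s : Set ℝ, P '' s ⊆ Metric.sphere x₀ ρ := by
    rintro s _ ⟨θ, -, rfl⟩
    exact hPS θ
  have harc : ∀ u v, u ≤ v → v < u + 2 * Real.pi → IsArcOrPoint (P '' Icc u v) := by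
    intro u v huv hlt
    rcases huv.eq_or_lt with rfl | hlt'
    · exact Or.inl ⟨P u, by simp⟩
    · obtain ⟨γ, h1, h2, -, -, h3⟩ := exists_arc_param hP hPinj hlt'.ne
        (abs_lt.2 ⟨by linarith, by linarith⟩)
      exact Or.inr ⟨γ, h1, h2, by rw [h3, uIcc_of_le huv]⟩
  have hcl : ∀ u v, IsClosed (P '' Icc u v) := fun u v => (isCompact_Icc.image hP).isClosed
  refine ⟨hlam.trans (hsub _), hmu.trans (hsub _), P '' Icc c α, P '' Icc β β₁,
    P '' Icc α β, P '' Icc β₁ (c + 2 * Real.pi), harc _ _ hcα (by linarith),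
    harc _ _ hββ₁ (by linarith), hcl _ _, hcl _ _, hsub _, hsub _, ?_, hlam, hmu, ?_, ?_, ?_,
    ?_, ?_, ?_, ?_, ?_⟩
  · rw [← disjoint_iff_inter_eq_empty, disjoint_left]
    rintro _ ⟨θ, hθ, rfl⟩ ⟨φ, hφ, e⟩
    have := hPinj _ _ e (abs_lt.2 ⟨by linarith [hθ.2, hφ.1], by linarith [hθ.1, hφ.2]⟩)
    linarith [hθ.2, hφ.1]
  · rw [← uIcc_of_le hαβ.le]
    refine isTranslationArc_of_angles h hP hPinj (w := β₁) hαβ.ne ?_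
      (mem_uIcc.2 (Or.inl ⟨hαβ.le, hββ₁⟩)) ?_ (by simp only [P, ← hk, hkα]) hPD ?_
    · exact abs_lt.2 ⟨by linarith, by linarith⟩
    · exact abs_lt.2 ⟨by linarith, by linarith⟩
    · rwa [uIcc_of_le hββ₁]
  · rw [← uIcc_of_ge hβ₁c.le]
    refine isTranslationArc_of_angles h hP hPinj (w := β) hβ₁c.ne' ?_
      (mem_uIcc.2 (Or.inr ⟨hββ₁, hβ₁c.le⟩)) ?_ (by rw [hPper]; simp only [P, ← hk, hkc]) hPD ?_
    · exact abs_lt.2 ⟨by linarith, by linarith⟩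
    · exact abs_lt.2 ⟨by linarith, by linarith⟩
    · rwa [uIcc_of_ge hββ₁]
  · apply Subset.antisymm
    · simp only [union_subset_iff]
      exact ⟨⟨⟨hsub _, hsub _⟩, hsub _⟩, hsub _⟩
    · intro w hw
      obtain ⟨z, rfl⟩ := ψ.surjective w
      obtain ⟨θ, hθ1, hθ2, rfl⟩ := exists_cis ((hψS z).1 hw) c
      rcases le_total θ α with h1 | h1
      · exact Or.inl (Or.inl (Or.inl ⟨θ, ⟨hθ1, h1⟩, rfl⟩))
      rcases le_total θ β with h2 | h2
      · exact Or.inl (Or.inr ⟨θ, ⟨h1, h2⟩, rfl⟩)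
      rcases le_total θ β₁ with h3 | h3
      · exact Or.inl (Or.inl (Or.inr ⟨θ, ⟨h2, h3⟩, rfl⟩))
      · exact Or.inr ⟨θ, ⟨h3, hθ2.le⟩, rfl⟩
  · exact finite_inter_arcs hPinj le_rfl le_rfl (by linarith)
  · exact finite_inter_arcs hPinj le_rfl (by linarith) le_rfl
  · rw [inter_comm]
    exact finite_inter_arcs hPinj hcα le_rfl (by linarith)
  · exact finite_inter_arcs hPinj (hcα.trans hαβ.le) le_rfl le_rfl
  · exact finite_inter_arcs hPinj hcα hββ₁ le_rfl
end

section
/- Brouwer Plane Translation Theorem: Let h be a fixed point free orientation preserving homeomorphism of ℝ². Then every point of ℝ² lies on a Brouwer line for h, i.e. a properly embedded topological line L with L ∩ h(L) = ∅ which separates h(L) from h⁻¹(L). -/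
/-- L is a properly embedded topological line in the plane. -/
def IsProperLine (L : Set Plane) : Prop :=
  ∃ γ : ℝ → Plane, Continuous γ ∧ Function.Injective γ ∧
    Filter.Tendsto γ (Filter.cocompact ℝ) (Filter.cocompact Plane) ∧ Set.range γ = L

/-- L is a Brouwer line for h: a properly embedded line, free under h, which
separates h(L) from h⁻¹(L) (they lie in different components of the complement). -/
def IsBrouwerLine (h : Homeomorph Plane Plane) (L : Set Plane) : Prop :=
  IsProperLine L ∧ L ∩ ⇑h '' L = ∅ ∧
  ∀ x ∈ ⇑h '' L, ∀ y ∈ ⇑h.symm '' L,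
    connectedComponentIn Lᶜ x ≠ connectedComponentIn Lᶜ y

namespace BrouwerPlane

open Set Filter Topology

/-! ### Logarithms and the absence of points of period two -/

/-- A nowhere vanishing continuous function on `I × A` with a continuous logarithm `f` at time
`0` has a continuous logarithm extending `f`. -/
theorem exists_log_homotopy {A : Type*} [TopologicalSpace A] (H : unitInterval × A → ℂ)
    (hH : Continuous H) (h0 : ∀ p, H p ≠ 0) (f : A → ℂ) (hf : Continuous f)
    (hHf : ∀ a, H (0, a) = Complex.exp (f a)) :
    ∃ G : unitInterval × A → ℂ, Continuous G ∧ (∀ p, Complex.exp (G p) = H p) ∧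
      ∀ a, G (0, a) = f a := by
  let H' : C(unitInterval × A, {z : ℂ // z ≠ 0}) := ⟨fun p => ⟨H p, h0 p⟩, by fun_prop⟩
  have e0 : ∀ a, H' (0, a) = (⟨_, (f a).exp_ne_zero⟩ : {z : ℂ // z ≠ 0}) :=
    fun a => Subtype.ext (hHf a)
  refine ⟨Complex.isCoveringMap_exp.liftHomotopy H' ⟨f, hf⟩ e0, map_continuous _, fun p => ?_,
    fun a => Complex.isCoveringMap_exp.liftHomotopy_zero H' ⟨f, hf⟩ e0 a⟩
  exact congrArg Subtype.val (congrFun (Complex.isCoveringMap_exp.liftHomotopy_lifts H' ⟨f, hf⟩ e0) p)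

/-- A nowhere vanishing continuous function on the plane has a continuous logarithm. -/
theorem exists_log (f : ℂ → ℂ) (hf : Continuous f) (h0 : ∀ z, f z ≠ 0) :
    ∃ g : ℂ → ℂ, Continuous g ∧ ∀ z, Complex.exp (g z) = f z := by
  obtain ⟨G, hG, hexp, -⟩ := exists_log_homotopy (A := ℂ)
    (fun p => f (((p.1 : ℝ) : ℂ) * p.2)) (by fun_prop) (fun _ => h0 _)
    (fun _ => Complex.log (f 0)) continuous_const (by simp [Complex.exp_log, h0])
  exact ⟨fun z => G (1, z), by fun_prop, fun z => by simp [hexp]⟩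

/-- A continuous function on a connected space is constant if its exponential is identically `1`. -/
theorem const_of_exp_eq_one {X : Type*} [TopologicalSpace X] [PreconnectedSpace X] (c : X → ℂ)
    (hc : Continuous c) (h1 : ∀ z, Complex.exp (c z) = 1) (z w : X) : c z = c w := by
  have := Complex.isCoveringMap_exp.const_of_comp hc
    (fun a a' => Subtype.ext (by simp [h1])) z w
  exact this

/-- The space of ordered pairs of distinct points of the plane. -/
abbrev Pairs := {q : ℂ × ℂ // q.1 ≠ q.2}

/-- Let `G` be the logarithm of `(F t z - F t w) / (z - w)` that vanishes at time `0`; it is symmetric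
in `z` and `w`. If `Θ` is a logarithm of `h z - z`, then `G (z, h z) - Θ (h z) + Θ z`, with `G` taken
at time `1`, is constant. On an orbit `{p, h p}` of period two this gives `Θ p = Θ (h p)`, although
`h z - z` takes opposite values at `p` and `h p`. -/
theorem no_period_two (h : ℂ ≃ₜ ℂ) (hfree : ∀ z, h z ≠ z) (hor : IsotopicToId ⇑h) (p : ℂ) :
    h (h p) ≠ p := by
  intro hp
  obtain ⟨F, hF, hFh, hF0, hF1⟩ := hor
  have hinj : ∀ t, Function.Injective (F t) := fun t => by
    obtain ⟨g, hg⟩ := hFh t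
    exact hg ▸ g.injective
  have hne : ∀ q : Pairs, q.1.1 - q.1.2 ≠ 0 := fun q => sub_ne_zero.2 q.2
  have hc : ∀ f : unitInterval × Pairs → ℂ, Continuous f →
      Continuous fun p : unitInterval × Pairs => F p.1 (f p) := fun f hf =>
    hF.comp (Continuous.prodMk (by fun_prop) hf)
  obtain ⟨G, hG, hexp, hG0⟩ := exists_log_homotopy (A := Pairs)
    (fun p => (F p.1 p.2.1.1 - F p.1 p.2.1.2) / (p.2.1.1 - p.2.1.2))
    (((hc _ (by fun_prop)).sub (hc _ (by fun_prop))).div (by fun_prop) fun p => hne p.2)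
    (fun p => div_ne_zero (sub_ne_zero.2 fun h => p.2.2 (hinj _ h)) (hne p.2))
    (fun _ => 0) continuous_const (fun a => by simp [hF0, div_self (hne a)])
  let sw : Pairs → Pairs := fun q => ⟨(q.1.2, q.1.1), q.2.symm⟩
  have hsw : Continuous sw := by
    apply Continuous.subtype_mk
    fun_prop
  have hsymm : ∀ q : Pairs, G (1, sw q) = G (1, q) := by
    intro q
    have key := const_of_exp_eq_one (X := unitInterval) (fun t => G (t, sw q) - G (t, q))
      (by fun_prop) (fun t => by
        rw [Complex.exp_sub, hexp, hexp]
        have h1 : (F t q.1.1 - F t q.1.2) / (q.1.1 - q.1.2) ≠ 0 :=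
          div_ne_zero (sub_ne_zero.2 fun h => q.2 (hinj _ h)) (hne q)
        have h2 : (F t q.1.2 - F t q.1.1) / (q.1.2 - q.1.1) =
          (F t q.1.1 - F t q.1.2) / (q.1.1 - q.1.2) := by
          rw [← neg_sub, ← neg_sub q.1.1, neg_div_neg_eq]
        simp only [sw]
        rw [h2, div_self h1]) 1 0
    simp only [hG0, sub_self] at key
    exact sub_eq_zero.1 key
  obtain ⟨Θ, hΘ, hΘe⟩ := exists_log (fun z => h z - z) (by fun_prop) fun z =>
    sub_ne_zero.2 (hfree z)
  let ι : ℂ → Pairs := fun z => ⟨(z, h z), (hfree z).symm⟩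
  have hι : Continuous ι := Continuous.subtype_mk (by fun_prop) _
  have key := const_of_exp_eq_one (fun z => G (1, ι z) - Θ (h z) + Θ z) (by fun_prop) (fun z => by
    rw [Complex.exp_add, Complex.exp_sub, hexp, hΘe, hΘe]
    have h1 := sub_ne_zero.2 (hfree z)
    have h2 := sub_ne_zero.2 (hfree (h z))
    have h3 := sub_ne_zero.2 (hfree z).symm
    simp only [ι, Set.Icc.coe_one, hF1]
    field_simp
    ring) p (h p)
  have hs : ι (h p) = sw (ι p) := Subtype.ext (by simp [ι, sw, hp])
  simp only [hs, hsymm, hp] at key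
  have h4 : Θ p = Θ (h p) := by linear_combination key / 2
  have h5 := hΘe (h p)
  rw [← h4, hΘe, hp] at h5
  exact hfree p (by linear_combination h5 / 2)

/-! ### Moving points inside connected open sets -/

theorem IsotopicToId.comp' {X : Type*} [TopologicalSpace X] {f g : X → X} (hf : IsotopicToId f)
    (hg : IsotopicToId g) : IsotopicToId (f ∘ g) := by
  obtain ⟨F, hF, hFh, hF0, hF1⟩ := hf
  obtain ⟨G, hG, hGh, hG0, hG1⟩ := hg
  refine ⟨fun t => F t ∘ G t, hF.comp (Continuous.prodMk continuous_fst hG), fun t => ?_, ?_, ?_⟩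
  · obtain ⟨a, ha⟩ := hFh t
    obtain ⟨b, hb⟩ := hGh t
    exact ⟨b.trans a, by beta_reduce; rw [← ha, ← hb]; rfl⟩
  · simp [hF0, hG0]
  · simp [hF1, hG1]

theorem IsotopicToId.conj {X Y : Type*} [TopologicalSpace X] [TopologicalSpace Y] {f : X → X}
    (hf : IsotopicToId f) (e : Y ≃ₜ X) : IsotopicToId (e.symm ∘ f ∘ e) := by
  obtain ⟨F, hF, hFh, hF0, hF1⟩ := hf
  refine ⟨fun t => e.symm ∘ F t ∘ e, ?_, fun t => ?_, ?_, ?_⟩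
  · exact e.symm.continuous.comp
      (hF.comp (Continuous.prodMk continuous_fst (e.continuous.comp continuous_snd)))
  · obtain ⟨a, ha⟩ := hFh t
    exact ⟨(e.trans a).trans e.symm, by ext; simp [← ha]⟩
  · ext; simp [hF0]
  · simp [hF1]

theorem isotopicToId_id {X : Type*} [TopologicalSpace X] : IsotopicToId (id : X → X) :=
  ⟨fun _ => id, continuous_snd, fun _ => ⟨Homeomorph.refl X, rfl⟩, rfl, rfl⟩

/-- The translation by `c • (b - a)`, damped linearly to the identity on the boundary of the ball
of radius `ρ` around `a`. -/
noncomputable def damped (a b : ℂ) (ρ : ℝ) (c : ℝ) (z : ℂ) : ℂ :=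
  z + ((c * max 0 (1 - ‖z - a‖ / ρ) : ℝ) : ℂ) * (b - a)

/-- The damped translation differs from the identity by a contraction, hence is a homeomorphism. -/
theorem damped_homeo {a b : ℂ} {ρ : ℝ} (hb : ‖b - a‖ < ρ) {c : ℝ} (hc0 : 0 ≤ c) (hc1 : c ≤ 1) :
    ∃ g : ℂ ≃ₜ ℂ, ⇑g = damped a b ρ c := by
  have hρ : 0 < ρ := (norm_nonneg _).trans_lt hb
  let K : NNReal := ⟨‖b - a‖ / ρ, by positivity⟩
  have key : ApproximatesLinearOn (damped a b ρ c)
      (ContinuousLinearEquiv.refl ℝ ℂ : ℂ →L[ℝ] ℂ) univ K := by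
    intro x _ y _
    have e : damped a b ρ c x - damped a b ρ c y -
        (ContinuousLinearEquiv.refl ℝ ℂ : ℂ →L[ℝ] ℂ) (x - y) =
        ((c * (max 0 (1 - ‖x - a‖ / ρ) - max 0 (1 - ‖y - a‖ / ρ)) : ℝ) : ℂ) * (b - a) := by
      simp [damped]
      ring
    rw [e, norm_mul, Complex.norm_real, norm_mul, Real.norm_of_nonneg hc0, Real.norm_eq_abs]
    have h1 : |max 0 (1 - ‖x - a‖ / ρ) - max 0 (1 - ‖y - a‖ / ρ)| ≤ ‖x - y‖ / ρ := by
      refine (abs_max_sub_max_le_max _ _ _ _).trans ?_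
      rw [sub_self, abs_zero, max_eq_right (abs_nonneg _)]
      have : 1 - ‖x - a‖ / ρ - (1 - ‖y - a‖ / ρ) = (‖y - a‖ - ‖x - a‖) / ρ := by ring
      rw [this, abs_div, abs_of_pos hρ]
      gcongr
      have := abs_norm_sub_norm_le (y - a) (x - a)
      rw [sub_sub_sub_cancel_right] at this
      rwa [norm_sub_rev x y]
    have hK : (K : ℝ) = ‖b - a‖ / ρ := rfl
    rw [hK]
    calc c * |max 0 (1 - ‖x - a‖ / ρ) - max 0 (1 - ‖y - a‖ / ρ)| * ‖b - a‖
        ≤ 1 * (‖x - y‖ / ρ) * ‖b - a‖ := by gcongr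
      _ = ‖b - a‖ / ρ * ‖x - y‖ := by ring
  have hK1 : K < 1 := by
    rw [← NNReal.coe_lt_coe]
    exact (div_lt_one hρ).2 hb
  refine ⟨key.toHomeomorph _ (Or.inr ?_), rfl⟩
  have : ‖((ContinuousLinearEquiv.refl ℝ ℂ).symm : ℂ →L[ℝ] ℂ)‖₊ = 1 := by
    simp
  rw [this, inv_one]
  exact hK1

/-- The centre of a ball is moved to any given point of the ball by a homeomorphism
supported in it. -/
theorem exists_push_ball {a b : ℂ} {ρ : ℝ} (hb : ‖b - a‖ < ρ) :
    ∃ ψ : ℂ ≃ₜ ℂ, IsotopicToId ψ ∧ ψ a = b ∧ ∀ z, ρ ≤ ‖z - a‖ → ψ z = z := by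
  have hρ : 0 < ρ := (norm_nonneg _).trans_lt hb
  obtain ⟨ψ, hψ⟩ := damped_homeo hb zero_le_one le_rfl
  refine ⟨ψ, ⟨fun t => damped a b ρ (max 0 (min 1 t)), ?_, fun t =>
    damped_homeo hb (by simp) (by simp), ?_, ?_⟩, ?_, fun z hz => ?_⟩
  · unfold damped
    fun_prop
  · ext; simp [damped]
  · simp [hψ]
  · simp [hψ, damped]
  · have : 1 - ‖z - a‖ / ρ ≤ 0 := by
      rw [sub_nonpos, one_le_div hρ]; exact hz
    simp [hψ, damped, max_eq_left this]

/-- A point of a connected open set is moved to any other one by a homeomorphism supported in this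
set: the points that can be reached form an open and closed subset. -/
theorem exists_push {U : Set ℂ} (hU : IsOpen U) (hc : IsPreconnected U) {a b : ℂ} (ha : a ∈ U)
    (hb : b ∈ U) : ∃ ψ : ℂ ≃ₜ ℂ, IsotopicToId ψ ∧ ψ a = b ∧ ∀ z, z ∉ U → ψ z = z := by
  let R : Set ℂ := {b | ∃ ψ : ℂ ≃ₜ ℂ, IsotopicToId ψ ∧ ψ a = b ∧ ∀ z, z ∉ U → ψ z = z}
  have step : ∀ c ∈ R, ∀ d ρ, ‖d - c‖ < ρ → Metric.ball c ρ ⊆ U → d ∈ R := by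
    rintro c ⟨ψ, h1, h2, h3⟩ d ρ hd hs
    obtain ⟨φ, g1, g2, g3⟩ := exists_push_ball hd
    refine ⟨ψ.trans φ, (show IsotopicToId (φ ∘ ψ) from IsotopicToId.comp' g1 h1), by simp [h2, g2], fun z hz => ?_⟩
    simp only [Homeomorph.trans_apply, h3 z hz]
    refine g3 z (not_lt.1 fun h => hz (hs ?_))
    rwa [Metric.mem_ball, dist_eq_norm]
  have hRo : IsOpen (R ∩ U) := by
    rw [Metric.isOpen_iff]
    rintro c ⟨hcR, hcU⟩
    obtain ⟨ρ, hρ, hs⟩ := Metric.isOpen_iff.1 hU c hcU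
    exact ⟨ρ, hρ, fun d hd => ⟨step c hcR d ρ (by rwa [Metric.mem_ball, dist_eq_norm] at hd) hs,
      hs hd⟩⟩
  have hRc : IsOpen (Rᶜ ∩ U) := by
    rw [Metric.isOpen_iff]
    rintro d ⟨hdR, hdU⟩
    obtain ⟨ρ, hρ, hs⟩ := Metric.isOpen_iff.1 hU d hdU
    refine ⟨ρ / 2, by positivity, fun c hc => ⟨fun hcR => hdR ?_, hs ?_⟩⟩
    · have hc' : dist c d < ρ / 2 := hc
      refine step c hcR d (ρ / 2) (by rwa [← dist_eq_norm, dist_comm]) fun e he => hs ?_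
      have he' : dist e c < ρ / 2 := he
      have := dist_triangle e c d
      exact Metric.mem_ball.2 (by linarith)
    · exact Metric.ball_subset_ball (by linarith) hc
  by_contra hbR
  obtain ⟨x, -, hx1, hx2⟩ := hc _ _ hRo hRc (fun z hz => by
    by_cases h : z ∈ R
    · exact Or.inl ⟨h, hz⟩
    · exact Or.inr ⟨h, hz⟩)
    ⟨a, ha, ⟨Homeomorph.refl ℂ, isotopicToId_id, rfl, fun _ _ => rfl⟩, ha⟩ ⟨b, hb, hbR, hb⟩
  exact hx2.1 hx1.1

/-- A homeomorphism which is the identity off `U` preserves `U`. -/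
theorem mem_of_support {U : Set ℂ} {ψ : ℂ ≃ₜ ℂ} (hψ : ∀ z, z ∉ U → ψ z = z) {z : ℂ}
    (hz : z ∈ U) : ψ z ∈ U := by
  by_contra h
  have := ψ.injective (hψ _ h)
  rw [this] at h
  exact h hz

/-- `U` is free under `h` when it is disjoint from its image. -/
def Free (h : ℂ ≃ₜ ℂ) (U : Set ℂ) : Prop := ∀ z ∈ U, h z ∉ U

/-- Composing with a homeomorphism supported in a free set creates no fixed point. -/
theorem fixfree_push {h ψ : ℂ ≃ₜ ℂ} (hfree : ∀ z, h z ≠ z) {U : Set ℂ} (hU : Free h U)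
    (hψ : ∀ z, z ∉ U → ψ z = z) (z : ℂ) : (h.trans ψ) z ≠ z := by
  intro hz
  simp only [Homeomorph.trans_apply] at hz
  by_cases hm : h z ∈ U
  · exact hU z (by simpa [hz] using mem_of_support hψ hm) hm
  · rw [hψ _ hm] at hz
    exact hfree z hz

/-- A compact connected free set has arbitrarily small connected open free neighbourhoods. -/
theorem exists_free_nhd {h : ℂ ≃ₜ ℂ} {K W : Set ℂ} (hK : IsCompact K) (hKc : IsPreconnected K)
    (hf : Free h K) (hW : IsOpen W) (hKW : K ⊆ W) :
    ∃ U, IsOpen U ∧ IsPreconnected U ∧ K ⊆ U ∧ U ⊆ W ∧ Free h U := by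
  rcases K.eq_empty_or_nonempty with rfl | ⟨k, hk⟩
  · exact ⟨∅, isOpen_empty, isPreconnected_empty, by simp, by simp, fun z hz => hz.elim⟩
  have hd : Disjoint K (h '' K) := by
    rw [Set.disjoint_left]
    rintro z hz ⟨w, hw, rfl⟩
    exact hf w hw hz
  obtain ⟨V, V', hV, hV', hKV, hKV', hVV'⟩ :=
    SeparatedNhds.of_isCompact_isCompact hK (hK.image h.continuous) hd
  have ho : IsOpen (W ∩ V ∩ h ⁻¹' V') := (hW.inter hV).inter (hV'.preimage h.continuous)
  have hs : K ⊆ W ∩ V ∩ h ⁻¹' V' := fun z hz => ⟨⟨hKW hz, hKV hz⟩, hKV' ⟨z, hz, rfl⟩⟩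
  refine ⟨connectedComponentIn (W ∩ V ∩ h ⁻¹' V') k, ho.connectedComponentIn,
    isPreconnected_connectedComponentIn, hKc.subset_connectedComponentIn hk hs, ?_, ?_⟩
  · exact (connectedComponentIn_subset _ _).trans fun z hz => hz.1.1
  · intro z hz hz'
    exact Set.disjoint_left.1 hVV' (connectedComponentIn_subset _ _ hz').1.2
      (connectedComponentIn_subset _ _ hz).2

/-! ### Absence of periodic points -/

/-- Absence of periodic points of period `m` for every fixed point free `h`. -/
def NoPer (m : ℕ) : Prop :=
  ∀ h : ℂ ≃ₜ ℂ, (∀ z, h z ≠ z) → IsotopicToId ⇑h → ∀ z, h^[m] z ≠ z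

/-- If a free connected open set returned to itself, a push inside it would create a periodic
point. -/
theorem no_return {n : ℕ} (hn : ∀ m, 1 ≤ m → m < n → NoPer m) {h : ℂ ≃ₜ ℂ}
    (hfree : ∀ z, h z ≠ z) (hor : IsotopicToId ⇑h) {U : Set ℂ} (hU : IsOpen U)
    (hc : IsPreconnected U) (hf : Free h U) : ∀ m, 1 ≤ m → m < n → ∀ z ∈ U, h^[m] z ∉ U := by
  intro m
  induction m using Nat.strong_induction_on with
  | _ m ih =>
    intro hm1 hmn z hz hmz
    obtain ⟨ψ, g1, g2, g3⟩ := exists_push hU hc hmz hz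
    refine hn m hm1 hmn (h.trans ψ) (fixfree_push hfree hf g3)
      (show IsotopicToId (ψ ∘ h) from IsotopicToId.comp' g1 hor) z ?_
    have key : ∀ i, i < m → (h.trans ψ)^[i] z = h^[i] z := by
      intro i
      induction i with
      | zero => intro _; rfl
      | succ i ihi =>
        intro hi
        rw [Function.iterate_succ_apply', ihi (by omega), Homeomorph.trans_apply,
          ← Function.iterate_succ_apply' (⇑h)]
        exact g3 _ (ih (i + 1) hi (by omega) (by omega) z hz)
    obtain ⟨k, rfl⟩ : ∃ k, m = k + 1 := ⟨m - 1, by omega⟩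
    rw [Function.iterate_succ_apply', key k (by omega), Homeomorph.trans_apply,
      ← Function.iterate_succ_apply' (⇑h), g2]

/-- The critical disc at `p`: the largest disc whose interior is free. It meets its image only on
its boundary circle. -/
theorem critical_disc {h : ℂ ≃ₜ ℂ} (hfree : ∀ z, h z ≠ z) (p : ℂ) :
    ∃ r : ℝ, 0 < r ∧ ∃ y : ℂ, ‖y - p‖ = r ∧ ‖h y - p‖ = r ∧
      (∀ z, ‖z - p‖ ≤ r → ‖h z - p‖ ≤ r → ‖z - p‖ = r ∧ ‖h z - p‖ = r) := by
  let g : ℂ → ℝ := fun z => max ‖z - p‖ ‖h z - p‖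
  have hg : Continuous g := by
    have := h.continuous
    fun_prop
  have hlim : Tendsto g (cocompact ℂ) atTop := by
    refine tendsto_atTop_mono (fun z => le_max_left _ _) ?_
    have : Tendsto (fun z : ℂ => ‖z‖ - ‖p‖) (cocompact ℂ) atTop :=
      tendsto_atTop_add_const_right _ _ (tendsto_norm_cocompact_atTop (E := ℂ))
    exact tendsto_atTop_mono (fun z => norm_sub_norm_le z p) this
  obtain ⟨y, hy⟩ := hg.exists_forall_le hlim
  have main : ∀ z, ‖z - p‖ ≤ g y → ‖h z - p‖ ≤ g y → ‖z - p‖ = g y ∧ ‖h z - p‖ = g y := by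
    intro z hz hhz
    by_contra hcon
    -- one of the two points is interior; moving the other one inwards lowers the maximum
    have : ∃ w, ‖w - p‖ < g y ∧ ‖h w - p‖ < g y := by
      rcases lt_or_eq_of_le hz with h1 | h1
      · have hne : h z ≠ p ∨ ‖h z - p‖ < g y := by
          by_cases hh : h z = p
          · right
            rw [hh, sub_self, norm_zero]
            exact (norm_nonneg _).trans_lt h1
          · exact Or.inl hh
        have ho : IsOpen {w : ℂ | ‖h.symm w - p‖ < g y} := by
          have := h.symm.continuous
          exact isOpen_lt (by fun_prop) continuous_const
        have hcl : h z ∈ closure (Metric.ball p (g y)) := by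
          rw [closure_ball _ ((norm_nonneg _).trans_lt h1).ne']
          rwa [Metric.mem_closedBall, dist_eq_norm]
        obtain ⟨w, hw1, hw2⟩ := mem_closure_iff.1 hcl _ ho (by simpa using h1)
        exact ⟨h.symm w, hw1, by rw [Metric.mem_ball, dist_eq_norm] at hw2; simpa using hw2⟩
      · have h2 : ‖h z - p‖ < g y := lt_of_le_of_ne hhz fun h2 => hcon ⟨h1, h2⟩
        have ho : IsOpen {w : ℂ | ‖h w - p‖ < g y} := by
          have := h.continuous
          exact isOpen_lt (by fun_prop) continuous_const
        have hcl : z ∈ closure (Metric.ball p (g y)) := by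
          rw [closure_ball _ ((norm_nonneg _).trans_lt h2).ne']
          rwa [Metric.mem_closedBall, dist_eq_norm]
        obtain ⟨w, hw1, hw2⟩ := mem_closure_iff.1 hcl _ ho h2
        exact ⟨w, by rwa [Metric.mem_ball, dist_eq_norm] at hw2, hw1⟩
    obtain ⟨w, hw1, hw2⟩ := this
    exact absurd (hy w) (not_le.2 (max_lt hw1 hw2))
  obtain ⟨hy1, hy2⟩ := main y (le_max_left _ _) (le_max_right _ _)
  refine ⟨g y, lt_of_le_of_ne (by rw [← hy1]; exact norm_nonneg _) fun h0 => ?_, y, hy1, hy2, main⟩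
  rw [← h0, norm_eq_zero, sub_eq_zero] at hy1 hy2
  exact hfree y (by rw [hy2, hy1])

theorem norm_lt_of_mem_segment {p y z : ℂ} (hz : z ∈ segment ℝ y p) (hne : z ≠ y) :
    ‖z - p‖ < ‖y - p‖ := by
  obtain ⟨a, b, ha, hb, hab, rfl⟩ := hz
  have hyp : y ≠ p := by
    rintro rfl
    apply hne
    rw [← add_smul, hab, one_smul]
  have e : a • y + b • p - p = a • (y - p) := by
    rw [show b = 1 - a by linarith]; module
  rw [e, norm_smul, Real.norm_of_nonneg ha]
  have : a < 1 := by
    refine lt_of_le_of_ne (by linarith) fun h1 => hne ?_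
    rw [h1, show b = 0 by linarith]; simp
  have h0 : 0 < ‖y - p‖ := norm_pos_iff.2 (sub_ne_zero.2 hyp)
  nlinarith

theorem norm_le_of_mem_segment {p y z : ℂ} (hz : z ∈ segment ℝ y p) : ‖z - p‖ ≤ ‖y - p‖ := by
  by_cases h : z = y
  · rw [h]
  · exact (norm_lt_of_mem_segment hz h).le

/-- A radius of the critical disc ending at `y` or `h y` is free. -/
theorem free_radius {h : ℂ ≃ₜ ℂ} (hfree : ∀ z, h z ≠ z) {p : ℂ} {r : ℝ}
    (hr : ∀ z, ‖z - p‖ ≤ r → ‖h z - p‖ ≤ r → ‖z - p‖ = r ∧ ‖h z - p‖ = r) {y : ℂ}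
    (hy : ‖y - p‖ = r) : Free h (segment ℝ y p) := by
  intro z hz hhz
  obtain ⟨h1, h2⟩ := hr z (hy ▸ norm_le_of_mem_segment hz) (hy ▸ norm_le_of_mem_segment hhz)
  have e1 : z = y := by
    by_contra hne
    exact (norm_lt_of_mem_segment hz hne).ne (h1.trans hy.symm)
  have e2 : h z = y := by
    by_contra hne
    exact (norm_lt_of_mem_segment hhz hne).ne (h2.trans hy.symm)
  exact hfree z (e2.trans e1.symm)

theorem isCompact_segment (a b : ℂ) : IsCompact (segment ℝ a b) := by
  rw [segment_eq_image]
  exact isCompact_Icc.image (by fun_prop)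

theorem isPreconnected_segment (a b : ℂ) : IsPreconnected (segment ℝ a b) :=
  (convex_segment a b).isPreconnected

/-- The analogue of `no_return` for free continua. -/
theorem no_return_compact {n : ℕ} (hn : ∀ m, 1 ≤ m → m < n → NoPer m) {h : ℂ ≃ₜ ℂ}
    (hfree : ∀ z, h z ≠ z) (hor : IsotopicToId ⇑h) {K : Set ℂ} (hK : IsCompact K)
    (hc : IsPreconnected K) (hf : Free h K) {m : ℕ} (h1 : 1 ≤ m) (h2 : m < n) {z : ℂ}
    (hz : z ∈ K) : h^[m] z ∉ K := by
  obtain ⟨U, hU, hUc, hKU, -, hUf⟩ := exists_free_nhd hK hc hf isOpen_univ (subset_univ K)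
  exact fun hm => no_return hn hfree hor hU hUc hUf m h1 h2 z (hKU hz) (hKU hm)

/-- A fixed point free homeomorphism isotopic to the identity has no periodic point. Let `p` have
period `n ≥ 3` and let `y`, `h y` lie on the boundary of the critical disc at `p`. Composing `h` with a
push from `p` to `h y` near one radius and with a push from `h y` to `h p` near the image of the other
radius makes the orbit skip `p`: it becomes an orbit of period `n - 1` of another fixed point free
homeomorphism. -/
theorem no_periodic (n : ℕ) (hn : 1 ≤ n) : NoPer n := by
  induction n using Nat.strong_induction_on with
  | _ n ih =>
    intro h hfree hor p hp
    rcases (by omega : n = 1 ∨ n = 2 ∨ 3 ≤ n) with rfl | rfl | h3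
    · exact hfree p hp
    · exact no_period_two h hfree hor p hp
    have IH : ∀ m, 1 ≤ m → m < n → NoPer m := fun m h1 h2 => ih m h2 h1
    obtain ⟨r, hr0, y, hy1, hy2, hr⟩ := critical_disc hfree p
    have f0 : Free h (segment ℝ y p) := free_radius hfree hr hy1
    have f1 : Free h (segment ℝ (h y) p) := free_radius hfree hr hy2
    have hb : Free h (Metric.ball p r) := by
      intro z hz hhz
      rw [Metric.mem_ball, dist_eq_norm] at hz hhz
      exact hz.ne (hr z hz.le hhz.le).1
    have c0 : IsCompact (segment ℝ y p) := isCompact_segment _ _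
    have c1 : IsCompact (segment ℝ (h y) p) := isCompact_segment _ _
    have p0 : p ∈ segment ℝ y p := right_mem_segment _ _ _
    have y0 : y ∈ segment ℝ y p := left_mem_segment _ _ _
    have p1 : p ∈ segment ℝ (h y) p := right_mem_segment _ _ _
    have y1 : h y ∈ segment ℝ (h y) p := left_mem_segment _ _ _
    -- by induction neither the two radii nor the disc return in fewer than `n` steps, so the pushes
    -- can be supported away from the rest of the orbit
    have a1 : ∀ i, 1 ≤ i → i < n → h^[i] p ∉ segment ℝ (h y) p := fun i h1 h2 =>
      no_return_compact IH hfree hor c1 (isPreconnected_segment _ _) f1 h1 h2 p1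
    have a2 : ∀ i, 2 ≤ i → i < n → h^[i] p ∉ h '' segment ℝ y p := by
      rintro i h1 h2 ⟨w, hw, hwi⟩
      obtain ⟨k, rfl⟩ : ∃ k, i = k + 1 := ⟨i - 1, by omega⟩
      rw [Function.iterate_succ_apply'] at hwi
      rw [h.injective hwi] at hw
      exact no_return_compact IH hfree hor c0 (isPreconnected_segment _ _) f0
        (by omega) (by omega) p0 hw
    have a3 : ∀ w ∈ segment ℝ y p, h (h w) ∉ segment ℝ (h y) p := by
      intro w hw hhw
      by_cases e1 : h (h w) = h y
      · exact f0 w hw (by rwa [h.injective e1])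
      by_cases e2 : w = y
      · subst e2
        exact f1 _ y1 hhw
      refine no_return IH hfree hor Metric.isOpen_ball
        (convex_ball p r).isPreconnected hb 2 (by norm_num) (by omega) w ?_ ?_
      · rw [Metric.mem_ball, dist_eq_norm, ← hy1]
        exact norm_lt_of_mem_segment hw e2
      · change h (h w) ∈ _
        rw [Metric.mem_ball, dist_eq_norm, ← hy2]
        exact norm_lt_of_mem_segment hhw e1
    -- the first push carries `p` to `h y`
    let O1 : Set ℂ := (fun i => h^[i] p) '' (Icc 1 (n - 1))
    let O2 : Set ℂ := (fun i => h^[i] p) '' (Icc 2 (n - 1))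
    have hO1 : IsClosed (O1 ∪ (fun z => h (h z)) '' segment ℝ y p) :=
      ((finite_Icc _ _).image _).isClosed.union
        (c0.image (h.continuous.comp h.continuous)).isClosed
    obtain ⟨U1, o1, k1, s1, w1, g1⟩ := exists_free_nhd c1 (isPreconnected_segment _ _) f1
      hO1.isOpen_compl (by
        rintro z hz (⟨i, hi, rfl⟩ | ⟨w, hw, rfl⟩)
        · exact a1 i hi.1 (by have := hi.2; omega) hz
        · exact a3 w hw hz)
    obtain ⟨ψ1, i1, e1, t1⟩ := exists_push o1 k1 (s1 p1) (s1 y1)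
    have F1 : ∀ z, (h.trans ψ1) z ≠ z := fixfree_push hfree g1 t1
    have I1 : IsotopicToId (h.trans ψ1) :=
      show IsotopicToId (ψ1 ∘ h) from IsotopicToId.comp' i1 hor
    have f2 : Free (h.trans ψ1) (h '' segment ℝ y p) := by
      rintro _ ⟨w, hw, rfl⟩ ⟨v, hv, hvw⟩
      rw [Homeomorph.trans_apply, t1 _ fun hU => w1 hU (Or.inr ⟨w, hw, rfl⟩)] at hvw
      exact f0 w hw (h.injective hvw ▸ hv)
    -- the second push carries `h y` to `h p`
    have hO2 : IsClosed O2 := ((finite_Icc _ _).image _).isClosed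
    obtain ⟨U2, o2, k2, s2, w2, g2⟩ := exists_free_nhd (c0.image h.continuous)
      ((isPreconnected_segment _ _).image _ h.continuous.continuousOn) f2
      hO2.isOpen_compl (by
        rintro z hz ⟨i, hi, rfl⟩
        exact a2 i hi.1 (by have := hi.2; omega) hz)
    obtain ⟨ψ2, i2, e2, t2⟩ := exists_push o2 k2 (s2 ⟨y, y0, rfl⟩) (s2 ⟨p, p0, rfl⟩)
    have F2 : ∀ z, ((h.trans ψ1).trans ψ2) z ≠ z := fixfree_push F1 g2 t2
    have I2 : IsotopicToId ((h.trans ψ1).trans ψ2) :=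
      show IsotopicToId (ψ2 ∘ (h.trans ψ1)) from IsotopicToId.comp' i2 I1
    have key : ∀ k, k + 2 ≤ n → ((h.trans ψ1).trans ψ2)^[k] (h p) = h^[k + 1] p := by
      intro k
      induction k with
      | zero => intro _; rfl
      | succ k ihk =>
        intro hk
        rw [Function.iterate_succ_apply', ihk (by omega), Homeomorph.trans_apply,
          Homeomorph.trans_apply, ← Function.iterate_succ_apply' (⇑h),
          t1 _ fun hU => w1 hU (Or.inl ⟨k + 1 + 1, ⟨by omega, by omega⟩, rfl⟩),
          t2 _ fun hU => w2 hU ⟨k + 1 + 1, ⟨by omega, by omega⟩, rfl⟩]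
    refine IH (n - 1) (by omega) (by omega) _ F2 I2 (h p) ?_
    obtain ⟨k, rfl⟩ : ∃ k, n = k + 2 := ⟨n - 2, by omega⟩
    change ((h.trans ψ1).trans ψ2)^[k + 1] (h p) = h p
    rw [Function.iterate_succ_apply', key k le_rfl, Homeomorph.trans_apply,
      Homeomorph.trans_apply, ← Function.iterate_succ_apply' (⇑h)]
    change ψ2 (ψ1 (h^[k + 2] p)) = h p
    rw [hp, e1, e2]

/-- A sequence of points on one orbit cannot stay in a compact set: it would accumulate, and
return to a small free disc. -/
theorem no_recurrence {h : ℂ ≃ₜ ℂ} (hfree : ∀ z, h z ≠ z) (hor : IsotopicToId ⇑h)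
    {K : Set ℂ} (hK : IsCompact K) (x : ℕ → ℂ) (hx : ∀ n, x n ∈ K)
    (hxh : ∀ i j, i < j → ∃ m, 1 ≤ m ∧ (h^[m] (x i) = x j ∨ h^[m] (x j) = x i)) : False := by
  obtain ⟨a, -, φ, hφ, hlim⟩ := hK.tendsto_subseq hx
  obtain ⟨U, hU, hUc, haU, -, hUf⟩ := exists_free_nhd (h := h) (isCompact_singleton (x := a))
    isPreconnected_singleton (by rintro z rfl; exact hfree z) isOpen_univ (subset_univ _)
  obtain ⟨N, hN⟩ := eventually_atTop.1 (hlim.eventually (hU.mem_nhds (haU rfl)))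
  have h1 : x (φ N) ∈ U := hN N le_rfl
  have h2 : x (φ (N + 1)) ∈ U := hN (N + 1) (by omega)
  obtain ⟨m, hm, h3 | h3⟩ := hxh (φ N) (φ (N + 1)) (hφ (by omega))
  · exact no_return (n := m + 1) (fun m hm _ => no_periodic m hm) hfree hor hU hUc hUf
      m hm (by omega) _ h1 (h3 ▸ h2)
  · exact no_return (n := m + 1) (fun m hm _ => no_periodic m hm) hfree hor hU hUc hUf
      m hm (by omega) _ h2 (h3 ▸ h1)

/-- A fixed point free homeomorphism isotopic to the identity has no nonempty compact forward
invariant set. -/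
theorem no_compact_invariant {h : ℂ ≃ₜ ℂ} (hfree : ∀ z, h z ≠ z) (hor : IsotopicToId ⇑h)
    {K : Set ℂ} (hK : IsCompact K) (hne : K.Nonempty) (hi : ∀ z ∈ K, h z ∈ K) : False := by
  obtain ⟨z, hz⟩ := hne
  refine no_recurrence hfree hor hK (fun n => h^[n] z) (fun n => ?_) fun i j hij =>
    ⟨j - i, by omega, Or.inl ?_⟩
  · induction n with
    | zero => exact hz
    | succ n ih =>
      rw [Function.iterate_succ_apply']
      exact hi _ ih
  · rw [← Function.iterate_add_apply, Nat.sub_add_cancel hij.le]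

theorem no_compact_invariant_symm {h : ℂ ≃ₜ ℂ} (hfree : ∀ z, h z ≠ z) (hor : IsotopicToId ⇑h)
    {K : Set ℂ} (hK : IsCompact K) (hne : K.Nonempty) (hi : ∀ z ∈ K, h.symm z ∈ K) : False := by
  obtain ⟨z, hz⟩ := hne
  refine no_recurrence hfree hor hK (fun n => h.symm^[n] z) (fun n => ?_) fun i j hij =>
    ⟨j - i, by omega, Or.inr ?_⟩
  · induction n with
    | zero => exact hz
    | succ n ih =>
      rw [Function.iterate_succ_apply']
      exact hi _ ih
  · have hl : Function.LeftInverse h^[j - i] h.symm^[j - i] :=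
      Function.LeftInverse.iterate h.apply_symm_apply _
    obtain ⟨k, rfl⟩ : ∃ k, j = k + i := ⟨j - i, by omega⟩
    simp only [Nat.add_sub_cancel] at hl ⊢
    rw [Function.iterate_add_apply]
    exact hl _

/-! ### Free brick families have no cycles -/

/-- Simultaneous pushes along pairwise disjoint free continua. -/
theorem exists_multi_push {h : ℂ ≃ₜ ℂ} (hfree : ∀ z, h z ≠ z) {ι : Type*} [DecidableEq ι]
    [Finite ι] (K : ι → Set ℂ) (a b : ι → ℂ) (hK : ∀ i, IsCompact (K i))
    (hc : ∀ i, IsPreconnected (K i)) (hf : ∀ i, Free h (K i)) (ha : ∀ i, a i ∈ K i)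
    (hb : ∀ i, b i ∈ K i) (hd : ∀ i j, i ≠ j → ∀ z ∈ K i, z ∉ K j) (S : Finset ι) :
    ∃ ψ : ℂ ≃ₜ ℂ, IsotopicToId ψ ∧ (∀ z, (h.trans ψ) z ≠ z) ∧ (∀ i ∈ S, ψ (a i) = b i) ∧
      ∀ i ∉ S, ∀ z ∈ K i, ψ z = z := by
  induction S using Finset.induction_on with
  | empty =>
    exact ⟨Homeomorph.refl ℂ, isotopicToId_id, hfree, by simp, fun _ _ _ _ => rfl⟩
  | insert k S hk ih =>
    obtain ⟨ψ, h1, h2, h3, h4⟩ := ih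
    have hfk : Free (h.trans ψ) (K k) := by
      intro z hz hz'
      rw [Homeomorph.trans_apply] at hz'
      have := ψ.injective (h4 k hk _ hz')
      exact hf k z hz (this ▸ hz')
    have hcl : IsClosed (⋃ j, ⋃ _ : j ≠ k, K j) :=
      isClosed_iUnion_of_finite fun j => isClosed_iUnion_of_finite fun _ => (hK j).isClosed
    obtain ⟨U, o, c, s, w, g⟩ := exists_free_nhd (hK k) (hc k) hfk hcl.isOpen_compl (by
      intro z hz hz'
      simp only [mem_iUnion] at hz'
      obtain ⟨j, hj, hzj⟩ := hz'
      exact hd k j hj.symm z hz hzj)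
    obtain ⟨φ, g1, g2, g3⟩ := exists_push o c (s (ha k)) (s (hb k))
    have hφ : ∀ j, j ≠ k → ∀ z ∈ K j, φ z = z := fun j hj z hz =>
      g3 z fun hU => w hU (mem_iUnion₂.2 ⟨j, hj, hz⟩)
    refine ⟨ψ.trans φ, (show IsotopicToId (φ ∘ ψ) from IsotopicToId.comp' g1 h1),
      (fixfree_push h2 g g3 : ∀ z, ((h.trans ψ).trans φ) z ≠ z), fun i hi => ?_, fun i hi z hz => ?_⟩
    · rw [Homeomorph.trans_apply]
      rcases Finset.mem_insert.1 hi with rfl | hi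
      · rw [h4 _ hk _ (ha _), g2]
      · rw [h3 i hi]
        exact hφ i (fun e => hk (e ▸ hi)) _ (hb i)
    · rw [Finset.mem_insert, not_or] at hi
      rw [Homeomorph.trans_apply, h4 i hi.2 z hz, hφ i hi.1 z hz]

/-- A path for the transitive closure of `r`, as a finite sequence. -/
theorem exists_cycle {ι : Type*} {r : ι → ι → Prop} {i j : ι} (hij : Relation.TransGen r i j) :
    ∃ n, 1 ≤ n ∧ ∃ s : ℕ → ι, s 0 = i ∧ s n = j ∧ ∀ k < n, r (s k) (s (k + 1)) := by
  induction hij with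
  | single h =>
    rename_i c
    refine ⟨1, le_rfl, fun k => if k = 0 then i else c, by simp, by simp, fun k hk => ?_⟩
    obtain rfl : k = 0 := by omega
    simpa using h
  | tail _ h ih =>
    rename_i b c _
    obtain ⟨n, hn, s, h0, h1, h2⟩ := ih
    refine ⟨n + 1, by omega, fun k => if k ≤ n then s k else c, by simpa using h0, by simp,
      fun k hk => ?_⟩
    rcases (by omega : k < n ∨ k = n) with hk | rfl
    · simpa [hk.le, Nat.succ_le_of_lt hk] using h2 k hk
    · simpa [h1] using h

/-- The minimal cycle of a relation, indexed periodically, has no chords. -/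
theorem exists_min_cycle {ι : Type*} {r : ι → ι → Prop} {i : ι} (hi : Relation.TransGen r i i) :
    ∃ n, 1 ≤ n ∧ ∃ s : ℕ → ι, (∀ k, r (s k) (s (k + 1))) ∧ (∀ k, s (k % n) = s k) ∧
      (∀ i j, r (s i) (s j) → (i + 1) % n = j % n) ∧ ∀ i j, s i = s j → i % n = j % n := by
  classical
  have hex : ∃ n, 1 ≤ n ∧ ∃ s : ℕ → ι, s 0 = s n ∧ ∀ k < n, r (s k) (s (k + 1)) := by
    obtain ⟨n, hn, s, h0, h1, h2⟩ := exists_cycle hi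
    exact ⟨n, hn, s, h0.trans h1.symm, h2⟩
  obtain ⟨hn, t, ht, htr⟩ := Nat.find_spec hex
  have hmin := fun m (hm : m < Nat.find hex) => Nat.find_min hex hm
  set n := Nat.find hex
  have hs : ∀ k, r (t (k % n)) (t ((k + 1) % n)) := by
    intro k
    have hk : k % n < n := Nat.mod_lt _ (by omega)
    have h1 := htr (k % n) hk
    rcases (by omega : k % n + 1 < n ∨ k % n + 1 = n) with h2 | h2
    · rwa [← Nat.mod_add_mod, Nat.mod_eq_of_lt h2]
    · rw [h2, ← ht] at h1
      rwa [← Nat.mod_add_mod, h2, Nat.mod_self]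
  refine ⟨n, hn, fun k => t (k % n), hs, fun k => by simp, fun i j hij => ?_, fun i j hij => ?_⟩
  · by_contra hne
    -- `L` is the length of the arc of the cycle from `j` to `i`
    let L := (i + (n - j % n)) % n
    have hL : L < n := Nat.mod_lt _ (by omega)
    have hj : j % n < n := Nat.mod_lt _ (by omega)
    have hjL : (j + L) % n = i % n := by
      rw [Nat.add_mod_mod, ← Nat.mod_add_mod, show j % n + (i + (n - j % n)) = i + n by omega,
        Nat.add_mod_right]
    have hL' : L + 1 < n := by
      by_contra hcon
      apply hne
      have : L + 1 = n := by omega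
      rw [← Nat.mod_add_mod, ← hjL, Nat.mod_add_mod, add_assoc, this, Nat.add_mod_right]
    refine hmin (L + 1) hL' ⟨by omega, fun k => if k ≤ L then t ((j + k) % n) else t (j % n),
      by simp, fun k hk => ?_⟩
    rcases (by omega : k < L ∨ k = L) with hk | hk
    · simpa [hk.le, Nat.succ_le_of_lt hk, add_assoc] using hs (j + k)
    · rw [hk]
      simpa [hjL] using hij
  · by_contra hne
    let L := (i + (n - j % n)) % n
    have hL : L < n := Nat.mod_lt _ (by omega)
    have hj : j % n < n := Nat.mod_lt _ (by omega)
    have hjL : (j + L) % n = i % n := by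
      rw [Nat.add_mod_mod, ← Nat.mod_add_mod, show j % n + (i + (n - j % n)) = i + n by omega,
        Nat.add_mod_right]
    have hL0 : 1 ≤ L := by
      by_contra hcon
      have : L = 0 := by omega
      rw [this, add_zero] at hjL
      exact hne hjL.symm
    exact hmin L hL ⟨hL0, fun k => t ((j + k) % n), by simpa [hjL] using hij.symm,
      fun k _ => hs (j + k)⟩

/-- Two sets are related when the image of the first one meets the second one. -/
def Rel (h : ℂ ≃ₜ ℂ) {ι : Type*} (B : ι → Set ℂ) (i j : ι) : Prop := ∃ z ∈ B i, h z ∈ B j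

/-- A family of free sets, in each of which any two points are joined by a continuum that avoids
the other sets except possibly at its two ends, has no cycle for `Rel`: pushes along such continua
would close up a minimal cycle into a periodic orbit. -/
theorem acyclic {h : ℂ ≃ₜ ℂ} (hfree : ∀ z, h z ≠ z) (hor : IsotopicToId ⇑h) {ι : Type*}
    (B : ι → Set ℂ) (hf : ∀ i, Free h (B i))
    (hp : ∀ i, ∀ a ∈ B i, ∀ b ∈ B i, ∃ K, IsCompact K ∧ IsPreconnected K ∧ a ∈ K ∧ b ∈ K ∧
      K ⊆ B i ∧ ∀ z ∈ K, z ≠ a → z ≠ b → ∀ j, j ≠ i → z ∉ B j) (i : ι) :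
    ¬ Relation.TransGen (Rel h B) i i := by
  intro hi
  obtain ⟨n, hn, s, hs, hper, hA, hB⟩ := exists_min_cycle hi
  have hmod : ∀ k, (k + 1) % n = ((k % n) + 1) % n := fun k => by rw [Nat.mod_add_mod]
  choose z0 hz0 hz0' using hs
  let z : ℕ → ℂ := fun k => z0 (k % n)
  have hz : ∀ k, z k ∈ B (s k) := fun k => by rw [← hper k]; exact hz0 _
  have hz' : ∀ k, h (z k) ∈ B (s (k + 1)) := fun k => by
    rw [← hper (k + 1), hmod, hper]; exact hz0' _
  choose K k1 k2 k3 k4 k5 k6 using fun k => hp (s (k + 1)) _ (hz' k) _ (hz (k + 1))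
  have hd : ∀ i j : Fin n, i ≠ j → ∀ w ∈ K i, w ∉ K j := by
    intro i j hij w hwi hwj
    have hmodne : ((i : ℕ) + 1) % n ≠ ((j : ℕ) + 1) % n := by
      intro e
      have e' : (i : ℕ) ≡ j [MOD n] := Nat.ModEq.add_right_cancel' 1 e
      rw [Nat.ModEq, Nat.mod_eq_of_lt i.2, Nat.mod_eq_of_lt j.2] at e'
      exact hij (Fin.ext e')
    have hwB := k5 j hwj
    by_cases e1 : w = h (z i)
    · exact hmodne (hA _ _ ⟨z i, hz i, e1 ▸ hwB⟩)
    by_cases e2 : w = z (i + 1)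
    · have := hA (j + 1) (i + 1 + 1) ⟨z (i + 1), e2 ▸ hwB, hz' _⟩
      exact hmodne (Nat.ModEq.add_right_cancel' 1 this.symm)
    exact k6 i w hwi e1 e2 _ (fun e => hmodne (hB _ _ e).symm) hwB
  obtain ⟨ψ, p1, p2, p3, -⟩ := exists_multi_push hfree (fun i : Fin n => K i)
    (fun i => h (z i)) (fun i => z (i + 1)) (fun i => k1 i) (fun i => k2 i)
    (fun i w hw hw' => hf _ w (k5 _ hw) (k5 _ hw')) (fun i => k3 i) (fun i => k4 i) hd Finset.univ
  refine no_periodic n hn (h.trans ψ) p2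
    (show IsotopicToId (ψ ∘ h) from IsotopicToId.comp' p1 hor) (z 0) ?_
  have key : ∀ k, k ≤ n → (h.trans ψ)^[k] (z 0) = z k := by
    intro k
    induction k with
    | zero => intro _; rfl
    | succ k ih =>
      intro hk
      rw [Function.iterate_succ_apply', ih (by omega)]
      exact p3 ⟨k, hk⟩ (Finset.mem_univ _)
  rw [key n le_rfl]
  simp [z]

/-! ### The brick tiling of the plane -/

/-- The brick with index `c`: a rectangle of size `2 × 1`. Consecutive rows are shifted by one half
brick, so that at most three bricks meet at a point. -/
def cell (c : ℤ × ℤ) : Set ℂ :=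
  {z | 2 * c.1 + c.2 ≤ z.re ∧ z.re ≤ 2 * c.1 + c.2 + 2 ∧ c.2 ≤ z.im ∧ z.im ≤ c.2 + 1}

/-- The centre of a brick. -/
noncomputable def ctr (c : ℤ × ℤ) : ℂ := ⟨2 * c.1 + c.2 + 1, c.2 + 1 / 2⟩

/-- The union of a set of bricks. -/
def bricks (S : Set (ℤ × ℤ)) : Set ℂ := ⋃ c ∈ S, cell c

/-- Two bricks touch when they intersect; a brick touches itself. -/
def Touch (c d : ℤ × ℤ) : Prop := (cell c ∩ cell d).Nonempty

theorem Touch.symm {c d : ℤ × ℤ} (h : Touch c d) : Touch d c := by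
  rwa [Touch, inter_comm]

theorem mem_bricks {S : Set (ℤ × ℤ)} {z : ℂ} : z ∈ bricks S ↔ ∃ c ∈ S, z ∈ cell c := by
  simp [bricks]

theorem cell_subset_bricks {S : Set (ℤ × ℤ)} {c : ℤ × ℤ} (hc : c ∈ S) : cell c ⊆ bricks S :=
  fun _ hz => mem_bricks.2 ⟨c, hc, hz⟩

theorem bricks_mono {S T : Set (ℤ × ℤ)} (h : S ⊆ T) : bricks S ⊆ bricks T :=
  biUnion_subset_biUnion_left h

theorem mem_cell_add {c u : ℤ × ℤ} {w : ℂ} : ctr c + w ∈ cell (c + u) ↔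
    2 * (u.1 : ℝ) + u.2 - 1 ≤ w.re ∧ w.re ≤ 2 * u.1 + u.2 + 1 ∧ (u.2 : ℝ) - 1 / 2 ≤ w.im ∧
      w.im ≤ u.2 + 1 / 2 := by
  simp only [cell, ctr, mem_ofPred_eq, Prod.fst_add, Prod.snd_add, Int.cast_add, Complex.add_re,
    Complex.add_im]
  constructor <;> rintro ⟨h1, h2, h3, h4⟩ <;> refine ⟨?_, ?_, ?_, ?_⟩ <;> linarith

theorem ctr_add (c u : ℤ × ℤ) : ctr (c + u) = ctr c + ⟨2 * u.1 + u.2, u.2⟩ := by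
  apply Complex.ext <;> simp [ctr] <;> ring

theorem mem_cell' {c : ℤ × ℤ} {w : ℂ} : ctr c + w ∈ cell c ↔
    -1 ≤ w.re ∧ w.re ≤ 1 ∧ -(1 / 2) ≤ w.im ∧ w.im ≤ 1 / 2 := by
  have := mem_cell_add (c := c) (u := 0) (w := w)
  simpa using this

theorem ctr_mem (c : ℤ × ℤ) : ctr c ∈ cell c := by
  have := (mem_cell' (c := c) (w := 0)).2 (by norm_num)
  simpa using this

theorem exists_cell (z : ℂ) : ∃ c, z ∈ cell c := by
  refine ⟨(⌊(z.re - ⌊z.im⌋) / 2⌋, ⌊z.im⌋), ?_⟩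
  have h1 := Int.floor_le ((z.re - ⌊z.im⌋) / 2)
  have h2 := (Int.lt_floor_add_one ((z.re - ⌊z.im⌋) / 2)).le
  have h3 := Int.floor_le z.im
  have h4 := (Int.lt_floor_add_one z.im).le
  refine ⟨?_, ?_, h3, h4⟩ <;> dsimp only <;> linarith

theorem isClosed_cell (c : ℤ × ℤ) : IsClosed (cell c) :=
  (isClosed_le continuous_const Complex.continuous_re).inter
    ((isClosed_le Complex.continuous_re continuous_const).inter
      ((isClosed_le continuous_const Complex.continuous_im).inter
        (isClosed_le Complex.continuous_im continuous_const)))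

theorem convex_cell (c : ℤ × ℤ) : Convex ℝ (cell c) := by
  rintro z ⟨h1, h2, h3, h4⟩ w ⟨g1, g2, g3, g4⟩ a b ha hb hab
  obtain rfl : b = 1 - a := by linarith
  refine ⟨?_, ?_, ?_, ?_⟩ <;>
    simp only [Complex.add_re, Complex.add_im, Complex.real_smul, Complex.re_ofReal_mul,
      Complex.im_ofReal_mul] <;> nlinarith

theorem dist_le_of_mem_cell {c : ℤ × ℤ} {z w : ℂ} (hz : z ∈ cell c) (hw : w ∈ cell c) :
    ‖z - w‖ ≤ 3 := by
  obtain ⟨h1, h2, h3, h4⟩ := hz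
  obtain ⟨g1, g2, g3, g4⟩ := hw
  refine (Complex.norm_le_abs_re_add_abs_im _).trans ?_
  have e1 : |(z - w).re| ≤ 2 := by
    rw [Complex.sub_re, abs_le]; constructor <;> linarith
  have e2 : |(z - w).im| ≤ 1 := by
    rw [Complex.sub_im, abs_le]; constructor <;> linarith
  linarith

theorem isCompact_cell (c : ℤ × ℤ) : IsCompact (cell c) := by
  refine Metric.isCompact_of_isClosed_isBounded (isClosed_cell c)
    (Metric.isBounded_iff.2 ⟨3, fun z hz w hw => ?_⟩)
  rw [dist_eq_norm]
  exact dist_le_of_mem_cell hz hw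

theorem finite_cells_near (z : ℂ) (R : ℝ) : {c | (cell c ∩ Metric.ball z R).Nonempty}.Finite := by
  obtain ⟨N, hN⟩ := exists_nat_gt (|z.re| + |z.im| + |R| + 2)
  refine ((finite_Icc (-(2 * N : ℤ)) (2 * N)).prod (finite_Icc (-(2 * N : ℤ)) (2 * N))).subset ?_
  rintro ⟨a, b⟩ ⟨w, ⟨h1, h2, h3, h4⟩, hw⟩
  rw [Metric.mem_ball, dist_eq_norm] at hw
  have e1 := abs_le.1 ((Complex.abs_re_le_norm (w - z)).trans (hw.le.trans (le_abs_self R)))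
  have e2 := abs_le.1 ((Complex.abs_im_le_norm (w - z)).trans (hw.le.trans (le_abs_self R)))
  have e3 := neg_abs_le z.re
  have e4 := neg_abs_le z.im
  have e5 := le_abs_self z.re
  have e6 := le_abs_self z.im
  have e7 := abs_nonneg R
  have e8 := abs_nonneg z.re
  have e9 := abs_nonneg z.im
  simp only [Complex.sub_re, Complex.sub_im] at e1 e2
  dsimp only at h1 h2 h3 h4
  have f1 : ((2 * a + b : ℤ) : ℝ) < (N : ℤ) := by push_cast; linarith
  have f2 : ((-N : ℤ) : ℝ) < (2 * a + b : ℤ) := by push_cast; linarith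
  have f3 : (b : ℝ) < (N : ℤ) := by push_cast; linarith
  have f4 : ((-N : ℤ) : ℝ) < b := by push_cast; linarith
  rw [Int.cast_lt] at f1 f2 f3 f4
  refine ⟨⟨?_, ?_⟩, ⟨?_, ?_⟩⟩ <;> dsimp only <;> omega

theorem locallyFinite_cell : LocallyFinite cell := fun z =>
  ⟨Metric.ball z 1, Metric.ball_mem_nhds z one_pos, finite_cells_near z 1⟩

theorem isClosed_bricks (S : Set (ℤ × ℤ)) : IsClosed (bricks S) := by
  rw [bricks, biUnion_eq_iUnion]
  exact (locallyFinite_cell.comp_injective Subtype.val_injective).isClosed_iUnion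
    fun c => isClosed_cell c

theorem bricks_union_compl (S : Set (ℤ × ℤ)) (z : ℂ) : z ∈ bricks S ∨ z ∈ bricks Sᶜ := by
  obtain ⟨c, hc⟩ := exists_cell z
  by_cases h : c ∈ S
  · exact Or.inl (cell_subset_bricks h hc)
  · exact Or.inr (cell_subset_bricks h hc)

/-- A nonempty set of bricks stable under touching is everything. -/
theorem eq_univ_of_touch {S : Set (ℤ × ℤ)} (hne : S.Nonempty)
    (hS : ∀ c ∈ S, ∀ d, Touch c d → d ∈ S) : S = univ := by
  by_contra hcon
  obtain ⟨e, he⟩ := (ne_univ_iff_exists_notMem S).1 hcon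
  obtain ⟨c, hc⟩ := hne
  obtain ⟨z, -, hz1, hz2⟩ := isPreconnected_closed_iff.1 isPreconnected_univ _ _
    (isClosed_bricks S) (isClosed_bricks Sᶜ) (fun z _ => bricks_union_compl S z)
    ⟨ctr c, trivial, cell_subset_bricks hc (ctr_mem c)⟩
    ⟨ctr e, trivial, cell_subset_bricks he (ctr_mem e)⟩
  obtain ⟨c', h1, h2⟩ := mem_bricks.1 hz1
  obtain ⟨d', h3, h4⟩ := mem_bricks.1 hz2
  exact h3 (hS c' h1 d' ⟨z, h2, h4⟩)

/-- Chains of touching bricks inside `S`. -/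
def Chain (S : Set (ℤ × ℤ)) : ℤ × ℤ → ℤ × ℤ → Prop :=
  Relation.ReflTransGen fun c d => d ∈ S ∧ Touch c d

/-- Any two bricks of `S` are joined by a chain of touching bricks in `S`. -/
def TouchConn (S : Set (ℤ × ℤ)) : Prop := ∀ c ∈ S, ∀ d ∈ S, Chain S c d

theorem Chain.exists_preconnected {S : Set (ℤ × ℤ)} {c d : ℤ × ℤ} (hc : c ∈ S) (h : Chain S c d) :
    ∃ Y, IsPreconnected Y ∧ cell c ⊆ Y ∧ cell d ⊆ Y ∧ Y ⊆ bricks S := by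
  induction h with
  | refl => exact ⟨cell c, (convex_cell c).isPreconnected, subset_rfl, subset_rfl,
      cell_subset_bricks hc⟩
  | tail _ h ih =>
    obtain ⟨Y, h1, h2, h3, h4⟩ := ih
    obtain ⟨hd, z, hz, hz'⟩ := h
    exact ⟨_, h1.union z (h3 hz) hz' (convex_cell _).isPreconnected, h2.trans subset_union_left,
      subset_union_right, union_subset h4 (cell_subset_bricks hd)⟩

theorem TouchConn.isPreconnected {S : Set (ℤ × ℤ)} (h : TouchConn S) :
    IsPreconnected (bricks S) := by
  refine isPreconnected_of_forall_pair fun x hx y hy => ?_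
  obtain ⟨c, hc, hxc⟩ := mem_bricks.1 hx
  obtain ⟨d, hd, hyd⟩ := mem_bricks.1 hy
  obtain ⟨Y, h1, h2, h3, h4⟩ := (h c hc d hd).exists_preconnected hc
  exact ⟨Y, h4, h2 hxc, h3 hyd, h1⟩

/-- Bricks that all meet a connected set covered by them form a touch-connected set. -/
theorem touchConn_of_preconnected {S : Set (ℤ × ℤ)} {X : Set ℂ} (hX : IsPreconnected X)
    (hXS : X ⊆ bricks S) (hS : ∀ c ∈ S, (cell c ∩ X).Nonempty) : TouchConn S := by
  intro c hc d hd
  by_contra hcd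
  let T : Set (ℤ × ℤ) := {e | e ∈ S ∧ Chain S c e}
  obtain ⟨x, hx, hx'⟩ := hS c hc
  obtain ⟨y, hy, hy'⟩ := hS d hd
  obtain ⟨z, -, hz1, hz2⟩ := isPreconnected_closed_iff.1 hX _ _
    (isClosed_bricks T) (isClosed_bricks (S \ T)) (fun z hz => by
      obtain ⟨e, he, hze⟩ := mem_bricks.1 (hXS hz)
      by_cases h : e ∈ T
      · exact Or.inl (cell_subset_bricks h hze)
      · exact Or.inr (cell_subset_bricks (show e ∈ S \ T from ⟨he, h⟩) hze))
    ⟨x, hx', cell_subset_bricks (show c ∈ T from ⟨hc, .refl⟩) hx⟩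
    ⟨y, hy', cell_subset_bricks (show d ∈ S \ T from ⟨hd, fun h => hcd h.2⟩) hy⟩
  obtain ⟨c', h1, h2⟩ := mem_bricks.1 hz1
  obtain ⟨d', h3, h4⟩ := mem_bricks.1 hz2
  exact h3.2 ⟨h3.1, h1.2.tail ⟨h3.1, z, h2, h4⟩⟩

theorem Touch.offset {c u : ℤ × ℤ} (h : Touch c (c + u)) :
    -1 ≤ u.2 ∧ u.2 ≤ 1 ∧ -2 ≤ 2 * u.1 + u.2 ∧ 2 * u.1 + u.2 ≤ 2 := by
  obtain ⟨z, hz1, hz2⟩ := h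
  obtain ⟨w, rfl⟩ : ∃ w, z = ctr c + w := ⟨z - ctr c, by ring⟩
  obtain ⟨h1, h2, h3, h4⟩ := mem_cell'.1 hz1
  obtain ⟨g1, g2, g3, g4⟩ := mem_cell_add.1 hz2
  have f1 : ((2 * u.1 + u.2 : ℤ) : ℝ) ≤ (2 : ℤ) := by push_cast; linarith
  have f2 : ((-2 : ℤ) : ℝ) ≤ (2 * u.1 + u.2 : ℤ) := by push_cast; linarith
  have f3 : (u.2 : ℝ) ≤ (1 : ℤ) := by push_cast; linarith
  have f4 : ((-1 : ℤ) : ℝ) ≤ u.2 := by push_cast; linarith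
  exact ⟨Int.cast_le.1 f4, Int.cast_le.1 f3, Int.cast_le.1 f2, Int.cast_le.1 f1⟩

theorem exists_eq_ctr_add (z : ℂ) (c : ℤ × ℤ) : ∃ w, z = ctr c + w := ⟨z - ctr c, by ring⟩

theorem exists_eq_add (c d : ℤ × ℤ) : ∃ u, d = c + u := ⟨d - c, by simp⟩

/-- The segment between the centres of two touching bricks meets only these two bricks. -/
theorem segment_ctr {c d : ℤ × ℤ} (h : Touch c d) {z : ℂ} (hz : z ∈ segment ℝ (ctr c) (ctr d)) :
    (z ∈ cell c ∨ z ∈ cell d) ∧ ∀ e, z ∈ cell e → e = c ∨ e = d := by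
  obtain ⟨u, rfl⟩ := exists_eq_add c d
  obtain ⟨h1, h2, h3, h4⟩ := h.offset
  rw [segment_eq_image'] at hz
  obtain ⟨t, ⟨ht0, ht1⟩, rfl⟩ := hz
  have e : ctr c + t • (ctr (c + u) - ctr c) = ctr c + ⟨t * (2 * u.1 + u.2), t * u.2⟩ := by
    rw [ctr_add]
    apply Complex.ext <;> simp
  dsimp only
  rw [e]
  obtain ⟨p, q⟩ := u
  dsimp only at *
  have hp1 : -1 ≤ p := by omega
  have hp2 : p ≤ 1 := by omega
  constructor
  · rw [mem_cell', mem_cell_add]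
    dsimp only
    rcases le_total t (1 / 2) with ht | ht
    · left
      interval_cases q <;> interval_cases p <;> first
        | omega
        | refine ⟨?_, ?_, ?_, ?_⟩ <;> norm_num <;> linarith
    · right
      interval_cases q <;> interval_cases p <;> first
        | omega
        | refine ⟨?_, ?_, ?_, ?_⟩ <;> norm_num <;> linarith
  · intro e he
    obtain ⟨⟨p', q'⟩, rfl⟩ := exists_eq_add c e
    rw [mem_cell_add] at he
    obtain ⟨k1, k2, k3, k4⟩ := he
    dsimp only at k1 k2 k3 k4
    have b1 : (-2 : ℝ) ≤ t * (2 * p + q) ∧ t * (2 * p + q) ≤ 2 ∧ (-1 : ℝ) ≤ t * q ∧ t * q ≤ 1 := by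
      interval_cases q <;> interval_cases p <;> first
        | omega
        | refine ⟨?_, ?_, ?_, ?_⟩ <;> norm_num <;> linarith
    obtain ⟨b1, b2, b3, b4⟩ := b1
    have f1 : ((2 * p' + q' : ℤ) : ℝ) < (4 : ℤ) := by push_cast; linarith
    have f2 : ((-4 : ℤ) : ℝ) < (2 * p' + q' : ℤ) := by push_cast; linarith
    have f3 : (q' : ℝ) < (2 : ℤ) := by push_cast; linarith
    have f4 : ((-2 : ℤ) : ℝ) < q' := by push_cast; linarith
    rw [Int.cast_lt] at f1 f2 f3 f4
    clear b1 b2 b3 b4 h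
    have hp3 : -2 ≤ p' := by omega
    have hp4 : p' ≤ 2 := by omega
    have hq3 : -1 ≤ q' := by omega
    have hq4 : q' ≤ 1 := by omega
    suffices hs : (p' = 0 ∧ q' = 0) ∨ (p' = p ∧ q' = q) by
      rcases hs with ⟨rfl, rfl⟩ | ⟨rfl, rfl⟩
      · exact Or.inl (add_zero c)
      · exact Or.inr rfl
    interval_cases q <;> interval_cases p <;> first
      | omega
      | interval_cases q' <;> interval_cases p' <;> first
        | omega
        | (exfalso; push_cast at k1 k2 k3 k4; linarith)

/-- A point of the segment from a point `a` of a brick to the centre of this brick lies in no other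
brick, unless it is `a`. -/
theorem segment_to_ctr {c : ℤ × ℤ} {a : ℂ} (ha : a ∈ cell c) {z : ℂ}
    (hz : z ∈ segment ℝ a (ctr c)) :
    z ∈ cell c ∧ (z ≠ a → ∀ e, z ∈ cell e → e = c) := by
  refine ⟨(convex_cell c).segment_subset ha (ctr_mem c) hz, fun hne e he => ?_⟩
  rw [segment_symm, segment_eq_image'] at hz
  obtain ⟨t, ⟨ht0, ht1⟩, rfl⟩ := hz
  have ht : t < 1 := lt_of_le_of_ne ht1 fun h => hne (by simp [h])
  obtain ⟨w, rfl⟩ := exists_eq_ctr_add a c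
  obtain ⟨⟨p', q'⟩, rfl⟩ := exists_eq_add c e
  obtain ⟨h1, h2, h3, h4⟩ := mem_cell'.1 ha
  have e : ctr c + t • (ctr c + w - ctr c) = ctr c + ⟨t * w.re, t * w.im⟩ := by
    apply Complex.ext <;> simp
  dsimp only at he
  rw [e, mem_cell_add] at he
  obtain ⟨k1, k2, k3, k4⟩ := he
  dsimp only at k1 k2 k3 k4
  have b1 : t * w.re < 1 := by nlinarith
  have b2 : -1 < t * w.re := by nlinarith
  have b3 : t * w.im < 1 / 2 := by nlinarith
  have b4 : -(1 / 2) < t * w.im := by nlinarith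
  have f1 : ((2 * p' + q' : ℤ) : ℝ) < (2 : ℤ) := by push_cast; linarith
  have f2 : ((-2 : ℤ) : ℝ) < (2 * p' + q' : ℤ) := by push_cast; linarith
  have f3 : (q' : ℝ) < (1 : ℤ) := by push_cast; linarith
  have f4 : ((-1 : ℤ) : ℝ) < q' := by push_cast; linarith
  rw [Int.cast_lt] at f1 f2 f3 f4
  obtain rfl : q' = 0 := by omega
  obtain rfl : p' = 0 := by omega
  exact add_zero c

/-- Any two points of a touch-connected union of bricks are joined by a continuum which, except
possibly at its ends, avoids all the other bricks. -/
theorem exists_path {S : Set (ℤ × ℤ)} (hS : TouchConn S) {a b : ℂ} (ha : a ∈ bricks S)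
    (hb : b ∈ bricks S) : ∃ K, IsCompact K ∧ IsPreconnected K ∧ a ∈ K ∧ b ∈ K ∧ K ⊆ bricks S ∧
      ∀ z ∈ K, z ≠ a → z ≠ b → ∀ e, z ∈ cell e → e ∈ S := by
  obtain ⟨c, hc, hac⟩ := mem_bricks.1 ha
  obtain ⟨d, hd, hbd⟩ := mem_bricks.1 hb
  have hK : ∃ K, IsCompact K ∧ IsPreconnected K ∧ ctr c ∈ K ∧ ctr d ∈ K ∧ K ⊆ bricks S ∧
      ∀ z ∈ K, ∀ e, z ∈ cell e → e ∈ S := by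
    have hcd := hS c hc d hd
    clear hd hbd
    suffices d ∈ S ∧ ∃ K, IsCompact K ∧ IsPreconnected K ∧ ctr c ∈ K ∧ ctr d ∈ K ∧ K ⊆ bricks S ∧
      ∀ z ∈ K, ∀ e, z ∈ cell e → e ∈ S from this.2
    induction hcd with
    | refl =>
      refine ⟨hc, {ctr c}, isCompact_singleton, isPreconnected_singleton, rfl, rfl, ?_, ?_⟩
      · rintro _ rfl
        exact cell_subset_bricks hc (ctr_mem c)
      · rintro _ rfl e he
        by_contra hne
        rcases (segment_ctr ⟨_, ctr_mem c, ctr_mem c⟩ (left_mem_segment ℝ _ _)).2 e he with h | h <;>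
          exact hne (h ▸ hc)
    | tail _ h ih =>
      obtain ⟨hd, K, k1, k2, k3, k4, k5, k6⟩ := ih
      obtain ⟨hd', ht⟩ := h
      refine ⟨hd', K ∪ segment ℝ _ _, k1.union (isCompact_segment _ _),
        k2.union _ k4 (left_mem_segment ℝ _ _) (isPreconnected_segment _ _), Or.inl k3,
        Or.inr (right_mem_segment ℝ _ _), ?_, ?_⟩
      · rintro z (hz | hz)
        · exact k5 hz
        · rcases (segment_ctr ht hz).1 with h | h
          · exact cell_subset_bricks hd h
          · exact cell_subset_bricks hd' h
      · rintro z (hz | hz) e he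
        · exact k6 z hz e he
        · rcases (segment_ctr ht hz).2 e he with rfl | rfl <;> assumption
  obtain ⟨K, k1, k2, k3, k4, k5, k6⟩ := hK
  refine ⟨(K ∪ segment ℝ a (ctr c)) ∪ segment ℝ b (ctr d),
    (k1.union (isCompact_segment _ _)).union (isCompact_segment _ _),
    (k2.union _ k3 (right_mem_segment ℝ _ _) (isPreconnected_segment _ _)).union _ (Or.inl k4)
      (right_mem_segment ℝ _ _) (isPreconnected_segment _ _),
    Or.inl (Or.inr (left_mem_segment ℝ _ _)), Or.inr (left_mem_segment ℝ _ _), ?_, ?_⟩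
  · rintro z ((hz | hz) | hz)
    · exact k5 hz
    · exact cell_subset_bricks hc (segment_to_ctr hac hz).1
    · exact cell_subset_bricks hd (segment_to_ctr hbd hz).1
  · rintro z ((hz | hz) | hz) hza hzb e he
    · exact k6 z hz e he
    · exact (segment_to_ctr hac hz).2 hza e he ▸ hc
    · exact (segment_to_ctr hbd hz).2 hzb e he ▸ hd

/-! ### Boundaries of brick sets -/

/-- The six bricks around the brick `0`, in counterclockwise order. -/
def dir : Fin 6 → ℤ × ℤ := ![(1, 0), (0, 1), (-1, 1), (-1, 0), (0, -1), (1, -1)]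

/-- The six vertices of the brick centred at the origin, in counterclockwise order: `corner k` is
shared with the neighbours `dir k` and `dir (k + 1)`. -/
noncomputable def corner : Fin 6 → ℂ :=
  ![⟨1, 1 / 2⟩, ⟨0, 1 / 2⟩, ⟨-1, 1 / 2⟩, ⟨-1, -1 / 2⟩, ⟨0, -1 / 2⟩, ⟨1, -1 / 2⟩]

/-- A dart is a brick together with one of its six edges; `pt D s` runs through this edge
counterclockwise around the brick. -/
noncomputable def pt (D : (ℤ × ℤ) × Fin 6) (s : ℝ) : ℂ :=
  ctr D.1 + ((1 - s : ℝ) * corner (D.2 - 1) + s * corner D.2)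

theorem pt_mem (c : ℤ × ℤ) (k : Fin 6) {s : ℝ} (h0 : 0 ≤ s) (h1 : s ≤ 1) :
    pt (c, k) s ∈ cell c ∧ pt (c, k) s ∈ cell (c + dir k) := by
  rw [pt, mem_cell', mem_cell_add]
  fin_cases k <;> refine ⟨⟨?_, ?_, ?_, ?_⟩, ?_, ?_, ?_, ?_⟩ <;> simp [corner, dir] <;> linarith

theorem exists_pt {c : ℤ × ℤ} {k : Fin 6} {z : ℂ} (h1 : z ∈ cell c) (h2 : z ∈ cell (c + dir k)) :
    ∃ s : ℝ, 0 ≤ s ∧ s ≤ 1 ∧ z = pt (c, k) s := by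
  obtain ⟨w, rfl⟩ := exists_eq_ctr_add z c
  obtain ⟨g1, g2, g3, g4⟩ := mem_cell_add.1 h2
  obtain ⟨h1, h2, h3, h4⟩ := mem_cell'.1 h1
  have key : ∀ s : ℝ, w = (1 - s : ℝ) * corner (k - 1) + s * corner k → ctr c + w = pt (c, k) s := by
    rintro s rfl
    rfl
  fin_cases k <;> simp [dir] at g1 g2 g3 g4
  · refine ⟨w.im + 1 / 2, by linarith, by linarith, key _ (Complex.ext ?_ ?_)⟩ <;>
      simp [corner] <;> linarith
  · refine ⟨1 - w.re, by linarith, by linarith, key _ (Complex.ext ?_ ?_)⟩ <;>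
      simp [corner] <;> linarith
  · refine ⟨-w.re, by linarith, by linarith, key _ (Complex.ext ?_ ?_)⟩ <;>
      simp [corner] <;> linarith
  · refine ⟨1 / 2 - w.im, by linarith, by linarith, key _ (Complex.ext ?_ ?_)⟩ <;>
      simp [corner] <;> linarith
  · refine ⟨1 + w.re, by linarith, by linarith, key _ (Complex.ext ?_ ?_)⟩ <;>
      simp [corner] <;> linarith
  · refine ⟨w.re, by linarith, by linarith, key _ (Complex.ext ?_ ?_)⟩ <;>
      simp [corner] <;> linarith

/-- The interior of an edge meets only the two bricks on its sides, and its origin only one more. -/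
theorem pt_cells {c : ℤ × ℤ} {k : Fin 6} {s : ℝ} (h0 : 0 ≤ s) (h1 : s < 1) {e : ℤ × ℤ}
    (he : pt (c, k) s ∈ cell e) :
    e = c ∨ e = c + dir k ∨ (s = 0 ∧ e = c + dir (k - 1)) := by
  obtain ⟨⟨p, q⟩, rfl⟩ := exists_eq_add c e
  have hc := (pt_mem c k h0 h1.le).1
  rw [pt, mem_cell_add] at he
  rw [pt, mem_cell'] at hc
  obtain ⟨k1, k2, k3, k4⟩ := he
  obtain ⟨l1, l2, l3, l4⟩ := hc
  dsimp only at k1 k2 k3 k4 l1 l2 l3 l4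
  have f1 : ((2 * p + q : ℤ) : ℝ) ≤ (2 : ℤ) := by push_cast; linarith
  have f2 : ((-2 : ℤ) : ℝ) ≤ (2 * p + q : ℤ) := by push_cast; linarith
  have f3 : (q : ℝ) ≤ (1 : ℤ) := by push_cast; linarith
  have f4 : ((-1 : ℤ) : ℝ) ≤ q := by push_cast; linarith
  rw [Int.cast_le] at f1 f2 f3 f4
  have hp1 : -1 ≤ p := by omega
  have hp2 : p ≤ 1 := by omega
  clear l1 l2 l3 l4
  suffices hs : (p, q) = 0 ∨ (p, q) = dir k ∨ (s = 0 ∧ (p, q) = dir (k - 1)) by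
    rcases hs with h | h | ⟨rfl, h⟩ <;> simp [h]
  fin_cases k <;> simp [corner] at k1 k2 k3 k4 <;> interval_cases q <;> interval_cases p <;> first
    | omega
    | exact Or.inl rfl
    | exact Or.inr (Or.inl rfl)
    | exact Or.inr (Or.inr ⟨by push_cast at k1 k2 k3 k4; linarith, rfl⟩)
    | (exfalso; push_cast at k1 k2 k3 k4; linarith)

theorem pt_zero_mem (c : ℤ × ℤ) (k : Fin 6) : pt (c, k) 0 ∈ cell (c + dir (k - 1)) := by
  rw [pt, mem_cell_add]
  fin_cases k <;> refine ⟨?_, ?_, ?_, ?_⟩ <;> simp [corner, dir] <;> linarith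

theorem exists_dir {c d : ℤ × ℤ} (h : Touch c d) (hne : c ≠ d) : ∃ k, d = c + dir k := by
  obtain ⟨⟨p, q⟩, rfl⟩ := exists_eq_add c d
  obtain ⟨h1, h2, h3, h4⟩ := h.offset
  dsimp only at h1 h2 h3 h4
  have h5 : -1 ≤ p := by omega
  have h6 : p ≤ 1 := by omega
  suffices hs : ∃ k, (p, q) = dir k by
    obtain ⟨k, hk⟩ := hs
    exact ⟨k, by rw [hk]⟩
  interval_cases q <;> interval_cases p <;> first
    | omega
    | decide
    | exact absurd (add_zero c).symm hne

/-- The successor of a dart on the boundary of `Q`, keeping `Q` on the left. At the end of the dart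
three bricks meet: the two sides of the dart and the brick `D.1 + dir (D.2 + 1)`. -/
noncomputable def next (Q : Set (ℤ × ℤ)) (D : (ℤ × ℤ) × Fin 6) : (ℤ × ℤ) × Fin 6 := by
  classical
  exact if D.1 + dir (D.2 + 1) ∈ Q then (D.1 + dir (D.2 + 1), D.2 - 1) else (D.1, D.2 + 1)

theorem dir_add (k : Fin 6) : dir (k + 1) + dir (k - 1) = dir k := by
  revert k; decide

theorem dir_add_three (k : Fin 6) : dir (k + 1) + dir (k - 2) = 0 := by
  revert k; decide

theorem dir_add_three' (k : Fin 6) : dir (k - 1) + dir (k + 2) = 0 := by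
  revert k; decide

theorem dir_ne_zero (k : Fin 6) : dir k ≠ 0 := by
  revert k; decide

theorem dir_injective : Function.Injective dir := by
  intro a b; revert a b; decide

theorem dir_sum_ne (k : Fin 6) : dir (k - 1) + dir k ≠ 0 ∧ dir (k - 1) + dir k ≠ dir k ∧
    dir (k - 1) + dir k ≠ dir (k - 1) := by
  revert k; decide

section

/-- The darts on the boundary of `Q`, oriented with `Q` on the left. -/
def Dart (Q : Set (ℤ × ℤ)) (D : (ℤ × ℤ) × Fin 6) : Prop := D.1 ∈ Q ∧ D.1 + dir D.2 ∉ Q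

/-- The predecessor of a dart on the boundary of `Q`. -/
noncomputable def prev (Q : Set (ℤ × ℤ)) (D : (ℤ × ℤ) × Fin 6) : (ℤ × ℤ) × Fin 6 := by
  classical
  exact if D.1 + dir (D.2 - 1) ∈ Q then (D.1 + dir (D.2 - 1), D.2 + 1) else (D.1, D.2 - 1)

variable {Q : Set (ℤ × ℤ)} {D D' : (ℤ × ℤ) × Fin 6}

theorem next_dart (h : Dart Q D) : Dart Q (next Q D) := by
  rw [next]
  split_ifs with h1
  · refine ⟨h1, ?_⟩
    dsimp only
    rw [add_assoc, dir_add]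
    exact h.2
  · exact ⟨h.1, h1⟩

theorem prev_dart (h : Dart Q D) : Dart Q (prev Q D) := by
  rw [prev]
  split_ifs with h1
  · refine ⟨h1, ?_⟩
    dsimp only
    rw [add_assoc, add_comm (dir _), dir_add]
    exact h.2
  · exact ⟨h.1, h1⟩

theorem prev_next (h : Dart Q D) : prev Q (next Q D) = D := by
  obtain ⟨c, k⟩ := D
  rw [next]
  split_ifs with h1
  · have e : c + dir (k + 1) + dir (k - 1 - 1) = c := by
      rw [add_assoc, (by decide : ∀ k : Fin 6, k - 1 - 1 = k - 2) k, dir_add_three, add_zero]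
    rw [prev]
    dsimp only
    rw [if_pos (by rw [e]; exact h.1), e, sub_add_cancel]
  · rw [prev]
    dsimp only
    rw [add_sub_cancel_right, if_neg h.2]

theorem next_prev (h : Dart Q D) : next Q (prev Q D) = D := by
  obtain ⟨c, k⟩ := D
  rw [prev]
  split_ifs with h1
  · have e : c + dir (k - 1) + dir (k + 1 + 1) = c := by
      rw [add_assoc, (by decide : ∀ k : Fin 6, k + 1 + 1 = k + 2) k, dir_add_three', add_zero]
    rw [next]
    dsimp only
    rw [if_pos (by rw [e]; exact h.1), e, add_sub_cancel_right]
  · rw [next]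
    dsimp only
    rw [sub_add_cancel, if_neg h.2]

/-- The successor map, as a permutation of the boundary darts. -/
noncomputable def nextPerm (Q : Set (ℤ × ℤ)) : Equiv.Perm {D // Dart Q D} where
  toFun D := ⟨next Q D, next_dart D.2⟩
  invFun D := ⟨prev Q D, prev_dart D.2⟩
  left_inv D := Subtype.ext (prev_next D.2)
  right_inv D := Subtype.ext (next_prev D.2)

theorem pt_next (D : (ℤ × ℤ) × Fin 6) : pt (next Q D) 0 = pt D 1 := by
  obtain ⟨c, k⟩ := D
  rw [next]
  split_ifs with h1
  · simp only [pt, ctr_add, add_assoc]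
    congr 1
    rw [(by decide : ∀ k : Fin 6, k - 1 - 1 = k + 4) k]
    fin_cases k <;> apply Complex.ext <;> simp [corner, dir] <;> norm_num
  · simp [pt]

theorem pt_injective (D : (ℤ × ℤ) × Fin 6) : Function.Injective (pt D) := by
  obtain ⟨c, k⟩ := D
  intro s s' h
  simp only [pt, add_right_inj] at h
  have h1 := congrArg Complex.re h
  have h2 := congrArg Complex.im h
  fin_cases k <;> simp [corner] at h1 h2 <;> linarith

/-- Half-open boundary edges are disjoint, so that the boundary of `Q` has no branch point. -/
theorem dart_eq (hD : Dart Q D) (hD' : Dart Q D') {s s' : ℝ} (h0 : 0 ≤ s) (h1 : s < 1)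
    (h0' : 0 ≤ s') (h1' : s' < 1) (h : pt D s = pt D' s') : D = D' := by
  obtain ⟨c, k⟩ := D
  obtain ⟨c', k'⟩ := D'
  wlog hss : s = 0 → s' = 0 generalizing c k c' k' s s'
  · push Not at hss
    exact (this (s := s') (s' := s) h0' h1' h0 h1 c' k' hD' c k hD h.symm
      fun e => absurd e hss.2).symm
  obtain ⟨m1, m2⟩ := pt_mem c' k' h0' h1'.le
  rw [← h] at m1 m2
  have hD1 := hD.1
  have hD2 := hD.2
  have hD1' := hD'.1
  have hD2' := hD'.2
  dsimp only at hD1 hD2 hD1' hD2'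
  have conc : c' = c → c' + dir k' = c + dir k → (c, k) = (c', k') := by
    rintro rfl h2
    rw [dir_injective (add_left_cancel h2)]
  rcases pt_cells h0 h1 m1 with a1 | a1 | ⟨hs, a1⟩
  · rcases pt_cells h0 h1 m2 with a2 | a2 | ⟨hs, a2⟩
    · exact absurd (a2 ▸ hD1) hD2'
    · exact conc a1 a2
    · obtain rfl := hss hs
      have m3 := pt_zero_mem c' k'
      rw [← h] at m3
      obtain rfl : k' = k - 1 := dir_injective (add_left_cancel (a1 ▸ a2))
      rw [a1] at m3
      rcases pt_cells h0 h1 m3 with b | b | ⟨-, b⟩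
      · exact absurd (left_eq_add.1 b.symm) (dir_ne_zero _)
      · exact absurd (dir_injective (add_left_cancel b)) ((by decide : ∀ k : Fin 6, k - 1 - 1 ≠ k) k)
      · exact absurd (dir_injective (add_left_cancel b))
          ((by decide : ∀ k : Fin 6, k - 1 - 1 ≠ k - 1) k)
  · exact absurd (a1 ▸ hD1') hD2
  · obtain rfl := hss hs
    have m3 := pt_zero_mem c' k'
    rw [← h] at m3
    subst a1
    rcases pt_cells h0 h1 m2 with a2 | a2 | ⟨-, a2⟩
    · exact absurd (show c + dir (k - 1) + dir k' ∈ Q by rw [a2]; exact hD1) hD2'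
    · have hk : dir k' = dir (k + 1) := by
        rw [add_assoc] at a2
        have := add_left_cancel a2
        rw [← dir_add k, add_comm (dir (k + 1))] at this
        exact add_left_cancel this
      obtain rfl := dir_injective hk
      rw [add_sub_cancel_right, add_assoc] at m3
      obtain ⟨n1, n2, n3⟩ := dir_sum_ne k
      rcases pt_cells h0 h1 m3 with b | b | ⟨-, b⟩
      · exact absurd (left_eq_add.1 b.symm) n1
      · exact absurd (add_left_cancel b) n2
      · exact absurd (add_left_cancel b) n3
    · exact absurd (left_eq_add.1 a2.symm) (dir_ne_zero _)

end

/-! ### Connected boundaries are lines -/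

/-- The exterior of a disc is the image of a half-plane under the exponential function. -/
theorem isPreconnected_norm_gt {R : ℝ} (hR : 0 < R) : IsPreconnected {z : ℂ | R < ‖z‖} := by
  have e : {z : ℂ | R < ‖z‖} = Complex.exp '' {w : ℂ | Real.log R < w.re} := by
    ext z
    constructor
    · intro hz
      have hz : R < ‖z‖ := hz
      have h0 : z ≠ 0 := norm_pos_iff.1 (hR.trans hz)
      refine ⟨Complex.log z, ?_, Complex.exp_log h0⟩
      rw [mem_ofPred_eq, Complex.log_re]
      exact Real.log_lt_log hR hz
    · rintro ⟨w, hw, rfl⟩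
      rw [mem_ofPred_eq, Complex.norm_exp]
      exact (Real.log_lt_iff_lt_exp hR).1 hw
  rw [e]
  exact (convex_halfSpace_re_gt _).isPreconnected.image _ Complex.continuous_exp.continuousOn

/-- If the common boundary is bounded then, the exterior of a large disc being connected, one of the
two sides is bounded. -/
theorem bounded_of_bounded_inter {Q : Set (ℤ × ℤ)}
    (h : Bornology.IsBounded (bricks Q ∩ bricks Qᶜ)) :
    Bornology.IsBounded (bricks Q) ∨ Bornology.IsBounded (bricks Qᶜ) := by
  obtain ⟨R, hR0, hR⟩ := h.subset_closedBall_lt 0 0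
  have hb : ∀ S : Set ℂ, {z : ℂ | R < ‖z‖} ⊆ Sᶜ → Bornology.IsBounded S := by
    intro S hS
    refine (Metric.isBounded_closedBall (x := (0 : ℂ)) (r := R)).subset fun z hz => ?_
    rw [mem_closedBall_zero_iff]
    by_contra hcon
    exact hS (not_le.1 hcon) hz
  rcases (isPreconnected_norm_gt hR0).subset_or_subset (isClosed_bricks Q).isOpen_compl
    (isClosed_bricks Qᶜ).isOpen_compl
    (Set.disjoint_left.2 fun z h1 h2 => (bricks_union_compl Q z).elim h1 h2)
    (fun z hz => by
      by_contra hcon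
      simp only [mem_union, mem_compl_iff, not_or, not_not] at hcon
      exact absurd (mem_closedBall_zero_iff.1 (hR hcon)) (not_le.2 hz)) with h1 | h1
  · exact Or.inl (hb _ h1)
  · exact Or.inr (hb _ h1)

/-- The edges of a set of darts. -/
def edges (S : Set ((ℤ × ℤ) × Fin 6)) : Set ℂ := ⋃ D ∈ S, pt D '' Icc 0 1

theorem continuous_pt (D : (ℤ × ℤ) × Fin 6) : Continuous (pt D) := by
  unfold pt
  fun_prop

theorem isCompact_edge (D : (ℤ × ℤ) × Fin 6) : IsCompact (pt D '' Icc 0 1) :=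
  isCompact_Icc.image (continuous_pt D)

theorem edge_subset (D : (ℤ × ℤ) × Fin 6) : pt D '' Icc 0 1 ⊆ cell D.1 := by
  rintro _ ⟨s, ⟨h0, h1⟩, rfl⟩
  exact (pt_mem D.1 D.2 h0 h1).1

theorem locallyFinite_edge : LocallyFinite fun D : (ℤ × ℤ) × Fin 6 => pt D '' Icc 0 1 := by
  intro z
  obtain ⟨t, ht, hf⟩ := locallyFinite_cell z
  refine ⟨t, ht, (hf.prod (finite_univ (α := Fin 6))).subset ?_⟩
  rintro ⟨c, k⟩ ⟨w, hw, hwt⟩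
  exact ⟨⟨w, edge_subset _ hw, hwt⟩, trivial⟩

theorem isClosed_edges (S : Set ((ℤ × ℤ) × Fin 6)) : IsClosed (edges S) := by
  rw [edges, biUnion_eq_iUnion]
  exact (locallyFinite_edge.comp_injective Subtype.val_injective).isClosed_iUnion
    fun D => (isCompact_edge D).isClosed

theorem inter_eq_edges (Q : Set (ℤ × ℤ)) : bricks Q ∩ bricks Qᶜ = edges {D | Dart Q D} := by
  ext z
  simp only [edges, mem_iUnion]
  constructor
  · rintro ⟨h1, h2⟩
    obtain ⟨c, hc, hzc⟩ := mem_bricks.1 h1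
    obtain ⟨d, hd, hzd⟩ := mem_bricks.1 h2
    obtain ⟨k, rfl⟩ := exists_dir ⟨z, hzc, hzd⟩ (fun e => hd (e ▸ hc))
    obtain ⟨s, g0, g1, rfl⟩ := exists_pt hzc hzd
    exact ⟨(c, k), ⟨hc, hd⟩, s, ⟨g0, g1⟩, rfl⟩
  · rintro ⟨⟨c, k⟩, hD, s, ⟨h0, h1⟩, rfl⟩
    obtain ⟨g1, g2⟩ := pt_mem c k h0 h1
    exact ⟨cell_subset_bricks hD.1 g1, cell_subset_bricks (S := Qᶜ) hD.2 g2⟩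

theorem locallyFinite_Icc_int : LocallyFinite fun n : ℤ => Icc (n : ℝ) (n + 1) := by
  intro x
  refine ⟨Metric.ball x 1, Metric.ball_mem_nhds x one_pos,
    (finite_Icc (⌊x⌋ - 3) (⌊x⌋ + 3)).subset ?_⟩
  rintro n ⟨y, ⟨h1, h2⟩, hy⟩
  rw [Metric.mem_ball, Real.dist_eq, abs_lt] at hy
  have h3 := Int.floor_le x
  have h4 := Int.lt_floor_add_one x
  have f1 : (n : ℝ) < (⌊x⌋ + 3 : ℤ) := by push_cast; linarith
  have f2 : ((⌊x⌋ - 3 : ℤ) : ℝ) < n := by push_cast; linarith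
  rw [Int.cast_lt] at f1 f2
  exact ⟨f2.le, f1.le⟩

/-- A connected common boundary of two unbounded complementary sets of bricks is a properly
embedded line: following the boundary darts sweeps out the whole of it. -/
theorem exists_line {Q : Set (ℤ × ℤ)} (hL : IsPreconnected (bricks Q ∩ bricks Qᶜ))
    (hne : (bricks Q ∩ bricks Qᶜ).Nonempty) (hQ : ¬ Bornology.IsBounded (bricks Q))
    (hQc : ¬ Bornology.IsBounded (bricks Qᶜ)) :
    ∃ γ : ℝ → ℂ, Continuous γ ∧ Function.Injective γ ∧
      Tendsto γ (cocompact ℝ) (cocompact ℂ) ∧ range γ = bricks Q ∩ bricks Qᶜ := by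
  have hbd : ¬ Bornology.IsBounded (bricks Q ∩ bricks Qᶜ) := fun h =>
    (bounded_of_bounded_inter h).elim hQ hQc
  rw [inter_eq_edges] at hL hne hbd ⊢
  obtain ⟨z0, hz0⟩ := hne
  simp only [edges, mem_iUnion] at hz0
  obtain ⟨D0, hD0, hz0⟩ := hz0
  let σ := nextPerm Q
  let P : ℤ → {D // Dart Q D} := fun n => (σ ^ n) ⟨D0, hD0⟩
  have hP : ∀ n, P (n + 1) = σ (P n) := fun n => by
    simp only [P]
    rw [add_comm, zpow_one_add, Equiv.Perm.mul_apply]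
  have hPn : ∀ n, (P (n + 1) : (ℤ × ℤ) × Fin 6) = next Q (P n) := fun n => by rw [hP]; rfl
  let γ : ℝ → ℂ := fun t => pt (P ⌊t⌋) (Int.fract t)
  have hγ : ∀ (n : ℤ) (t : ℝ), t ∈ Icc (n : ℝ) (n + 1) → γ t = pt (P n) (t - n) := by
    rintro n t ⟨h1, h2⟩
    rcases lt_or_eq_of_le h2 with h2 | h2
    · have : ⌊t⌋ = n := Int.floor_eq_iff.2 ⟨h1, h2⟩
      simp only [γ, this, Int.fract]
    · have : ⌊t⌋ = n + 1 := by rw [h2]; simp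
      simp only [γ, this, Int.fract, hPn]
      rw [h2]
      push_cast
      rw [sub_self, pt_next, add_sub_cancel_left]
  have hcont : Continuous γ := by
    refine locallyFinite_Icc_int.continuous ?_ (fun n => isClosed_Icc) fun n => ?_
    · exact eq_univ_of_forall fun t => mem_iUnion.2
        ⟨⌊t⌋, Int.floor_le t, (Int.lt_floor_add_one t).le⟩
    · exact ((continuous_pt _).comp (continuous_id.sub continuous_const)).continuousOn.congr (hγ n)
  -- the orbit of `D0` covers everything
  let O : Set ((ℤ × ℤ) × Fin 6) := range fun n => (P n : (ℤ × ℤ) × Fin 6)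
  have hO : ∀ D, Dart Q D → (next Q D ∈ O → D ∈ O) := by
    rintro D hD ⟨n, hn⟩
    refine ⟨n - 1, ?_⟩
    have h1 := hPn (n - 1)
    rw [sub_add_cancel] at h1
    have h2 := congrArg (prev Q) (h1.symm.trans hn)
    rwa [prev_next (P (n - 1)).2, prev_next hD] at h2
  have hO' : ∀ D, D ∈ O → next Q D ∈ O := by
    rintro _ ⟨n, rfl⟩
    exact ⟨n + 1, hPn n⟩
  have hall : ∀ D, Dart Q D → D ∈ O := by
    by_contra! hcon
    obtain ⟨D1, hD1, hD1O⟩ := hcon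
    obtain ⟨z, -, hz1, hz2⟩ := isPreconnected_closed_iff.1 hL _ _ (isClosed_edges O)
      (isClosed_edges {D | Dart Q D ∧ D ∉ O})
      (by
        intro z hz
        simp only [edges, mem_iUnion] at hz
        obtain ⟨D, hD, hz⟩ := hz
        by_cases h : D ∈ O
        · exact Or.inl (mem_iUnion₂.2 ⟨D, h, hz⟩)
        · exact Or.inr (mem_iUnion₂.2 ⟨D, ⟨hD, h⟩, hz⟩))
      ⟨z0, mem_iUnion₂.2 ⟨D0, hD0, hz0⟩, mem_iUnion₂.2 ⟨D0, ⟨0, rfl⟩, hz0⟩⟩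
      ⟨pt D1 0, mem_iUnion₂.2 ⟨D1, hD1, 0, by simp, rfl⟩,
        mem_iUnion₂.2 ⟨D1, ⟨hD1, hD1O⟩, 0, by simp, rfl⟩⟩
    -- a point of an edge lies on a half-open edge of the same family, as `next` preserves the family
    have half : ∀ S : Set ((ℤ × ℤ) × Fin 6), (∀ D ∈ S, next Q D ∈ S) → ∀ z ∈ edges S,
        ∃ D ∈ S, ∃ s, 0 ≤ s ∧ s < 1 ∧ z = pt D s := by
      intro S hS z hz
      simp only [edges, mem_iUnion] at hz
      obtain ⟨D, hD, s, ⟨h0, h1⟩, rfl⟩ := hz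
      rcases lt_or_eq_of_le h1 with h1 | rfl
      · exact ⟨D, hD, s, h0, h1, rfl⟩
      · exact ⟨_, hS D hD, 0, le_rfl, one_pos, (pt_next D).symm⟩
    obtain ⟨D, ⟨n, rfl⟩, s, h0, h1, hs⟩ := half _ hO' z hz1
    obtain ⟨D', ⟨hD', hD'O⟩, s', h0', h1', hs'⟩ := half {D | Dart Q D ∧ D ∉ O}
      (fun D hD => And.intro (next_dart hD.1) fun h => hD.2 (hO D hD.1 h)) z hz2
    exact hD'O ⟨n, dart_eq (P n).2 hD' h0 h1 h0' h1' (hs.symm.trans hs')⟩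
  -- a periodic sequence of darts would make the boundary bounded
  have hPinj : Function.Injective P := by
    intro i j hij
    by_contra hne
    wlog hlt : i < j generalizing i j
    · exact this hij.symm (Ne.symm hne) (lt_of_le_of_ne (not_lt.1 hlt) (Ne.symm hne))
    have hm : (σ ^ (j - i)) ⟨D0, hD0⟩ = ⟨D0, hD0⟩ := by
      apply (σ ^ i).injective
      rw [← Equiv.Perm.mul_apply, ← zpow_add, add_sub_cancel]
      exact hij.symm
    have hfin : O.Finite := by
      refine ((finite_Icc 0 (j - i)).image fun n => (P n : (ℤ × ℤ) × Fin 6)).subset ?_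
      rintro _ ⟨n, rfl⟩
      refine ⟨n % (j - i), ⟨Int.emod_nonneg _ (by omega), (Int.emod_lt_of_pos _ (by omega)).le⟩, ?_⟩
      have : P n = P (n % (j - i)) := by
        conv_lhs => rw [← Int.emod_add_mul_ediv n (j - i)]
        simp only [P]
        rw [zpow_add, Equiv.Perm.mul_apply, zpow_mul,
          Equiv.Perm.zpow_apply_eq_self_of_apply_eq_self hm]
      exact congrArg Subtype.val this.symm
    apply hbd
    have : edges {D | Dart Q D} ⊆ ⋃ D ∈ O, pt D '' Icc 0 1 :=
      biUnion_subset_biUnion_left hall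
    exact (hfin.isCompact_biUnion fun D _ => isCompact_edge D).isBounded.subset this
  refine ⟨γ, hcont, ?_, ?_, ?_⟩
  · intro t t' h
    have h1 : (P ⌊t⌋ : (ℤ × ℤ) × Fin 6) = P ⌊t'⌋ :=
      dart_eq (P _).2 (P _).2 (Int.fract_nonneg t) (Int.fract_lt_one t) (Int.fract_nonneg t')
        (Int.fract_lt_one t') h
    have h2 : ⌊t⌋ = ⌊t'⌋ := hPinj (Subtype.ext h1)
    simp only [γ, h1] at h
    rw [← Int.floor_add_fract t, ← Int.floor_add_fract t', h2, pt_injective _ h]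
  · rw [(hasBasis_cocompact).tendsto_right_iff]
    intro K hK
    have hfin : {n : ℤ | (pt (P n) '' Icc 0 1 ∩ K).Nonempty}.Finite := by
      have := (locallyFinite_edge.comp_injective
        (Subtype.val_injective.comp hPinj)).finite_nonempty_inter_compact hK
      exact this
    have hc : IsCompact (⋃ n ∈ {n : ℤ | (pt (P n) '' Icc 0 1 ∩ K).Nonempty},
      Icc (n : ℝ) (n + 1)) := hfin.isCompact_biUnion fun n _ => isCompact_Icc
    filter_upwards [hc.compl_mem_cocompact] with t ht htK
    refine ht (mem_iUnion₂.2 ⟨⌊t⌋, ⟨γ t, ⟨Int.fract t, ⟨Int.fract_nonneg t,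
      (Int.fract_lt_one t).le⟩, rfl⟩, htK⟩, Int.floor_le t, (Int.lt_floor_add_one t).le⟩)
  · ext z
    simp only [edges, mem_iUnion]
    constructor
    · rintro ⟨t, rfl⟩
      exact ⟨_, (P ⌊t⌋).2, Int.fract t, ⟨Int.fract_nonneg t, (Int.fract_lt_one t).le⟩, rfl⟩
    · rintro ⟨D, hD, s, ⟨h0, h1⟩, rfl⟩
      obtain ⟨n, rfl⟩ := hall D hD
      refine ⟨n + s, ?_⟩
      rw [hγ n _ ⟨by linarith, by linarith⟩, add_sub_cancel_left]

/-! ### Unicoherence and the boundary of an attractor -/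

/-- The plane is unicoherent: two closed connected sets that cover it have a connected
intersection. For a separation of the intersection take `u` equal to `0` on one part and to `1` on
the other; the function equal to `exp (πiu)` on `X` and to `exp (-πiu)` on `Y` would have no continuous
logarithm. -/
theorem unicoherent {X Y : Set ℂ} (hX : IsClosed X) (hY : IsClosed Y) (hXY : ∀ z, z ∈ X ∨ z ∈ Y)
    (hXc : IsPreconnected X) (hYc : IsPreconnected Y) : IsPreconnected (X ∩ Y) := by
  classical
  rw [isPreconnected_closed_iff]
  rintro t t' ht ht' hcov ⟨p, hp, hpt⟩ ⟨q, hq, hqt⟩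
  by_contra hcon
  have hdis : Disjoint (X ∩ Y ∩ t) (X ∩ Y ∩ t') := by
    rw [disjoint_left]
    rintro z ⟨hz, hzt⟩ ⟨-, hzt'⟩
    exact hcon ⟨z, hz, hzt, hzt'⟩
  obtain ⟨u, u0, u1, -⟩ := exists_continuous_zero_one_of_isClosed
    ((hX.inter hY).inter ht) ((hX.inter hY).inter ht') hdis
  have hI : Complex.exp (Real.pi * Complex.I) = -1 := Complex.exp_pi_mul_I
  let f1 : ℂ → ℂ := fun z => Complex.exp (Real.pi * Complex.I * (u z : ℝ))
  let f2 : ℂ → ℂ := fun z => Complex.exp (-(Real.pi * Complex.I * (u z : ℝ)))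
  have hf1 : Continuous f1 := by fun_prop
  have hf2 : Continuous f2 := by fun_prop
  have hagree : ∀ z ∈ X, z ∈ Y → f1 z = f2 z := by
    intro z hzX hzY
    rcases hcov ⟨hzX, hzY⟩ with h | h
    · have : u z = 0 := u0 ⟨⟨hzX, hzY⟩, h⟩
      simp [f1, f2, this]
    · have : u z = 1 := u1 ⟨⟨hzX, hzY⟩, h⟩
      simp [f1, f2, this, Complex.exp_neg]
  let f : ℂ → ℂ := fun z => if z ∈ X then f1 z else f2 z
  have e1 : ∀ z ∈ X, f z = f1 z := fun z hz => if_pos hz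
  have e2 : ∀ z ∈ Y, f z = f2 z := fun z hz => by
    by_cases hzX : z ∈ X
    · rw [e1 z hzX, hagree z hzX hz]
    · exact if_neg hzX
  have hf : Continuous f := by
    rw [← continuousOn_univ, ← (eq_univ_of_forall hXY : X ∪ Y = univ)]
    exact (hf1.continuousOn.congr e1).union_of_isClosed (hf2.continuousOn.congr e2) hX hY
  obtain ⟨g, hg, hexp⟩ := exists_log f hf fun z => by
    simp only [f, f1, f2]
    split_ifs <;> exact Complex.exp_ne_zero _
  have : PreconnectedSpace X := isPreconnected_iff_preconnectedSpace.1 hXc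
  have : PreconnectedSpace Y := isPreconnected_iff_preconnectedSpace.1 hYc
  have c1 := const_of_exp_eq_one (X := X) (fun z => g z - Real.pi * Complex.I * (u z : ℝ))
    (by fun_prop) (fun z => by
      rw [Complex.exp_sub, hexp, e1 z z.2]
      exact div_self (Complex.exp_ne_zero _)) ⟨p, hp.1⟩ ⟨q, hq.1⟩
  have c2 := const_of_exp_eq_one (X := Y) (fun z => g z + Real.pi * Complex.I * (u z : ℝ))
    (by fun_prop) (fun z => by
      rw [Complex.exp_add, hexp, e2 z z.2, ← Complex.exp_add]
      simp) ⟨p, hp.2⟩ ⟨q, hq.2⟩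
  have up : u p = 0 := u0 ⟨hp, hpt⟩
  have uq : u q = 1 := u1 ⟨hq, hqt⟩
  simp only [up, uq, Complex.ofReal_zero, Complex.ofReal_one, mul_zero, mul_one, sub_zero,
    add_zero] at c1 c2
  have : (Real.pi : ℂ) * Complex.I = 0 := by linear_combination (c1 - c2) / 2
  rcases mul_eq_zero.1 this with h | h
  · exact Real.pi_ne_zero (by exact_mod_cast h)
  · exact Complex.I_ne_zero h

/-- Brouwer lines in the complex plane. Instead of connected components, the separation is expressed
by a partition of the complement into two open sets containing `h L` and `h⁻¹ L`. -/
def BLine (h : ℂ ≃ₜ ℂ) (L : Set ℂ) : Prop :=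
  (∃ γ : ℝ → ℂ, Continuous γ ∧ Function.Injective γ ∧
    Tendsto γ (cocompact ℝ) (cocompact ℂ) ∧ range γ = L) ∧
  ∃ U V : Set ℂ, IsOpen U ∧ IsOpen V ∧ Disjoint U V ∧ U ∪ V = Lᶜ ∧
    (∀ z ∈ L, h z ∈ U) ∧ ∀ z ∈ L, h.symm z ∈ V

/-- A chain in `S` stays in the set of bricks that can be reached from its origin. -/
theorem Chain.self {S : Set (ℤ × ℤ)} {c d : ℤ × ℤ} (h : Chain S c d) :
    Chain {e | Chain S c e} c d := by
  induction h with
  | refl => exact Relation.ReflTransGen.refl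
  | tail h1 h2 ih => exact ih.tail ⟨h1.tail h2, h2.2⟩

theorem Chain.reverse {S : Set (ℤ × ℤ)} {c d : ℤ × ℤ} (hc : c ∈ S) (h : Chain S c d) :
    Chain S d c := by
  have : d ∈ S ∧ Chain S d c := by
    induction h with
    | refl => exact ⟨hc, Relation.ReflTransGen.refl⟩
    | tail h1 h2 ih => exact ⟨h2.1, Relation.ReflTransGen.head ⟨ih.1, h2.2.symm⟩ ih.2⟩
  exact this.2

theorem Chain.mono {S S' : Set (ℤ × ℤ)} (hS : S ⊆ S') {c d : ℤ × ℤ} (h : Chain S c d) :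
    Chain S' c d := by
  induction h with
  | refl => exact Relation.ReflTransGen.refl
  | tail h1 h2 ih => exact ih.tail ⟨hS h2.1, h2.2⟩

/-- The abstract form of the construction: a partition of the cells into free connected bricks,
labelled by `lab`, such that the image of the brick of `(0, 0)` meets the brick of `(-1, 0)`, and the
image of some adjacent brick `sm` meets the brick of `(0, 0)`. The line is the frontier of the
attractor generated by the brick of `(0, 0)`, seen from that brick. The brick `sm` ensures that `h⁻¹`
maps this side of the attractor into itself. -/
theorem brick_line {h : ℂ ≃ₜ ℂ} (hfree : ∀ z, h z ≠ z) (hor : IsotopicToId ⇑h) {ι : Type*}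
    (lab : ℤ × ℤ → ι) (hF : ∀ i, Free h (bricks {c | lab c = i}))
    (hC : ∀ i, TouchConn {c | lab c = i}) (sm : ι)
    (h01 : Rel h (fun i => bricks {c | lab c = i}) (lab (0, 0)) (lab (-1, 0)))
    (hm0 : Rel h (fun i => bricks {c | lab c = i}) sm (lab (0, 0)))
    (hm : (bricks {c | lab c = sm} ∩ bricks {c | lab c = lab (0, 0)}).Nonempty) :
    ∃ L, (⟨0, 1 / 2⟩ : ℂ) ∈ L ∧ BLine h L := by
  set B : ι → Set ℂ := fun i => bricks {c | lab c = i} with hB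
  set s0 := lab (0, 0)
  set s1 := lab (-1, 0)
  have hac := acyclic hfree hor B hF (fun i a ha b hb => by
    obtain ⟨K, k1, k2, k3, k4, k5, k6⟩ := exists_path (hC i) ha hb
    refine ⟨K, k1, k2, k3, k4, k5, fun z hz hza hzb j hj hzj => ?_⟩
    obtain ⟨c, hc, hzc⟩ := mem_bricks.1 hzj
    exact hj (hc.symm.trans (k6 z hz hza hzb c hzc)))
  have hcell : ∀ c, cell c ⊆ B (lab c) := fun c => cell_subset_bricks (S := {d | lab d = lab c}) rfl
  -- the bricks that are reached from the brick of `(0, 0)` in at least one step; neither this brick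
  -- nor `sm` is among them, as this would close a cycle
  let 𝒜 : Set (ℤ × ℤ) := {c | Relation.TransGen (Rel h B) s0 (lab c)}
  have n0 : ∀ c, lab c = s0 → c ∉ 𝒜 := fun c hc h' => hac s0 (by
    have h' : Relation.TransGen (Rel h B) s0 (lab c) := h'
    rwa [hc] at h')
  have nm : ∀ c, lab c = sm → c ∉ 𝒜 := fun c hc h' => hac s0 (by
    have h' : Relation.TransGen (Rel h B) s0 (lab c) := h'
    rw [hc] at h'
    exact h'.tail hm0)
  have m1 : (-1, 0) ∈ 𝒜 := Relation.TransGen.single h01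
  have hA : ∀ c ∈ 𝒜, ∀ z ∈ cell c, ∀ d, h z ∈ cell d → d ∈ 𝒜 := fun c hc z hz d hd =>
    Relation.TransGen.tail hc ⟨z, hcell c hz, hcell d hd⟩
  have hAh : ∀ z ∈ bricks 𝒜, ∀ d, h z ∈ cell d → d ∈ 𝒜 := fun z hz d hd => by
    obtain ⟨c, hc, hzc⟩ := mem_bricks.1 hz
    exact hA c hc z hzc d hd
  have hBA : ∀ j, Relation.TransGen (Rel h B) s0 j → B j ⊆ bricks 𝒜 := fun j hj =>
    bricks_mono fun c hc => by
      have hc : lab c = j := hc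
      simpa [𝒜, hc] using hj
  have hB0A : h '' B s0 ⊆ bricks 𝒜 := by
    rintro _ ⟨z, hz, rfl⟩
    obtain ⟨d, hd⟩ := exists_cell (h z)
    exact mem_bricks.2 ⟨d, Relation.TransGen.single ⟨z, hz, hcell d hd⟩, hd⟩
  have hBc : ∀ i, IsPreconnected (B i) := fun i => (hC i).isPreconnected
  have i0 : (⟨0, 1 / 2⟩ : ℂ) ∈ cell (0, 0) := by
    simp only [cell, mem_ofPred_eq]; norm_num
  have i1 : (⟨0, 1 / 2⟩ : ℂ) ∈ cell (-1, 0) := by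
    simp only [cell, mem_ofPred_eq]; norm_num
  obtain ⟨z01, hz0, hz1⟩ := id h01
  have hcore : IsPreconnected (h '' B s0 ∪ B s1) :=
    IsPreconnected.union' ⟨h z01, mem_image_of_mem _ hz0, hz1⟩
      ((hBc s0).image _ h.continuous.continuousOn) (hBc s1)
  -- if `Y` is connected and contains `B s1`, then `h(Y)` meets `h(B s0)` at the image of `i / 2`
  have hY : ∀ j, Relation.TransGen (Rel h B) s0 j →
      ∃ Y, IsPreconnected Y ∧ B s1 ⊆ Y ∧ B j ⊆ Y ∧ Y ⊆ bricks 𝒜 := by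
    intro j hj
    induction hj with
    | single hj =>
      rename_i j
      obtain ⟨w, hw0, hwj⟩ := id hj
      refine ⟨B j ∪ (h '' B s0 ∪ B s1), IsPreconnected.union' ⟨h w, hwj, Or.inl ⟨w, hw0, rfl⟩⟩
        (hBc j) hcore, fun z hz => Or.inr (Or.inr hz), subset_union_left, ?_⟩
      exact union_subset (hBA j (.single hj)) (union_subset hB0A (hBA _ (.single h01)))
    | tail hi hij ih =>
      rename_i i j
      obtain ⟨Y, y1, y2, y3, y4⟩ := ih
      obtain ⟨w, hwi, hwj⟩ := id hij
      have hYh : IsPreconnected (h '' Y ∪ (h '' B s0 ∪ B s1)) :=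
        IsPreconnected.union' ⟨h ⟨0, 1 / 2⟩, ⟨_, y2 (hcell _ i1), rfl⟩,
          Or.inl ⟨_, hcell _ i0, rfl⟩⟩ (y1.image _ h.continuous.continuousOn) hcore
      refine ⟨B j ∪ (h '' Y ∪ (h '' B s0 ∪ B s1)), IsPreconnected.union'
        ⟨h w, hwj, Or.inl ⟨w, y3 hwi, rfl⟩⟩ (hBc j) hYh,
        fun z hz => Or.inr (Or.inr (Or.inr hz)), subset_union_left, ?_⟩
      refine union_subset (hBA j (hi.tail hij)) (union_subset ?_
        (union_subset hB0A (hBA _ (.single h01))))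
      rintro _ ⟨z, hz, rfl⟩
      obtain ⟨d, hd⟩ := exists_cell (h z)
      exact mem_bricks.2 ⟨d, hAh z (y4 hz) d hd, hd⟩
  have hAc : IsPreconnected (bricks 𝒜) := by
    refine isPreconnected_of_forall ⟨0, 1 / 2⟩ fun z hz => ?_
    obtain ⟨c, hc, hzc⟩ := mem_bricks.1 hz
    obtain ⟨Y, y1, y2, y3, y4⟩ := hY _ hc
    exact ⟨Y, y4, y2 (hcell _ i1), y3 (hcell c hzc), y1⟩
  -- the side of the attractor that contains the brick of `(0, 0)`
  let 𝒬 : Set (ℤ × ℤ) := {c | Chain 𝒜ᶜ (0, 0) c}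
  have hQself : (0, 0) ∈ 𝒬 := Relation.ReflTransGen.refl
  have hQA : ∀ c ∈ 𝒬, c ∉ 𝒜 := by
    intro c hc
    rcases Relation.ReflTransGen.cases_tail hc with rfl | ⟨d, -, hd⟩
    · exact n0 _ rfl
    · exact hd.1
  have hQnb : ∀ c ∈ 𝒬, ∀ d, Touch c d → d ∉ 𝒬 → d ∈ 𝒜 := fun c hc d hcd hd => by
    by_contra hdA
    exact hd (Relation.ReflTransGen.tail hc ⟨hdA, hcd⟩)
  have hQ0 : ∀ c, lab c = s0 → c ∈ 𝒬 := fun c hc =>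
    (hC s0 (0, 0) rfl c hc).mono n0
  have hQm : ∀ c, lab c = sm → c ∈ 𝒬 := by
    obtain ⟨w, hwm, hw0⟩ := hm
    obtain ⟨c, hc, hwc⟩ := mem_bricks.1 hwm
    obtain ⟨d, hd, hwd⟩ := mem_bricks.1 hw0
    intro e he
    have h1 : Chain 𝒜ᶜ (0, 0) c := Relation.ReflTransGen.tail (hQ0 d hd) ⟨nm c hc, w, hwd, hwc⟩
    exact h1.trans ((hC sm c hc e he).mono nm)
  have hQc : IsPreconnected (bricks 𝒬) := by
    refine isPreconnected_of_forall ⟨0, 1 / 2⟩ fun z hz => ?_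
    obtain ⟨c, hc, hzc⟩ := mem_bricks.1 hz
    obtain ⟨Y, y1, y2, y3, y4⟩ := (Chain.self hc).exists_preconnected hQself
    exact ⟨Y, y4, y2 i0, y3 hzc, y1⟩
  have h𝒜𝒬 : 𝒜 ⊆ 𝒬ᶜ := fun c hc hcQ => hQA c hcQ hc
  have hÂc : IsPreconnected (bricks 𝒬ᶜ) := by
    refine isPreconnected_of_forall ⟨0, 1 / 2⟩ fun z hz => ?_
    obtain ⟨c, hc, hzc⟩ := mem_bricks.1 hz
    have iA : (⟨0, 1 / 2⟩ : ℂ) ∈ bricks 𝒜 := cell_subset_bricks m1 i1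
    by_cases hcA : c ∈ 𝒜
    · exact ⟨bricks 𝒜, bricks_mono h𝒜𝒬, iA, cell_subset_bricks hcA hzc, hAc⟩
    -- a complementary component that did not touch the attractor would be everything
    let 𝒟 : Set (ℤ × ℤ) := {d | Chain 𝒜ᶜ c d}
    have hDA : ∀ d ∈ 𝒟, d ∉ 𝒜 := by
      intro d hd
      rcases Relation.ReflTransGen.cases_tail hd with rfl | ⟨e, -, he⟩
      · exact hcA
      · exact he.1
    have hDQ : 𝒟 ⊆ 𝒬ᶜ := fun d hd hdQ => hc (Relation.ReflTransGen.trans hdQ (Chain.reverse hcA hd))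
    have : ∃ d ∈ 𝒟, ∃ e, Touch d e ∧ e ∉ 𝒟 := by
      by_contra! hcon
      have : 𝒟 = univ := eq_univ_of_touch ⟨c, Relation.ReflTransGen.refl⟩ hcon
      exact hDA (-1, 0) (this ▸ mem_univ _) m1
    obtain ⟨d, hd, e, hde, heD⟩ := this
    have heA : e ∈ 𝒜 := by
      by_contra heA
      exact heD (Relation.ReflTransGen.tail hd ⟨heA, hde⟩)
    obtain ⟨w, hwd, hwe⟩ := hde
    obtain ⟨Y, y1, y2, y3, y4⟩ := (Chain.self hd).exists_preconnected
      (show c ∈ 𝒟 from Relation.ReflTransGen.refl)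
    exact ⟨Y ∪ bricks 𝒜, union_subset (y4.trans (bricks_mono hDQ)) (bricks_mono h𝒜𝒬), Or.inr iA,
      Or.inl (y2 hzc), IsPreconnected.union' ⟨w, y3 hwd, cell_subset_bricks heA hwe⟩ y1 hAc⟩
  have hLA : bricks 𝒬 ∩ bricks 𝒬ᶜ ⊆ bricks 𝒜 := by
    rintro z ⟨hz1, hz2⟩
    obtain ⟨c, hc, hzc⟩ := mem_bricks.1 hz1
    obtain ⟨d, hd, hzd⟩ := mem_bricks.1 hz2
    exact mem_bricks.2 ⟨d, hQnb c hc d ⟨z, hzc, hzd⟩ hd, hzd⟩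
  have hhA : ∀ z ∈ bricks 𝒜, h z ∉ bricks 𝒬 := fun z hz hzQ => by
    obtain ⟨d, hd, hzd⟩ := mem_bricks.1 hzQ
    exact hQA d hd (hAh z hz d hzd)
  have hdisj : Disjoint (bricks 𝒬ᶜ)ᶜ (bricks 𝒬)ᶜ := by
    rw [disjoint_left]
    intro z h1 h2
    exact (bricks_union_compl 𝒬 z).elim h2 h1
  have hcovL : ∀ z, z ∉ bricks 𝒬 ∩ bricks 𝒬ᶜ → z ∈ (bricks 𝒬ᶜ)ᶜ ∪ (bricks 𝒬)ᶜ := fun z hz => by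
    by_cases h1 : z ∈ bricks 𝒬
    · exact Or.inl fun h2 => hz ⟨h1, h2⟩
    · exact Or.inr h1
  -- `h⁻¹` maps `𝒬` off the attractor, hence, by connectedness, to one side of the boundary of `𝒬`
  have hback : h.symm '' bricks 𝒬 ⊆ (bricks 𝒬ᶜ)ᶜ := by
    have key : ∀ z ∈ bricks 𝒬, h.symm z ∉ bricks 𝒜 := fun z hz hz' => hhA _ hz' (by simpa using hz)
    refine IsPreconnected.subset_left_of_subset_union (v := (bricks 𝒬)ᶜ)
      (isClosed_bricks _).isOpen_compl (isClosed_bricks _).isOpen_compl hdisj ?_ ?_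
      (hQc.image _ h.symm.continuous.continuousOn)
    · rintro _ ⟨z, hz, rfl⟩
      exact hcovL _ fun h' => key z hz (hLA h')
    · obtain ⟨w, hwm, hw0⟩ := hm0
      have q1 : w ∈ bricks 𝒬 := bricks_mono (fun c hc => hQm c hc) hwm
      have q2 : h w ∈ bricks 𝒬 := bricks_mono (fun c hc => hQ0 c hc) hw0
      refine ⟨w, ⟨h w, q2, by simp⟩, fun h' => ?_⟩
      exact key _ q2 (by simpa using hLA ⟨q1, h'⟩)
  have hbackQ : ∀ z ∈ bricks 𝒬, h.symm z ∈ bricks 𝒬 := fun z hz =>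
    (bricks_union_compl 𝒬 _).resolve_right (hback ⟨z, hz, rfl⟩)
  have iL : (⟨0, 1 / 2⟩ : ℂ) ∈ bricks 𝒬 ∩ bricks 𝒬ᶜ :=
    ⟨cell_subset_bricks hQself i0, cell_subset_bricks (h𝒜𝒬 m1) i1⟩
  have hLc := unicoherent (isClosed_bricks 𝒬) (isClosed_bricks 𝒬ᶜ) (bricks_union_compl 𝒬) hQc hÂc
  refine ⟨bricks 𝒬 ∩ bricks 𝒬ᶜ, iL, exists_line hLc ⟨_, iL⟩ ?_ ?_, (bricks 𝒬)ᶜ, (bricks 𝒬ᶜ)ᶜ,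
    (isClosed_bricks _).isOpen_compl, (isClosed_bricks _).isOpen_compl, hdisj.symm,
    (compl_inter _ _).symm, fun z hz => hhA z (hLA hz), fun z hz => hback ⟨z, hz.1, rfl⟩⟩
  · intro hb
    exact no_compact_invariant_symm hfree hor
      (Metric.isCompact_of_isClosed_isBounded (isClosed_bricks _) hb) ⟨_, iL.1⟩ hbackQ
  · intro hb
    refine no_compact_invariant hfree hor (K := bricks 𝒜)
      (Metric.isCompact_of_isClosed_isBounded (isClosed_bricks _)
        (hb.subset (bricks_mono h𝒜𝒬))) ⟨_, hLA iL⟩ fun z hz => ?_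
    obtain ⟨d, hd⟩ := exists_cell (h z)
    exact mem_bricks.2 ⟨d, hAh z hz d hd, hd⟩

/-! ### Grouping cells, and normalizing the displacement -/

open Classical in
/-- The labelling of the cells that groups together three given sets of cells and leaves all other
cells on their own. -/
noncomputable def label (S0 S1 Sm : Set (ℤ × ℤ)) (c : ℤ × ℤ) : Fin 3 ⊕ (ℤ × ℤ) :=
  if c ∈ S0 then Sum.inl 0 else if c ∈ S1 then Sum.inl 1 else if c ∈ Sm then Sum.inl 2
  else Sum.inr c

/-- The case of `brick_line` in which all bricks but three are single cells. -/
theorem line_of_three {h : ℂ ≃ₜ ℂ} (hfree : ∀ z, h z ≠ z) (hor : IsotopicToId ⇑h)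
    {S0 S1 Sm : Set (ℤ × ℤ)} (d01 : ∀ c ∈ S1, c ∉ S0) (dm0 : ∀ c ∈ Sm, c ∉ S0)
    (dm1 : ∀ c ∈ Sm, c ∉ S1) (f0 : Free h (bricks S0)) (f1 : Free h (bricks S1))
    (fm : Free h (bricks Sm)) (fc : ∀ c, Free h (cell c)) (t0 : TouchConn S0) (t1 : TouchConn S1)
    (tm : TouchConn Sm) (m0 : (0, 0) ∈ S0) (m1 : (-1, 0) ∈ S1)
    (r01 : ∃ z ∈ bricks S0, h z ∈ bricks S1) (rm0 : ∃ z ∈ bricks Sm, h z ∈ bricks S0)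
    (hm : (bricks Sm ∩ bricks S0).Nonempty) : ∃ L, (⟨0, 1 / 2⟩ : ℂ) ∈ L ∧ BLine h L := by
  have e0 : {c | label S0 S1 Sm c = Sum.inl 0} = S0 := by
    ext c
    simp only [label, mem_ofPred_eq]
    split_ifs <;> simp_all
  have e1 : {c | label S0 S1 Sm c = Sum.inl 1} = S1 := by
    ext c
    have := d01 c
    simp only [label, mem_ofPred_eq]
    split_ifs <;> simp_all
  have e2 : {c | label S0 S1 Sm c = Sum.inl 2} = Sm := by
    ext c
    have := dm0 c
    have := dm1 c
    simp only [label, mem_ofPred_eq]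
    split_ifs <;> simp_all
  have e3 : ∀ d, {c | label S0 S1 Sm c = Sum.inr d} ⊆ {d} := by
    intro d c hc
    simp only [label, mem_ofPred_eq] at hc
    split_ifs at hc
    exact Sum.inr_injective hc
  have l0 : label S0 S1 Sm (0, 0) = Sum.inl 0 := by
    have : (0, 0) ∈ {c | label S0 S1 Sm c = Sum.inl 0} := by rwa [e0]
    exact this
  have l1 : label S0 S1 Sm (-1, 0) = Sum.inl 1 := by
    have : (-1, 0) ∈ {c | label S0 S1 Sm c = Sum.inl 1} := by rwa [e1]
    exact this
  refine brick_line hfree hor (label S0 S1 Sm) ?_ ?_ (Sum.inl 2) ?_ ?_ ?_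
  · rintro (i | d)
    · fin_cases i
      · exact e0.symm.subst (motive := fun S => Free h (bricks S)) f0
      · exact e1.symm.subst (motive := fun S => Free h (bricks S)) f1
      · exact e2.symm.subst (motive := fun S => Free h (bricks S)) fm
    · intro z hz hz'
      have hd : bricks {c | label S0 S1 Sm c = Sum.inr d} ⊆ cell d := fun w hw => by
        obtain ⟨c, hc, hwc⟩ := mem_bricks.1 hw
        have hcd : c = d := e3 d hc
        exact hcd ▸ hwc
      exact fc d z (hd hz) (hd hz')
  · rintro (i | d)
    · fin_cases i
      · exact e0.symm.subst (motive := TouchConn) t0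
      · exact e1.symm.subst (motive := TouchConn) t1
      · exact e2.symm.subst (motive := TouchConn) tm
    · intro c hc c' hc'
      have h1 : c = d := e3 d hc
      have h2 : c' = d := e3 d hc'
      rw [h1, h2]
      exact Relation.ReflTransGen.refl
  · rw [l0, l1, Rel, e0, e1]
    exact r01
  · rw [l0, Rel, e0, e2]
    exact rm0
  · rw [l0, e0, e2]
    exact hm

/-- A continuous positive nonincreasing function bounding the displacement from below. -/
theorem exists_modulus (h : ℂ ≃ₜ ℂ) (hfree : ∀ z, h z ≠ z) :
    ∃ μ : ℝ → ℝ, Continuous μ ∧ Antitone μ ∧ (∀ r, 0 < μ r) ∧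
      ∀ z r, (‖z‖ ≤ r ∨ ‖h z‖ ≤ r) → μ r ≤ ‖h z - z‖ := by
  let φ : ℝ → ℂ → ℝ := fun r z => ‖h z - z‖ + max 0 (min ‖z‖ ‖h z‖ - r)
  have hφ0 : ∀ r z, 0 ≤ φ r z := fun r z => by positivity
  have hbd : ∀ r, BddBelow (range (φ r)) := fun r => ⟨0, by rintro _ ⟨z, rfl⟩; exact hφ0 r z⟩
  refine ⟨fun r => ⨅ z, φ r z, ?_, ?_, ?_, ?_⟩
  · refine LipschitzWith.continuous (K := 1) (LipschitzWith.of_le_add fun r s => ?_)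
    rw [← sub_le_iff_le_add]
    refine le_ciInf fun z => ?_
    rw [sub_le_iff_le_add]
    refine (ciInf_le (hbd r) z).trans ?_
    simp only [φ]
    rw [add_assoc]
    gcongr
    refine max_le (by positivity) ?_
    have h1 := le_max_right 0 (min ‖z‖ ‖h z‖ - s)
    have h2 := neg_abs_le (r - s)
    rw [Real.dist_eq]
    linarith
  · intro r s hrs
    refine ciInf_mono (hbd s) fun z => ?_
    simp only [φ]
    gcongr
  · intro r
    let K : Set ℂ := Metric.closedBall 0 (r + 1) ∪ h ⁻¹' Metric.closedBall 0 (r + 1)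
    have hK : IsCompact K := (isCompact_closedBall _ _).union
      (h.isCompact_preimage.2 (isCompact_closedBall _ _))
    obtain ⟨ε, hε, hεK⟩ : ∃ ε > 0, ∀ z ∈ K, ε ≤ ‖h z - z‖ := by
      rcases K.eq_empty_or_nonempty with hne | hne
      · exact ⟨1, one_pos, by simp [hne]⟩
      · obtain ⟨z, -, hz⟩ := hK.exists_isMinOn hne
          (f := fun z => ‖h z - z‖) (by fun_prop)
        exact ⟨_, norm_pos_iff.2 (sub_ne_zero.2 (hfree z)), hz⟩
    refine (lt_min one_pos hε).trans_le (le_ciInf fun z => ?_)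
    by_cases hz : z ∈ K
    · exact (min_le_right _ _).trans ((hεK z hz).trans
        (le_add_of_nonneg_right (le_max_left _ _)))
    · simp only [K, mem_union, Metric.mem_closedBall, dist_zero_right, mem_preimage, not_or,
        not_le] at hz
      refine (min_le_left _ _).trans ?_
      have h1 := le_max_right 0 (min ‖z‖ ‖h z‖ - r)
      have h2 := lt_min hz.1 hz.2
      have h3 := norm_nonneg (h z - z)
      simp only [φ]
      linarith
  · intro z r hz
    refine (ciInf_le (hbd r) z).trans ?_
    have : min ‖z‖ ‖h z‖ ≤ r := min_le_iff.2 hz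
    simp only [φ]
    rw [max_eq_left (by linarith), add_zero]

/-- After a radial change of coordinates `z ↦ k ‖z‖ • z`, with `k` nondecreasing and large enough,
every point is moved by at least `1`. -/
theorem exists_normalize (h : ℂ ≃ₜ ℂ) (hfree : ∀ z, h z ≠ z) :
    ∃ G : ℂ ≃ₜ ℂ, ∀ z, 1 ≤ ‖G (h z) - G z‖ := by
  obtain ⟨μ, m1, m2, m3, m4⟩ := exists_modulus h hfree
  let k : ℝ → ℝ := fun r => (μ r)⁻¹
  have k1 : Continuous k := m1.inv₀ fun r => (m3 r).ne'
  have k2 : Monotone k := fun r s hrs => inv_anti₀ (m3 s) (m2 hrs)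
  have k3 : ∀ r, 0 < k r := fun r => inv_pos.2 (m3 r)
  let g : ℂ → ℂ := fun z => k ‖z‖ • z
  have hg : Continuous g := by fun_prop
  have hle : ∀ z w : ℂ, ‖z‖ ≤ ‖w‖ → k ‖z‖ * ‖w - z‖ ≤ ‖g w - g z‖ := by
    intro z w hzw
    have e : g w - g z = k ‖z‖ • (w - z) + (k ‖w‖ - k ‖z‖) • w := by
      simp only [g]
      module
    have hin : 0 ≤ inner ℝ (w - z) w := by
      rw [inner_sub_left, real_inner_self_eq_norm_sq]
      have := real_inner_le_norm z w
      nlinarith [norm_nonneg w]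
    have hin' : 0 ≤ inner ℝ (k ‖z‖ • (w - z)) ((k ‖w‖ - k ‖z‖) • w) := by
      rw [real_inner_smul_left, real_inner_smul_right]
      exact mul_nonneg (k3 _).le (mul_nonneg (sub_nonneg.2 (k2 hzw)) hin)
    have h2 := norm_add_sq_real (k ‖z‖ • (w - z)) ((k ‖w‖ - k ‖z‖) • w)
    rw [← e] at h2
    have h3 : ‖k ‖z‖ • (w - z)‖ = k ‖z‖ * ‖w - z‖ := by
      rw [norm_smul, Real.norm_of_nonneg (k3 _).le]
    rw [← h3]
    refine le_of_sq_le_sq ?_ (norm_nonneg _)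
    nlinarith [sq_nonneg ‖(k ‖w‖ - k ‖z‖) • w‖]
  have hle0 : ∀ z w : ℂ, k 0 * ‖w - z‖ ≤ ‖g w - g z‖ := by
    intro z w
    rcases le_total ‖z‖ ‖w‖ with h | h
    · exact (mul_le_mul_of_nonneg_right (k2 (norm_nonneg z)) (norm_nonneg _)).trans (hle z w h)
    · rw [norm_sub_rev w, norm_sub_rev (g w)]
      exact (mul_le_mul_of_nonneg_right (k2 (norm_nonneg w)) (norm_nonneg _)).trans (hle w z h)
  have hinj : Function.Injective g := by
    intro z w hzw
    have := hle0 z w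
    rw [hzw, sub_self, norm_zero] at this
    have h0 : ‖w - z‖ ≤ 0 := by
      by_contra! hc
      exact absurd this (not_le.2 (mul_pos (k3 0) hc))
    exact (sub_eq_zero.1 (norm_le_zero_iff.1 h0)).symm
  have hsurj : Function.Surjective g := by
    intro w
    rcases eq_or_ne w 0 with rfl | hw
    · exact ⟨0, by simp [g]⟩
    have hw' : 0 < ‖w‖ := norm_pos_iff.2 hw
    have hR : 0 ≤ ‖w‖ / k 0 := div_nonneg hw'.le (k3 0).le
    obtain ⟨s, ⟨hs0, -⟩, hs⟩ : ‖w‖ ∈ (fun s => k s * s) '' Icc 0 (‖w‖ / k 0) := by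
      refine intermediate_value_Icc hR (by fun_prop) ⟨by simp, ?_⟩
      calc ‖w‖ = k 0 * (‖w‖ / k 0) := by field_simp [(k3 0).ne']
        _ ≤ _ := mul_le_mul_of_nonneg_right (k2 hR) hR
    have hn : ‖(s / ‖w‖) • w‖ = s := by
      rw [norm_smul, Real.norm_of_nonneg (div_nonneg hs0 hw'.le)]
      field_simp
    refine ⟨(s / ‖w‖) • w, ?_⟩
    simp only [g]
    rw [hn, smul_smul]
    have : k s * (s / ‖w‖) = 1 := by
      have hs : k s * s = ‖w‖ := hs
      rw [← mul_div_assoc, hs, div_self hw'.ne']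
    rw [this, one_smul]
  let E : ℂ ≃ ℂ := Equiv.ofBijective g ⟨hinj, hsurj⟩
  have hE : Continuous E.symm := by
    refine (LipschitzWith.of_dist_le_mul (K := ⟨(k 0)⁻¹, (inv_pos.2 (k3 0)).le⟩)
      fun a b => ?_).continuous
    have := hle0 (E.symm b) (E.symm a)
    have e : ∀ a, g (E.symm a) = a := fun a => E.apply_symm_apply a
    rw [e, e] at this
    rw [dist_eq_norm, dist_eq_norm]
    show _ ≤ (k 0)⁻¹ * _
    rw [inv_mul_eq_div, le_div_iff₀ (k3 0), mul_comm]
    exact this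
  have hcomp : ∀ z r, (‖z‖ ≤ r ∨ ‖h z‖ ≤ r) → 1 ≤ k r * ‖h z - z‖ := by
    intro z r hz
    have := m4 z r hz
    show 1 ≤ (μ r)⁻¹ * _
    rwa [inv_mul_eq_div, one_le_div (m3 r)]
  refine ⟨⟨E, hg, hE⟩, fun z => ?_⟩
  show 1 ≤ ‖g (h z) - g z‖
  rcases le_total ‖z‖ ‖h z‖ with hz | hz
  · exact (hcomp z _ (Or.inl le_rfl)).trans (hle _ _ hz)
  · rw [norm_sub_rev]
    refine le_trans ?_ (hle _ _ hz)
    rw [norm_sub_rev]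
    exact hcomp z _ (Or.inr le_rfl)

/-! ### The line through a given point -/

/-- A conjugacy maps lines for `h'` to lines for `h`. -/
theorem BLine.conj {h h' : ℂ ≃ₜ ℂ} (G : ℂ ≃ₜ ℂ) (e : ∀ w, G (h' w) = h (G w)) {L : Set ℂ}
    (hL : BLine h' L) : BLine h (G '' L) := by
  obtain ⟨⟨γ, g1, g2, g3, rfl⟩, U, V, u1, u2, u3, u4, u5, u6⟩ := hL
  refine ⟨⟨G ∘ γ, G.continuous.comp g1, G.injective.comp g2,
    G.isClosedEmbedding.tendsto_cocompact.comp g3, range_comp _ _⟩, G '' U, G '' V,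
    G.isOpenMap _ u1, G.isOpenMap _ u2, disjoint_image_of_injective G.injective u3, ?_, ?_, ?_⟩
  · rw [← image_union, u4, image_compl_eq G.bijective]
  · rintro _ ⟨w, hw, rfl⟩
    exact ⟨h' w, u5 w hw, e w⟩
  · rintro _ ⟨w, hw, rfl⟩
    refine ⟨h'.symm w, u6 w hw, ?_⟩
    rw [Homeomorph.eq_symm_apply, ← e, Homeomorph.apply_symm_apply]

/-- A similarity carrying the midpoint `i / 2` of the common side of the cells `(0, 0)` and `(-1, 0)`
to `x`. -/
theorem exists_similarity (x a : ℂ) (ha : a ≠ 0) :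
    ∃ T : ℂ ≃ₜ ℂ, ∀ w, T w = x + a * (w - ⟨0, 1 / 2⟩) :=
  ⟨{ toFun := fun w => x + a * (w - ⟨0, 1 / 2⟩)
     invFun := fun z => (z - x) / a + ⟨0, 1 / 2⟩
     left_inv := fun w => by field_simp; ring
     right_inv := fun z => by field_simp; ring
     continuous_toFun := by fun_prop
     continuous_invFun := by fun_prop }, fun _ => rfl⟩

/-- If `v * t` is equidistant from `0` and `v`, then `t` has real part `1 / 2`. -/
theorem re_eq_half {t v : ℂ} (hv : v ≠ 0) (h : ‖v * t‖ = ‖v * t - v‖) : t.re = 1 / 2 := by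
  have e : v * t - v = v * (t - 1) := by ring
  rw [e, norm_mul, norm_mul] at h
  have h1 := mul_left_cancel₀ (norm_ne_zero_iff.2 hv) h
  have h2 : Complex.normSq t = Complex.normSq (t - 1) := by
    rw [Complex.normSq_eq_norm_sq, Complex.normSq_eq_norm_sq, h1]
  simp only [Complex.normSq_apply, Complex.sub_re, Complex.sub_im, Complex.one_re,
    Complex.one_im] at h2
  linarith

/-- The cells that meet a given set. -/
def meeting (X : Set ℂ) : Set (ℤ × ℤ) := {c | (cell c ∩ X).Nonempty}

theorem subset_bricks_meeting (X : Set ℂ) : X ⊆ bricks (meeting X) := fun z hz => by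
  obtain ⟨c, hc⟩ := exists_cell z
  exact mem_bricks.2 ⟨c, ⟨z, hc, hz⟩, hc⟩

theorem touchConn_meeting {X : Set ℂ} (hX : IsPreconnected X) : TouchConn (meeting X) :=
  touchConn_of_preconnected hX (subset_bricks_meeting X) fun _ hc => hc

theorem exists_near_of_mem_bricks_meeting {X : Set ℂ} {w : ℂ} (hw : w ∈ bricks (meeting X)) :
    ∃ w' ∈ X, ‖w - w'‖ ≤ 3 := by
  obtain ⟨c, ⟨w', hc', hX⟩, hc⟩ := mem_bricks.1 hw
  exact ⟨w', hX, dist_le_of_mem_cell hc hc'⟩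

/-- The core of the argument, for a homeomorphism with displacement at least `1`. In a very fine brick
decomposition, the radii of the critical disc at `x` that end at `y` and `h y`, together with the
preimage of the second radius, are thickened to three free bricks. The tiling is placed so that `x` is
the midpoint of the common side of the first two bricks, this side being perpendicular to
`y - h y`. -/
theorem line_through {h : ℂ ≃ₜ ℂ} (h1 : ∀ z, 1 ≤ ‖h z - z‖) (hor : IsotopicToId ⇑h) (x : ℂ) :
    ∃ L, x ∈ L ∧ BLine h L := by
  have hfree : ∀ z, h z ≠ z := fun z hz => by
    have := h1 z
    rw [hz, sub_self, norm_zero] at this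
    linarith
  obtain ⟨r, hr, y, hy, hhy, hcrit⟩ := critical_disc hfree x
  set v := y - h y with hv
  have hv0 : v ≠ 0 := sub_ne_zero.2 (hfree y).symm
  have hvn : 0 < ‖v‖ := norm_pos_iff.2 hv0
  have F0 : Free h (segment ℝ y x) := free_radius hfree hcrit hy
  have F1 : Free h (segment ℝ (h y) x) := free_radius hfree hcrit hhy
  set βm := h.symm '' segment ℝ (h y) x with hβm
  have Fm : Free h βm := by
    rintro _ ⟨w, hw, rfl⟩ hw'
    rw [Homeomorph.apply_symm_apply] at hw'
    obtain ⟨w', hw1, hw2⟩ := hw'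
    refine F1 w hw ?_
    rwa [← hw2, Homeomorph.apply_symm_apply]
  have hx0 : h.symm x ∉ segment ℝ y x := fun hx =>
    F0 _ hx (by rw [Homeomorph.apply_symm_apply]; exact right_mem_segment ℝ y x)
  have hm1 : segment ℝ (h y) x ⊆ βmᶜ := by
    rintro z hz ⟨w, hw, rfl⟩
    exact F1 _ hz (by rwa [Homeomorph.apply_symm_apply])
  have hβmc : IsCompact βm := (isCompact_segment _ _).image h.symm.continuous
  obtain ⟨U0, a0, -, b0, c0, d0⟩ := exists_free_nhd (isCompact_segment y x)
    (isPreconnected_segment y x) F0 (isOpen_compl_singleton (x := h.symm x))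
    (fun z hz => by rintro rfl; exact hx0 hz)
  obtain ⟨U1, a1, -, b1, c1, d1⟩ := exists_free_nhd (isCompact_segment (h y) x)
    (isPreconnected_segment (h y) x) F1 hβmc.isClosed.isOpen_compl hm1
  obtain ⟨Um, am, -, bm, -, dm⟩ := exists_free_nhd hβmc
    ((isPreconnected_segment (h y) x).image _ h.symm.continuous.continuousOn) Fm isOpen_univ
    (subset_univ _)
  obtain ⟨ε0, e0, E0⟩ := (isCompact_segment y x).exists_thickening_subset_open a0 b0
  obtain ⟨ε1, e1, E1⟩ := (isCompact_segment (h y) x).exists_thickening_subset_open a1 b1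
  obtain ⟨εm, em, Em⟩ := hβmc.exists_thickening_subset_open am bm
  -- `κ * ‖v‖` is the scale of the tiling
  obtain ⟨κ, hκ, hκ3, hκ0, hκ1, hκm, hκf⟩ : ∃ κ : ℝ, 0 < κ ∧ κ ≤ 1 / 3 ∧ 6 * (κ * ‖v‖) ≤ ε0 ∧
      6 * (κ * ‖v‖) ≤ ε1 ∧ 6 * (κ * ‖v‖) ≤ εm ∧ 6 * (κ * ‖v‖) ≤ 1 := by
    let ε := min (min ε0 ε1) (min εm 1)
    have hε : 0 < ε := lt_min (lt_min e0 e1) (lt_min em one_pos)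
    refine ⟨min (1 / 3) (ε / (6 * ‖v‖)), lt_min (by norm_num) (by positivity), min_le_left _ _, ?_⟩
    have : 6 * (min (1 / 3) (ε / (6 * ‖v‖)) * ‖v‖) ≤ ε := by
      have h2 := mul_le_mul_of_nonneg_right (min_le_right (1 / 3) (ε / (6 * ‖v‖)))
        (mul_pos (by norm_num : (0 : ℝ) < 6) hvn).le
      rw [div_mul_cancel₀ _ (by positivity)] at h2
      linarith
    exact ⟨this.trans ((min_le_left _ _).trans (min_le_left _ _)),
      this.trans ((min_le_left _ _).trans (min_le_right _ _)),
      this.trans ((min_le_right _ _).trans (min_le_left _ _)),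
      this.trans ((min_le_right _ _).trans (min_le_right _ _))⟩
  set a : ℂ := κ * v with ha
  have hκc : (κ : ℂ) ≠ 0 := by exact_mod_cast hκ.ne'
  have han : ‖a‖ = κ * ‖v‖ := by rw [ha, norm_mul, Complex.norm_of_nonneg hκ.le]
  rw [← han] at hκ0 hκ1 hκm hκf
  have ha0 : a ≠ 0 := mul_ne_zero hκc hv0
  have hapos : 0 < ‖a‖ := norm_pos_iff.2 ha0
  obtain ⟨T, hT⟩ := exists_similarity x a ha0
  have hTn : ∀ w w', ‖T w - T w'‖ = ‖a‖ * ‖w - w'‖ := fun w w' => by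
    rw [← norm_mul, hT, hT]
    congr 1
    ring
  have hTs : ∀ z, a * (T.symm z - ⟨0, 1 / 2⟩) = z - x := fun z => by
    have := hT (T.symm z)
    rw [Homeomorph.apply_symm_apply] at this
    linear_combination -this
  let h' : ℂ ≃ₜ ℂ := (T.trans h).trans T.symm
  have hh' : ∀ w, T (h' w) = h (T w) := fun w => T.apply_symm_apply _
  -- in the new coordinates `y` is far to the right and `h y` is far to the left
  have rey : 3 / 2 ≤ (T.symm y).re := by
    have := re_eq_half (t := κ * (T.symm y - ⟨0, 1 / 2⟩)) hv0 (by
      have e : v * (κ * (T.symm y - ⟨0, 1 / 2⟩)) = y - x := by rw [← hTs]; ring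
      rw [e, hv, hy, ← hhy]
      congr 1
      ring)
    simp only [Complex.re_ofReal_mul, Complex.sub_re, sub_zero] at this
    nlinarith
  have rehy : (T.symm (h y)).re ≤ -(3 / 2) := by
    have := re_eq_half (t := -(κ * (T.symm (h y) - ⟨0, 1 / 2⟩))) hv0 (by
      have e : v * (-(κ * (T.symm (h y) - ⟨0, 1 / 2⟩))) = -(h y - x) := by rw [← hTs]; ring
      rw [e, norm_neg, hhy, ← hy, ← norm_neg, hv]
      congr 1
      ring)
    simp only [Complex.neg_re, Complex.re_ofReal_mul, Complex.sub_re, sub_zero] at this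
    nlinarith
  have near : ∀ (s : ℝ) (p w : ℂ), |s| ≤ 3 / 2 → w ∈ segment ℝ (⟨s, 1 / 2⟩ : ℂ) (T.symm p) →
      ∃ q ∈ segment ℝ p x, ‖T w - q‖ ≤ 3 / 2 * ‖a‖ := by
    rintro s p w hs ⟨α, β, hα, hβ, hαβ, rfl⟩
    refine ⟨β • p + α • x, ⟨β, α, hβ, hα, by rw [add_comm, hαβ], rfl⟩, ?_⟩
    have e : T (α • (⟨s, 1 / 2⟩ : ℂ) + β • T.symm p) - (β • p + α • x) = (α * s : ℝ) * a := by
      have hs' : (⟨s, 1 / 2⟩ : ℂ) = (s : ℂ) + ⟨0, 1 / 2⟩ := by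
        apply Complex.ext <;> simp
      have hβ' : (β : ℂ) = 1 - α := by
        exact_mod_cast eq_sub_of_add_eq' hαβ
      rw [hT, hs', Complex.real_smul, Complex.real_smul, Complex.real_smul, Complex.real_smul, hβ']
      push_cast
      linear_combination (1 - (α : ℂ)) * hTs p
    rw [e, norm_mul, Complex.norm_real, Real.norm_eq_abs, abs_mul, abs_of_nonneg hα]
    have : α * |s| ≤ 1 * (3 / 2) := mul_le_mul (by linarith) hs (abs_nonneg _) zero_le_one
    nlinarith
  -- to keep the first two bricks apart, the radii are started at the points `±3/2 + i/2` of the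
  -- cells `(0, 0)` and `(-1, 0)` instead of `i/2`
  set X0 := segment ℝ (⟨3 / 2, 1 / 2⟩ : ℂ) (T.symm y) with hX0
  set X1 := segment ℝ (⟨-(3 / 2), 1 / 2⟩ : ℂ) (T.symm (h y)) with hX1
  have hre0 : ∀ z ∈ X0, 3 / 2 ≤ z.re := fun z hz =>
    (convex_halfSpace_re_ge (3 / 2)).segment_subset (le_refl (3 / 2 : ℝ)) rey hz
  have hre1 : ∀ z ∈ X1, z.re ≤ -(3 / 2) := fun z hz =>
    (convex_halfSpace_re_le (-(3 / 2))).segment_subset (le_refl (-(3 / 2) : ℝ)) rehy hz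
  have thick : ∀ (s : ℝ) (p : ℂ) (ε : ℝ) (U : Set ℂ), |s| ≤ 3 / 2 → 6 * ‖a‖ ≤ ε →
      Metric.thickening ε (segment ℝ p x) ⊆ U →
      ∀ w ∈ bricks (meeting (segment ℝ (⟨s, 1 / 2⟩ : ℂ) (T.symm p))), T w ∈ U := by
    intro s p ε U hs hε hU w hw
    obtain ⟨w', hw', hn⟩ := exists_near_of_mem_bricks_meeting hw
    obtain ⟨q, hq, hqn⟩ := near s p w' hs hw'
    refine hU (Metric.mem_thickening_iff.2 ⟨q, hq, ?_⟩)
    have h2 := dist_triangle (T w) (T w') q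
    rw [dist_eq_norm (T w) (T w'), dist_eq_norm (T w') q, hTn] at h2
    nlinarith
  have hU0 : ∀ w ∈ bricks (meeting X0), T w ∈ U0 :=
    thick (3 / 2) y ε0 U0 (by norm_num [abs_of_pos]) hκ0 E0
  have hU1 : ∀ w ∈ bricks (meeting X1), T w ∈ U1 :=
    thick (-(3 / 2)) (h y) ε1 U1 (by norm_num [abs_of_pos]) hκ1 E1
  -- the part of the third arc after its last visit to the first brick
  let η : ℝ → ℂ := fun t => T.symm (h.symm (AffineMap.lineMap (h y) x t))
  have hη : Continuous η := T.symm.continuous.comp (h.symm.continuous.comp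
    AffineMap.lineMap_continuous)
  have hη0 : η 0 = T.symm y := by simp [η]
  have hη1 : η 1 = T.symm (h.symm x) := by simp [η]
  have hηm : ∀ t ∈ Icc (0 : ℝ) 1, T (η t) ∈ βm := fun t ht => by
    simp only [η, Homeomorph.apply_symm_apply]
    refine mem_image_of_mem _ ?_
    rw [segment_eq_image_lineMap]
    exact ⟨t, ht, rfl⟩
  have y0 : T.symm y ∈ bricks (meeting X0) :=
    subset_bricks_meeting _ (right_mem_segment ℝ _ _)
  obtain ⟨τ, ⟨⟨hτ0, hτ1⟩, hτ⟩, hτmax⟩ : ∃ τ, IsGreatest (Icc (0 : ℝ) 1 ∩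
      η ⁻¹' bricks (meeting X0)) τ := by
    refine (isCompact_Icc.inter_right ((isClosed_bricks _).preimage hη)).exists_isGreatest
      ⟨0, ⟨le_rfl, zero_le_one⟩, ?_⟩
    rw [mem_preimage, hη0]
    exact y0
  have hτ1' : τ < 1 := by
    refine lt_of_le_of_ne hτ1 ?_
    rintro rfl
    have h2 := c0 (hU0 _ hτ)
    rw [hη1, Homeomorph.apply_symm_apply] at h2
    exact h2 rfl
  set Xm := η '' Ioc τ 1 with hXm
  have hUm : ∀ w ∈ bricks (meeting Xm), T w ∈ Um := by
    intro w hw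
    obtain ⟨_, ⟨t, ht, rfl⟩, hn⟩ := exists_near_of_mem_bricks_meeting hw
    refine Em (Metric.mem_thickening_iff.2 ⟨T (η t), hηm t ⟨hτ0.trans ht.1.le, ht.2⟩, ?_⟩)
    rw [dist_eq_norm, hTn]
    nlinarith
  have free : ∀ (S : Set (ℤ × ℤ)) (U : Set ℂ), (∀ w ∈ bricks S, T w ∈ U) → Free h U →
      Free h' (bricks S) := fun S U hU hF w hw hw' => by
    have h2 := hU _ hw'
    rw [hh'] at h2
    exact hF _ (hU w hw) h2
  have m0 : ((0, 0) : ℤ × ℤ) ∈ meeting X0 := by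
    refine ⟨⟨3 / 2, 1 / 2⟩, ?_, left_mem_segment ℝ _ _⟩
    simp only [cell, mem_ofPred_eq]; norm_num
  have m1 : ((-1, 0) : ℤ × ℤ) ∈ meeting X1 := by
    refine ⟨⟨-(3 / 2), 1 / 2⟩, ?_, left_mem_segment ℝ _ _⟩
    simp only [cell, mem_ofPred_eq]; norm_num
  have i0 : (⟨0, 1 / 2⟩ : ℂ) ∈ cell (0, 0) := by
    simp only [cell, mem_ofPred_eq]; norm_num
  have hTx : T.symm x = ⟨0, 1 / 2⟩ := by
    rw [Homeomorph.symm_apply_eq, hT]; ring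
  obtain ⟨L, hL, hBL⟩ := line_of_three (h := h') (S0 := meeting X0) (S1 := meeting X1)
    (Sm := meeting Xm)
    (fun w hw => hfree (T w) ((hh' w).symm.trans (congrArg T hw))) (IsotopicToId.conj hor T)
    (by
      rintro c ⟨z, hz, hzX⟩ ⟨w, hw, hwX⟩
      have g1 := hre1 z hzX
      have g2 := hre0 w hwX
      have g3 := hz.1
      have g4 := hw.2.1
      linarith)
    (by
      rintro c ⟨_, hz, ⟨t, ht, rfl⟩⟩ hc
      exact absurd (hτmax ⟨⟨hτ0.trans ht.1.le, ht.2⟩, cell_subset_bricks hc hz⟩) (not_le.2 ht.1))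
    (by
      rintro c ⟨_, hz, ⟨t, ht, rfl⟩⟩ hc
      exact c1 (hU1 _ (cell_subset_bricks hc hz)) (hηm t ⟨hτ0.trans ht.1.le, ht.2⟩))
    (free _ U0 hU0 d0) (free _ U1 hU1 d1) (free _ Um hUm dm)
    (by
      intro c w hw hw'
      have h2 := h1 (T w)
      rw [← hh', hTn] at h2
      have h3 := dist_le_of_mem_cell hw' hw
      nlinarith)
    (touchConn_meeting (isPreconnected_segment _ _))
    (touchConn_meeting (isPreconnected_segment _ _))
    (touchConn_meeting (isPreconnected_Ioc.image _ hη.continuousOn)) m0 m1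
    ⟨T.symm y, y0, by
      have : h' (T.symm y) = T.symm (h y) := by simp [h']
      rw [this]
      exact subset_bricks_meeting _ (right_mem_segment ℝ _ _)⟩
    ⟨η 1, subset_bricks_meeting _ ⟨1, ⟨hτ1', le_rfl⟩, rfl⟩, by
      have : h' (η 1) = T.symm x := by simp [h', hη1]
      rw [this, hTx]
      exact cell_subset_bricks m0 i0⟩
    ⟨η τ, by
      rw [← (isClosed_bricks (meeting Xm)).closure_eq]
      refine map_mem_closure hη (s := Ioc τ 1) ?_ fun t ht => subset_bricks_meeting _ ⟨t, ht, rfl⟩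
      rw [closure_Ioc hτ1'.ne]
      exact ⟨le_rfl, hτ1⟩, hτ⟩
  refine ⟨T '' L, ⟨_, hL, ?_⟩, hBL.conj T hh'⟩
  rw [← hTx, Homeomorph.apply_symm_apply]

theorem exists_bLine {h : ℂ ≃ₜ ℂ} (hfree : ∀ z, h z ≠ z) (hor : IsotopicToId ⇑h) (x : ℂ) :
    ∃ L, x ∈ L ∧ BLine h L := by
  obtain ⟨G, hG⟩ := exists_normalize h hfree
  let hG' : ℂ ≃ₜ ℂ := (G.symm.trans h).trans G
  obtain ⟨L, hL, hBL⟩ := line_through (h := hG') (fun z => by simpa [hG'] using hG (G.symm z))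
    (IsotopicToId.conj hor G.symm) (G x)
  exact ⟨G.symm '' L, ⟨G x, hL, by simp⟩, hBL.conj G.symm fun w => by simp [hG']⟩

/-- The result for the complex plane transported to `Plane`, the explicit separation being turned into
a statement about connected components. -/
theorem exists_brouwerLine (h : Homeomorph Plane Plane)
    (hfree : ∀ x : Plane, h x ≠ x) (hor : IsotopicToId ⇑h) :
    ∀ x : Plane, ∃ L : Set Plane, x ∈ L ∧ IsBrouwerLine h L := by
  intro x
  let e : Plane ≃ₜ ℂ := Complex.orthonormalBasisOneI.repr.symm.toHomeomorph
  let h' : ℂ ≃ₜ ℂ := (e.symm.trans h).trans e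
  obtain ⟨L, hL, ⟨γ, g1, g2, g3, rfl⟩, U, V, u1, u2, u3, u4, u5, u6⟩ := exists_bLine (h := h')
    (fun z hz => hfree (e.symm z) (by
      rw [Homeomorph.eq_symm_apply]
      exact hz))
    (IsotopicToId.conj hor e.symm) (e x)
  have hmem : ∀ p, p ∈ e.symm '' range γ ↔ e p ∈ range γ := fun p => by
    constructor
    · rintro ⟨w, hw, rfl⟩
      rwa [Homeomorph.apply_symm_apply]
    · intro hp
      exact ⟨e p, hp, e.symm_apply_apply p⟩
  have hU : ∀ p ∈ ⇑h '' (e.symm '' range γ), e p ∈ U := by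
    rintro _ ⟨_, ⟨w, hw, rfl⟩, rfl⟩
    exact u5 w hw
  have hV : ∀ p ∈ ⇑h.symm '' (e.symm '' range γ), e p ∈ V := by
    rintro _ ⟨_, ⟨w, hw, rfl⟩, rfl⟩
    exact u6 w hw
  have hcompl : ∀ p, e p ∈ U ∪ V → p ∈ (e.symm '' range γ)ᶜ := fun p hp hp' => by
    rw [u4] at hp
    exact hp ((hmem p).1 hp')
  refine ⟨e.symm '' range γ, (hmem x).2 hL, ⟨e.symm ∘ γ, e.symm.continuous.comp g1,
    e.symm.injective.comp g2, e.symm.isClosedEmbedding.tendsto_cocompact.comp g3,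
    range_comp _ _⟩, ?_, ?_⟩
  · rw [eq_empty_iff_forall_notMem]
    rintro p ⟨hp, hp'⟩
    exact hcompl p (Or.inl (hU p hp')) hp
  · intro p hp q hq heq
    have hpc := hcompl p (Or.inl (hU p hp))
    have hqc := hcompl q (Or.inr (hV q hq))
    have hqm : q ∈ connectedComponentIn (e.symm '' range γ)ᶜ p := heq ▸ mem_connectedComponentIn hqc
    have hsub : connectedComponentIn (e.symm '' range γ)ᶜ p ⊆ e ⁻¹' U := by
      refine isPreconnected_connectedComponentIn.subset_left_of_subset_union
        (u1.preimage e.continuous) (u2.preimage e.continuous) (u3.preimage e) ?_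
        ⟨p, mem_connectedComponentIn hpc, hU p hp⟩
      intro z hz
      have hz' := connectedComponentIn_subset _ _ hz
      have : e z ∈ U ∪ V := by
        rw [u4]
        exact fun h2 => hz' ((hmem z).2 h2)
      exact this
    exact disjoint_left.1 u3 (hsub hqm) (hV q hq)

end BrouwerPlane

/-- Brouwer Plane Translation Theorem: every point of the plane lies on a Brouwer
line of a fixed point free orientation preserving homeomorphism. -/
theorem stmt15 (h : Homeomorph Plane Plane)
    (hfree : ∀ x : Plane, h x ≠ x) (hor : IsotopicToId ⇑h) :
    ∀ x : Plane, ∃ L : Set Plane, x ∈ L ∧ IsBrouwerLine h L := by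
  exact BrouwerPlane.exists_brouwerLine h hfree hor
end
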